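/- For each ε > 0 there exists an integer Δ_ε such that the following holds: if G is a planar simple graph with maximum degree Δ(G) ≥ Δ_ε, and L is a list assignment giving each vertex a list of at least (3/2 + ε)·Δ(G) integers, then there is a proper colouring of the square G² of G in which each vertex receives a colour from its own list, and moreover this colouring can be chosen so that the colours on any two vertices adjacent in G differ by at least Δ(G)^{1/4}. -/

import Mathlib

open SimpleGraph

/-- A drawing of a simple graph in the plane: vertices are mapped to distinct points,
edges to arcs (injective continuous curves parametrised on `[0,1]`) joining the images of
their endpoints, whose interiors avoid the vertex points and each other. -/
structure PlaneEmbedding {V : Type*} (G : SimpleGraph V) where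
  pos : V → ℝ × ℝ
  inj : Function.Injective pos
  arc : G.edgeSet → ℝ → ℝ × ℝ
  arc_cont : ∀ e, ContinuousOn (arc e) (Set.Icc 0 1)
  arc_inj : ∀ e, Set.InjOn (arc e) (Set.Icc 0 1)
  arc_ends : ∀ e : G.edgeSet, ∃ u v : V, (e : Sym2 V) = s(u, v) ∧
      arc e 0 = pos u ∧ arc e 1 = pos v
  arc_avoid : ∀ e : G.edgeSet, ∀ t ∈ Set.Ioo (0:ℝ) 1, arc e t ∉ Set.range pos
  arc_disjoint : ∀ e f : G.edgeSet, e ≠ f → ∀ s ∈ Set.Ioo (0:ℝ) 1, ∀ t ∈ Set.Ioo (0:ℝ) 1,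
      arc e s ≠ arc f t

/-- A graph is planar if it admits a drawing in the plane. -/
def SimpleGraph.IsPlanar {V : Type*} (G : SimpleGraph V) : Prop :=
  Nonempty (PlaneEmbedding G)

/-- The square of a graph: two distinct vertices are adjacent iff they are at distance
at most two in `G`. -/
def SimpleGraph.square {V : Type*} (G : SimpleGraph V) : SimpleGraph V :=
  SimpleGraph.fromRel (fun u v => G.Adj u v ∨ ∃ w, G.Adj u w ∧ G.Adj w v)

/-! ### The complete bipartite graph on three plus three vertices cannot be drawn -/

/-- The increment over `[0, 1]` of a continuous logarithm of a constant multiple of `h` does not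
depend on the multiple or on the logarithm. -/
lemma exists_log_increment (h : ℝ → ℂ) :
    ∃ θ : ℂ, ∀ (f : ℝ → ℂ) (c : ℂ), Continuous f → (∀ t, Complex.exp (f t) = c * h t) →
      f 1 - f 0 = θ := by
  by_cases hex : ∃ (f : ℝ → ℂ) (c : ℂ), Continuous f ∧ ∀ t, Complex.exp (f t) = c * h t
  · obtain ⟨f₀, c₀, hf₀, h₀⟩ := hex
    refine ⟨f₀ 1 - f₀ 0, fun f c hf hfc => ?_⟩
    have key : f = fun t => f₀ t + (f 0 - f₀ 0) := by
      refine Complex.isCoveringMap_exp.eq_of_comp_eq hf (by fun_prop) ?_ 0 (by simp)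
      funext t
      simp only [Function.comp_apply, Subtype.mk.injEq]
      have hh : h 0 ≠ 0 := fun hz => Complex.exp_ne_zero (f 0) (by rw [hfc, hz, mul_zero])
      have hc₀ : c₀ ≠ 0 := fun hz => Complex.exp_ne_zero (f₀ 0) (by rw [h₀, hz, zero_mul])
      rw [Complex.exp_add, Complex.exp_sub, hfc, hfc, h₀, h₀]
      field_simp
    have := congrFun key 1
    rw [this]; ring
  · exact ⟨0, fun f c hf hfc => (hex ⟨f, c, hf, hfc⟩).elim⟩

/-- A nowhere vanishing continuous function on the plane has a continuous logarithm. -/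
lemma exists_continuous_log (F : ℝ × ℝ → ℂ) (hF : Continuous F) (h0 : ∀ p, F p ≠ 0) :
    ∃ g : ℝ × ℝ → ℂ, Continuous g ∧ ∀ p, Complex.exp (g p) = F p := by
  let F' : C(ℝ × ℝ, {z : ℂ // z ≠ 0}) := ⟨fun p => ⟨F p, h0 p⟩, by fun_prop⟩
  obtain ⟨g, ⟨-, hg⟩, -⟩ := Complex.isCoveringMap_exp.existsUnique_continuousMap_lifts F' (0, 0)
    (Complex.log (F (0, 0))) (by
      apply Subtype.ext
      exact Complex.exp_log (h0 _))
  refine ⟨g, g.continuous, fun p => ?_⟩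
  have := congrFun hg p
  exact congrArg Subtype.val this

open Complex in
/-- Nine curves joining three points to three points in the plane cannot be such that curves
with no common endpoint are disjoint. -/
lemma not_drawable_three_three (P Q : Fin 3 → ℂ) (γ : Fin 3 → Fin 3 → ℝ → ℂ)
    (hc : ∀ i j, Continuous (γ i j)) (h0 : ∀ i j, γ i j 0 = P i) (h1 : ∀ i j, γ i j 1 = Q j)
    (hd : ∀ i j k l, i ≠ k → j ≠ l → ∀ s t, γ i j s ≠ γ k l t) : False := by
  choose α hα using fun k i j => exists_log_increment (fun t => γ i j t - P k)
  choose β hβ using fun l i j => exists_log_increment (fun t => γ i j t - Q l)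
  have hP : ∀ i k, i ≠ k → P i ≠ P k := fun i k hik => by
    have := hd i 0 k 1 hik (by decide) 0 0
    rwa [h0, h0] at this
  have hQ : ∀ j l, j ≠ l → Q j ≠ Q l := fun j l hjl => by
    have := hd 0 j 1 l (by decide) hjl 1 1
    rwa [h1, h1] at this
  have hPQ : ∀ i j, P i ≠ Q j := fun i j => by
    obtain ⟨k, hk⟩ : ∃ k : Fin 3, i ≠ k := ⟨i + 1, by fin_cases i <;> decide⟩
    obtain ⟨l, hl⟩ : ∃ l : Fin 3, l ≠ j := ⟨j + 1, by fin_cases j <;> decide⟩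
    have := hd i l k j hk hl 0 1
    rwa [h0, h1] at this
  have square : ∀ i j k l, i ≠ k → j ≠ l →
      α k i j + β j k l = α i k l + β l i j ∧
      exp (α k i j) * (P i - P k) = Q j - P k ∧
      exp (β l i j) * (P i - Q l) = Q j - Q l := by
    intro i j k l hik hjl
    obtain ⟨g, hg, hgF⟩ := exists_continuous_log (fun p => γ i j p.1 - γ k l p.2)
      (by have := hc i j; have := hc k l; fun_prop)
      (fun p => sub_ne_zero.2 (hd i j k l hik hjl _ _))
    have e1 := hα k i j (fun s => g (s, 0)) 1 (by fun_prop) (fun t => by simp [hgF, h0])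
    have e2 := hβ l i j (fun s => g (s, 1)) 1 (by fun_prop) (fun t => by simp [hgF, h1])
    have e3 := hα i k l (fun s => g (0, s)) (-1) (by fun_prop) (fun t => by simp [hgF, h0])
    have e4 := hβ j k l (fun s => g (1, s)) (-1) (by fun_prop) (fun t => by simp [hgF, h1])
    refine ⟨?_, ?_, ?_⟩
    · rw [← e1, ← e2, ← e3, ← e4]; ring
    · rw [← e1, exp_sub, hgF, hgF]
      simp only [h0, h1]
      exact div_mul_cancel₀ _ (sub_ne_zero.2 (hP i k hik))
    · rw [← e2, exp_sub, hgF, hgF]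
      simp only [h0, h1]
      exact div_mul_cancel₀ _ (sub_ne_zero.2 (hPQ i l))
  let lg : (Fin 3 → ℂ) → Fin 3 → Fin 3 → ℂ := fun R i k =>
    if i < k then log (R k - R i) else log (R i - R k) + Real.pi * I
  have hlg : ∀ R : Fin 3 → ℂ, (∀ i k, i ≠ k → R i ≠ R k) → ∀ i k, i ≠ k →
      exp (lg R i k) = R k - R i := by
    intro R hR i k hik
    simp only [lg]
    split_ifs
    · exact exp_log (sub_ne_zero.2 (hR _ _ hik.symm))
    · rw [exp_add, exp_log (sub_ne_zero.2 (hR _ _ hik)), exp_pi_mul_I]; ring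
  have hswap : ∀ R i k, i < k → lg R k i = lg R i k + Real.pi * I := by
    intro R i k hik
    simp only [lg, if_pos hik, if_neg hik.not_gt]
  let m : Fin 3 → Fin 3 → ℂ := fun i j => log (Q j - P i)
  have hm : ∀ i j, exp (m i j) = Q j - P i := fun i j =>
    exp_log (sub_ne_zero.2 (hPQ i j).symm)
  have hnα : ∀ k i j, ∃ n : ℤ, i ≠ k → α k i j = m k j - lg P k i + n * (2 * Real.pi * I) := by
    intro k i j
    by_cases hik : i ≠ k
    · obtain ⟨l, hl⟩ : ∃ l : Fin 3, j ≠ l := ⟨j + 1, by fin_cases j <;> decide⟩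
      have h := (square i j k l hik hl).2.1
      have : exp (α k i j - (m k j - lg P k i)) = 1 := by
        rw [exp_sub, exp_sub, hm, hlg P hP k i hik.symm, ← h]
        have := sub_ne_zero.2 (hP i k hik)
        field_simp [exp_ne_zero]
      obtain ⟨n, hn⟩ := exp_eq_one_iff.1 this
      exact ⟨n, fun _ => by rw [← hn]; ring⟩
    · exact ⟨0, fun h => (hik h).elim⟩
  have hnβ : ∀ l i j, ∃ n : ℤ, j ≠ l →
      β l i j = lg Q l j - m i l - Real.pi * I + n * (2 * Real.pi * I) := by
    intro l i j
    by_cases hjl : j ≠ l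
    · obtain ⟨k, hk⟩ : ∃ k : Fin 3, i ≠ k := ⟨i + 1, by fin_cases i <;> decide⟩
      have h := (square i j k l hk hjl).2.2
      have : exp (β l i j - (lg Q l j - m i l - Real.pi * I)) = 1 := by
        rw [exp_sub, exp_sub, exp_sub, hm, hlg Q hQ l j hjl.symm, ← h, exp_pi_mul_I]
        have h3 := sub_ne_zero.2 (hPQ i l)
        have h4 := sub_ne_zero.2 (hPQ i l).symm
        have h5 := exp_ne_zero (β l i j)
        field_simp
        ring
      obtain ⟨n, hn⟩ := exp_eq_one_iff.1 this
      exact ⟨n, fun _ => by rw [← hn]; ring⟩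
    · exact ⟨0, fun h => (hjl h).elim⟩
  choose a ha using hnα
  choose b hb using hnβ
  have hpi : (2 * Real.pi * I : ℂ) ≠ 0 := two_pi_I_ne_zero
  have eqlt : ∀ i j k l, i < k → j < l → a k i j + b j k l - a i k l - b l i j = 1 := by
    intro i j k l hik hjl
    have h := (square i j k l hik.ne hjl.ne).1
    rw [ha k i j hik.ne, hb j k l hjl.ne', ha i k l hik.ne', hb l i j hjl.ne,
      hswap P i k hik, hswap Q j l hjl] at h
    have h' : ((a k i j + b j k l - a i k l - b l i j - 1 : ℤ) : ℂ) * (2 * Real.pi * I) = 0 := by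
      push_cast
      linear_combination h
    have := (mul_eq_zero.1 h').resolve_right hpi
    have := Int.cast_eq_zero.1 this
    omega
  have eqgt : ∀ i j k l, i < k → l < j → a k i j + b j k l - a i k l - b l i j = 0 := by
    intro i j k l hik hjl
    have h := (square i j k l hik.ne hjl.ne').1
    rw [ha k i j hik.ne, hb j k l hjl.ne, ha i k l hik.ne', hb l i j hjl.ne',
      hswap P i k hik, hswap Q l j hjl] at h
    have h' : ((a k i j + b j k l - a i k l - b l i j : ℤ) : ℂ) * (2 * Real.pi * I) = 0 := by
      push_cast
      linear_combination h
    exact Int.cast_eq_zero.1 ((mul_eq_zero.1 h').resolve_right hpi)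
  have l01 : (0 : Fin 3) < 1 := by decide
  have l02 : (0 : Fin 3) < 2 := by decide
  have l12 : (1 : Fin 3) < 2 := by decide
  have s : ∀ i k, i < k →
      (a k i 0 + b 0 k 1 - a i k 1 - b 1 i 0 = 1 ∧ a k i 0 + b 0 k 2 - a i k 2 - b 2 i 0 = 1 ∧
      a k i 1 + b 1 k 2 - a i k 2 - b 2 i 1 = 1 ∧ a k i 1 + b 1 k 0 - a i k 0 - b 0 i 1 = 0 ∧
      a k i 2 + b 2 k 0 - a i k 0 - b 0 i 2 = 0 ∧ a k i 2 + b 2 k 1 - a i k 1 - b 1 i 2 = 0) :=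
    fun i k hik => ⟨eqlt _ _ _ _ hik l01, eqlt _ _ _ _ hik l02, eqlt _ _ _ _ hik l12,
      eqgt _ _ _ _ hik l01, eqgt _ _ _ _ hik l02, eqgt _ _ _ _ hik l12⟩
  have s01 := s 0 1 l01
  have s02 := s 0 2 l02
  have s12 := s 1 2 l12
  clear s eqlt eqgt
  omega

/-! ### Connected vertex sets and minors -/

/-- The subgraph induced on `S` is preconnected. -/
def PreConn {V : Type*} (G : SimpleGraph V) (S : Set V) : Prop :=
  ∀ u ∈ S, ∀ v ∈ S, Relation.ReflTransGen (fun a b => a ∈ S ∧ b ∈ S ∧ G.Adj a b) u v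

/-- There is an edge between `S` and `T`. -/
def Touch {V : Type*} (G : SimpleGraph V) (S T : Set V) : Prop :=
  ∃ u ∈ S, ∃ v ∈ T, G.Adj u v

lemma Touch.symm {V : Type*} {G : SimpleGraph V} {S T : Set V} (h : Touch G S T) :
    Touch G T S := by
  obtain ⟨u, hu, v, hv, h⟩ := h
  exact ⟨v, hv, u, hu, h.symm⟩

lemma Touch.mono {V : Type*} {G : SimpleGraph V} {S T S' T' : Set V} (h : Touch G S T)
    (hS : S ⊆ S') (hT : T ⊆ T') : Touch G S' T' := by
  obtain ⟨u, hu, v, hv, h⟩ := h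
  exact ⟨u, hS hu, v, hT hv, h⟩

lemma PreConn.walk_mono {V : Type*} {G : SimpleGraph V} {S T : Set V} (hST : S ⊆ T) {u v : V}
    (h : Relation.ReflTransGen (fun a b => a ∈ S ∧ b ∈ S ∧ G.Adj a b) u v) :
    Relation.ReflTransGen (fun a b => a ∈ T ∧ b ∈ T ∧ G.Adj a b) u v :=
  Relation.ReflTransGen.mono
    (show (fun a b => a ∈ S ∧ b ∈ S ∧ G.Adj a b) ≤ fun a b => a ∈ T ∧ b ∈ T ∧ G.Adj a b from
      fun _ _ h => ⟨hST h.1, hST h.2.1, h.2.2⟩) u v h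

lemma PreConn.singleton {V : Type*} (G : SimpleGraph V) (v : V) : PreConn G {v} := by
  rintro u rfl w rfl
  exact Relation.ReflTransGen.refl

lemma PreConn.empty {V : Type*} (G : SimpleGraph V) : PreConn G ∅ := fun _ h => h.elim

/-- A set all of whose points can be joined to one of them is preconnected. -/
lemma PreConn.of_root {V : Type*} {G : SimpleGraph V} {S : Set V} (r : V)
    (h : ∀ v ∈ S, Relation.ReflTransGen (fun a b => a ∈ S ∧ b ∈ S ∧ G.Adj a b) r v) :
    PreConn G S := by
  intro u hu v hv
  refine Relation.ReflTransGen.trans ?_ (h v hv)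
  have : Std.Symm (fun a b => a ∈ S ∧ b ∈ S ∧ G.Adj a b) :=
    ⟨fun a b h => ⟨h.2.1, h.1, h.2.2.symm⟩⟩
  exact Relation.ReflTransGen.stdSymm.symm _ _ (h u hu)

lemma PreConn.union {V : Type*} {G : SimpleGraph V} {S T : Set V} (hS : PreConn G S)
    (hT : PreConn G T) (h : Touch G S T) : PreConn G (S ∪ T) := by
  obtain ⟨u, hu, v, hv, huv⟩ := h
  refine PreConn.of_root u fun w hw => ?_
  rcases hw with hw | hw
  · exact PreConn.walk_mono Set.subset_union_left (hS u hu w hw)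
  · exact Relation.ReflTransGen.head ⟨Or.inl hu, Or.inr hv, huv⟩
      (PreConn.walk_mono Set.subset_union_right (hT v hv w hw))

lemma PreConn.union_of_mem {V : Type*} {G : SimpleGraph V} {S T : Set V} (hS : PreConn G S)
    (hT : PreConn G T) {u : V} (huS : u ∈ S) (huT : u ∈ T) : PreConn G (S ∪ T) := by
  refine PreConn.of_root u fun w hw => ?_
  rcases hw with hw | hw
  · exact PreConn.walk_mono Set.subset_union_left (hS u huS w hw)
  · exact PreConn.walk_mono Set.subset_union_right (hT u huT w hw)

/-! ### Plane graphs have no `K₃,₃` minor -/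

namespace PlaneEmbedding

variable {V : Type*} {G : SimpleGraph V}

/-- The part of the drawing spanned by a set of vertices. -/
def drawn (E : PlaneEmbedding G) (T : Set V) : Set (ℝ × ℝ) :=
  Set.image E.pos T ∪ {p | ∃ e : G.edgeSet, (∀ v ∈ (e : Sym2 V), v ∈ T) ∧
    ∃ t ∈ Set.Ioo (0 : ℝ) 1, E.arc e t = p}

lemma drawn_disjoint (E : PlaneEmbedding G) {S T : Set V} (h : Disjoint S T) :
    Disjoint (E.drawn S) (E.drawn T) := by
  rw [Set.disjoint_left] at h ⊢
  rintro p (⟨u, hu, rfl⟩ | ⟨e, he, s, hs, rfl⟩) (⟨v, hv, hvu⟩ | ⟨f, hf, t, ht, hft⟩)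
  · exact h hu (E.inj hvu ▸ hv)
  · exact E.arc_avoid f t ht ⟨u, hft.symm⟩
  · exact E.arc_avoid e s hs ⟨v, hvu⟩
  · refine E.arc_disjoint e f ?_ s hs t ht hft.symm
    rintro rfl
    obtain ⟨u, v, huv, -⟩ := E.arc_ends e
    have hu : u ∈ (e : Sym2 V) := by rw [huv]; exact Sym2.mem_mk_left _ _
    exact h (he u hu) (hf u hu)

lemma joinedIn_of_adj (E : PlaneEmbedding G) {T : Set V} {u v : V} (hu : u ∈ T) (hv : v ∈ T)
    (h : G.Adj u v) : JoinedIn (E.drawn T) (E.pos u) (E.pos v) := by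
  obtain ⟨a, b, hab, ha, hb⟩ := E.arc_ends ⟨s(u, v), h⟩
  have key : JoinedIn (E.drawn T) (E.pos a) (E.pos b) := by
    have habT : ∀ w ∈ (s(u, v) : Sym2 V), w ∈ T := by
      intro w hw
      rcases Sym2.mem_iff.1 hw with rfl | rfl <;> assumption
    simp only at hab
    refine JoinedIn.ofLine (E.arc_cont _) ha hb ?_
    rintro p ⟨t, ht, rfl⟩
    rcases eq_or_lt_of_le ht.1 with h0 | h0
    · rw [← h0, ha]
      exact Or.inl ⟨a, habT a (by rw [hab]; exact Sym2.mem_mk_left _ _), rfl⟩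
    rcases eq_or_lt_of_le ht.2 with h1 | h1
    · rw [h1, hb]
      exact Or.inl ⟨b, habT b (by rw [hab]; exact Sym2.mem_mk_right _ _), rfl⟩
    · exact Or.inr ⟨_, habT, t, ⟨h0, h1⟩, rfl⟩
  simp only at hab
  rcases Sym2.eq_iff.1 hab with ⟨rfl, rfl⟩ | ⟨rfl, rfl⟩
  · exact key
  · exact key.symm

lemma joinedIn_of_preConn (E : PlaneEmbedding G) {T : Set V} (hT : PreConn G T) {u v : V}
    (hu : u ∈ T) (hv : v ∈ T) : JoinedIn (E.drawn T) (E.pos u) (E.pos v) := by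
  have h := hT u hu v hv
  induction h with
  | refl => exact JoinedIn.refl (Or.inl ⟨u, hu, rfl⟩)
  | tail _ hbc ih => exact (ih hbc.1).trans (E.joinedIn_of_adj hbc.1 hbc.2.1 hbc.2.2)

end PlaneEmbedding

/-- A planar graph has no `K₃,₃` minor. -/
lemma SimpleGraph.IsPlanar.not_minor_three_three {V : Type*} {G : SimpleGraph V}
    (hG : G.IsPlanar) (A B : Fin 3 → Set V) (hA : ∀ i, PreConn G (A i))
    (hB : ∀ i, PreConn G (B i)) (hAd : Pairwise fun i j => Disjoint (A i) (A j))
    (hBd : Pairwise fun i j => Disjoint (B i) (B j)) (hABd : ∀ i j, Disjoint (A i) (B j))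
    (hAB : ∀ i j, Touch G (A i) (B j)) : False := by
  obtain ⟨E⟩ := hG
  choose a ha using fun i => (hAB i 0).imp fun _ h => h.1
  choose b hb using fun j => (hAB 0 j).symm.imp fun _ h => h.1
  have hJ : ∀ i j, JoinedIn (E.drawn (A i ∪ B j)) (E.pos (a i)) (E.pos (b j)) := fun i j =>
    E.joinedIn_of_preConn ((hA i).union (hB j) (hAB i j)) (Or.inl (ha i)) (Or.inr (hb j))
  let p := fun i j => (hJ i j).somePath
  have hp : ∀ i j s, (p i j).extend s ∈ E.drawn (A i ∪ B j) := by
    intro i j s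
    have : (p i j).extend s ∈ Set.range (p i j).extend := ⟨s, rfl⟩
    rw [Path.extend_range] at this
    obtain ⟨t, ht⟩ := this
    rw [← ht]
    exact (hJ i j).somePath_mem t
  let φ := Complex.equivRealProdCLM.symm
  refine not_drawable_three_three (fun i => φ (E.pos (a i))) (fun j => φ (E.pos (b j)))
    (fun i j s => φ ((p i j).extend s)) (fun i j => φ.continuous.comp (p i j).continuous_extend)
    (fun i j => by simp) (fun i j => by simp) ?_
  intro i j k l hik hjl s t heq
  have heq' := φ.injective heq
  have hdis : Disjoint (A i ∪ B j) (A k ∪ B l) := by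
    rw [Set.disjoint_union_left, Set.disjoint_union_right, Set.disjoint_union_right]
    exact ⟨⟨hAd hik, hABd i l⟩, (hABd k j).symm, hBd hjl⟩
  exact Set.disjoint_left.1 (E.drawn_disjoint hdis) (hp i j s) (heq' ▸ hp k l t)

/-! ### Minors and clique minors -/

section Minors

variable {V V' : Type*}

/-- `J` is a minor of `G`: the vertices of `J` are represented by disjoint connected sets of
vertices of `G`, with an edge between the representatives of adjacent vertices. -/
def IsMinor (J : SimpleGraph V') (G : SimpleGraph V) : Prop :=
  ∃ φ : V' → Set V, (∀ a, PreConn G (φ a)) ∧ (Pairwise fun a b => Disjoint (φ a) (φ b)) ∧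
    ∀ a b, J.Adj a b → Touch G (φ a) (φ b)

/-- `U` contains a model of the complete graph on `t` vertices. -/
def CliqueModel (G : SimpleGraph V) (t : ℕ) (U : Set V) : Prop :=
  ∃ f : Fin t → Set V, (∀ i, f i ⊆ U) ∧ (∀ i, (f i).Nonempty) ∧ (∀ i, PreConn G (f i)) ∧
    (Pairwise fun i j => Disjoint (f i) (f j)) ∧ Pairwise fun i j => Touch G (f i) (f j)

lemma preConn_biUnion {J : SimpleGraph V'} {G : SimpleGraph V} {φ : V' → Set V}
    (hφ : ∀ a, PreConn G (φ a)) (hJ : ∀ a b, J.Adj a b → Touch G (φ a) (φ b)) {S : Set V'}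
    (hS : PreConn J S) : PreConn G (⋃ a ∈ S, φ a) := by
  have hsub : ∀ a ∈ S, φ a ⊆ ⋃ a ∈ S, φ a := fun a ha => Set.subset_biUnion_of_mem ha
  intro p hp q hq
  obtain ⟨a, ha, hpa⟩ := Set.mem_iUnion₂.1 hp
  obtain ⟨b, hb, hqb⟩ := Set.mem_iUnion₂.1 hq
  have h := hS a ha b hb
  clear hq
  induction h generalizing q with
  | refl => exact PreConn.walk_mono (hsub a ha) (hφ a p hpa q hqb)
  | @tail c d _ hcd ih =>
    obtain ⟨x, hx, y, hy, hxy⟩ := hJ c d hcd.2.2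
    refine ((ih x hcd.1 hx).tail ⟨hsub c hcd.1 hx, hsub d hb hy, hxy⟩).trans ?_
    exact PreConn.walk_mono (hsub d hb) (hφ d y hy q hqb)

lemma CliqueModel.of_minor {J : SimpleGraph V'} {G : SimpleGraph V} {φ : V' → Set V}
    (hφ : ∀ a, PreConn G (φ a)) (hd : Pairwise fun a b => Disjoint (φ a) (φ b))
    (hJ : ∀ a b, J.Adj a b → Touch G (φ a) (φ b)) {t : ℕ} {U : Set V'} {W : Set V}
    (hUW : ∀ a ∈ U, φ a ⊆ W) (hne : (∀ a ∈ U, (φ a).Nonempty) ∨ 2 ≤ t)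
    (h : CliqueModel J t U) : CliqueModel G t W := by
  obtain ⟨f, hfU, hfn, hfc, hfd, hft⟩ := h
  refine ⟨fun i => ⋃ a ∈ f i, φ a, fun i => ?_, fun i => ?_,
    fun i => preConn_biUnion hφ hJ (hfc i), ?_, ?_⟩
  · exact Set.iUnion₂_subset fun a ha => hUW a (hfU i ha)
  · rcases hne with hne | ht
    · obtain ⟨a, ha⟩ := hfn i
      exact (hne a (hfU i ha)).mono (Set.subset_biUnion_of_mem ha)
    · have : Nontrivial (Fin t) := Fin.nontrivial_iff_two_le.2 ht
      obtain ⟨j, hj⟩ := exists_ne i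
      obtain ⟨a, ha, b, hb, hab⟩ := hft hj.symm
      obtain ⟨x, hx, -⟩ := hJ a b hab
      exact ⟨x, Set.subset_biUnion_of_mem ha hx⟩
  · intro i j hij
    simp only [Set.disjoint_iUnion_left, Set.disjoint_iUnion_right]
    intro b hb a ha
    exact hd fun hab => Set.disjoint_left.1 (hfd hij) ha (hab ▸ hb)
  · intro i j hij
    obtain ⟨a, ha, b, hb, hab⟩ := hft hij
    exact (hJ a b hab).mono (Set.subset_biUnion_of_mem ha) (Set.subset_biUnion_of_mem hb)

/-- No model of the complete graph on six vertices. -/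
def NoCliqueSix (G : SimpleGraph V) : Prop := ¬ CliqueModel G 6 Set.univ

lemma NoCliqueSix.of_minor {J : SimpleGraph V'} {G : SimpleGraph V} (hG : NoCliqueSix G)
    (h : IsMinor J G) : NoCliqueSix J := by
  obtain ⟨φ, h1, h2, h3⟩ := h
  exact fun hJ => hG (hJ.of_minor h1 h2 h3 (fun _ _ => Set.subset_univ _)
    (Or.inr (by norm_num)))

lemma SimpleGraph.IsPlanar.noCliqueSix {G : SimpleGraph V} (hG : G.IsPlanar) :
    NoCliqueSix G := by
  rintro ⟨f, -, -, hc, hd, ht⟩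
  have hne : ∀ i j : Fin 3, Fin.castAdd 3 i ≠ Fin.natAdd 3 j := by decide
  refine hG.not_minor_three_three (fun i => f (Fin.castAdd 3 i)) (fun i => f (Fin.natAdd 3 i))
    (fun i => hc _) (fun i => hc _) (fun i j hij => hd ?_) (fun i j hij => hd ?_)
    (fun i j => hd (hne i j)) (fun i j => ht (hne i j))
  · exact fun h => hij (Fin.castAdd_injective _ _ h)
  · exact fun h => hij (Fin.natAdd_injective _ _ h)

/-! ### Degrees into finite sets -/

open scoped Classical in
/-- The neighbours of `x` in `U`. -/
noncomputable def nb (G : SimpleGraph V) (U : Finset V) (x : V) : Finset V :=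
  U.filter (G.Adj x)

/-- The number of neighbours of `x` in `U`. -/
noncomputable def dg (G : SimpleGraph V) (U : Finset V) (x : V) : ℕ := (nb G U x).card

lemma mem_nb {G : SimpleGraph V} {U : Finset V} {x y : V} : y ∈ nb G U x ↔ y ∈ U ∧ G.Adj x y := by
  simp [nb]

lemma nb_subset (G : SimpleGraph V) (U : Finset V) (x : V) : nb G U x ⊆ U :=
  fun _ h => (mem_nb.1 h).1

lemma nb_mono (G : SimpleGraph V) {U W : Finset V} (h : U ⊆ W) (x : V) : nb G U x ⊆ nb G W x :=
  fun _ hy => mem_nb.2 ⟨h (mem_nb.1 hy).1, (mem_nb.1 hy).2⟩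

lemma dg_mono (G : SimpleGraph V) {U W : Finset V} (h : U ⊆ W) (x : V) : dg G U x ≤ dg G W x :=
  Finset.card_le_card (nb_mono G h x)

open scoped Classical in
lemma dg_eq_sum (G : SimpleGraph V) (U : Finset V) (x : V) :
    dg G U x = ∑ y ∈ U, if G.Adj x y then 1 else 0 := by
  rw [dg, nb, Finset.card_filter]

/-- Double counting of the edges between two sets. -/
lemma sum_dg_comm (G : SimpleGraph V) (U W : Finset V) :
    ∑ x ∈ U, dg G W x = ∑ y ∈ W, dg G U y := by
  classical
  simp only [dg_eq_sum]
  rw [Finset.sum_comm]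
  simp only [G.adj_comm]

open scoped Classical in
lemma sum_dg_eq_card (G : SimpleGraph V) (U W : Finset V) :
    ∑ x ∈ U, dg G W x = ((U ×ˢ W).filter fun p => G.Adj p.1 p.2).card := by
  rw [Finset.card_filter, Finset.sum_product]
  simp only [dg_eq_sum]

/-! ### Dense graphs contain clique minors -/

/-- The graph obtained by contracting the edge `uv` to the vertex `u`. -/
def contractEdge (G : SimpleGraph V) (u v : V) : SimpleGraph V :=
  SimpleGraph.fromRel fun a b => (G.Adj a b ∧ a ≠ v ∧ b ≠ v) ∨ (a = u ∧ b ≠ v ∧ G.Adj v b)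

lemma contractEdge_adj {G : SimpleGraph V} {u v a b : V} :
    (contractEdge G u v).Adj a b ↔ a ≠ b ∧ ((G.Adj a b ∧ a ≠ v ∧ b ≠ v) ∨
      (a = u ∧ b ≠ v ∧ G.Adj v b) ∨ (b = u ∧ a ≠ v ∧ G.Adj v a)) := by
  simp only [contractEdge, SimpleGraph.fromRel_adj, G.adj_comm b a]
  tauto

lemma CliqueModel.of_contractEdge {G : SimpleGraph V} {u v : V} (huv : G.Adj u v) {t : ℕ}
    {U : Finset V} (hu : u ∈ U) (hv : v ∈ U) [DecidableEq V]
    (h : CliqueModel (contractEdge G u v) t (U.erase v)) : CliqueModel G t U := by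
  refine CliqueModel.of_minor (φ := fun a => if a = v then ∅ else if a = u then {u, v} else {a})
    (fun a => ?_) (fun a b hab => ?_) (fun a b hab => ?_) (fun a ha => ?_)
    (Or.inl fun a ha => ?_) h
  · split_ifs
    · exact PreConn.empty G
    · exact (PreConn.singleton G u).union (PreConn.singleton G v) ⟨u, rfl, v, rfl, huv⟩
    · exact PreConn.singleton G a
  · dsimp only
    rw [Set.disjoint_left]
    have := huv.ne
    split_ifs <;> simp_all <;> grind
  · rw [contractEdge_adj] at hab
    obtain ⟨hne, ⟨h1, h2, h3⟩ | ⟨rfl, h2, h3⟩ | ⟨rfl, h2, h3⟩⟩ := hab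
    · refine ⟨a, ?_, b, ?_, h1⟩ <;> split_ifs <;> simp_all
    · refine ⟨v, ?_, b, ?_, h3⟩
      · rw [if_neg huv.ne, if_pos rfl]; simp
      · rw [if_neg h2, if_neg hne.symm]; simp
    · refine ⟨a, ?_, v, ?_, h3.symm⟩
      · rw [if_neg h2, if_neg hne]; simp
      · rw [if_neg huv.ne, if_pos rfl]; simp
  · have ha' := Finset.mem_coe.1 ha
    rw [Finset.mem_erase] at ha'
    rw [if_neg ha'.1]
    split_ifs
    · rintro x (rfl | rfl)
      · exact hu
      · exact hv
    · rintro x rfl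
      exact ha'.2
  · rw [if_neg (Finset.mem_erase.1 (Finset.mem_coe.1 ha)).1]
    split_ifs
    · exact ⟨u, Or.inl rfl⟩
    · exact ⟨a, rfl⟩

lemma sum_dg_contractEdge {G : SimpleGraph V} {u v : V} (huv : G.Adj u v) [DecidableEq V]
    {U : Finset V} (hu : u ∈ U) (hv : v ∈ U) :
    ∑ a ∈ U, dg G U a ≤ ∑ a ∈ U.erase v, dg (contractEdge G u v) (U.erase v) a +
      2 * (nb G U u ∩ nb G U v).card + 2 := by
  classical
  set J := contractEdge G u v
  have huv' := huv.ne
  have hue : u ∈ U.erase v := Finset.mem_erase.2 ⟨huv', hu⟩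
  have h1 : ∀ a ∈ (U.erase v).erase u, dg G U a ≤ dg J (U.erase v) a +
      if a ∈ nb G U u ∩ nb G U v then 1 else 0 := by
    intro a ha
    simp only [Finset.mem_erase] at ha
    obtain ⟨hau, hav, haU⟩ := ha
    have hsub : (nb G U a).erase v ⊆ nb J (U.erase v) a := by
      intro x hx
      rw [Finset.mem_erase, mem_nb] at hx
      rw [mem_nb, Finset.mem_erase, contractEdge_adj]
      exact ⟨⟨hx.1, hx.2.1⟩, hx.2.2.ne, Or.inl ⟨hx.2.2, hav, hx.1⟩⟩
    by_cases hv' : G.Adj a v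
    · have hvm : v ∈ nb G U a := mem_nb.2 ⟨hv, hv'⟩
      have hc := Finset.card_erase_add_one hvm
      by_cases hu' : G.Adj a u
      · rw [if_pos (by simp [mem_nb, haU, hu'.symm, hv'.symm])]
        have := Finset.card_le_card hsub
        unfold dg
        omega
      · have hui : u ∉ (nb G U a).erase v := fun h => hu' (mem_nb.1 (Finset.mem_of_mem_erase h)).2
        have hsub' : insert u ((nb G U a).erase v) ⊆ nb J (U.erase v) a := by
          refine Finset.insert_subset ?_ hsub
          rw [mem_nb, contractEdge_adj]
          exact ⟨hue, hau, Or.inr (Or.inr ⟨rfl, hav, hv'.symm⟩)⟩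
        have := Finset.card_le_card hsub'
        rw [Finset.card_insert_of_notMem hui] at this
        unfold dg
        omega
    · have hvm : v ∉ nb G U a := fun h => hv' (mem_nb.1 h).2
      rw [Finset.erase_eq_of_notMem hvm] at hsub
      have := Finset.card_le_card hsub
      unfold dg
      omega
  have h2 : dg G U u + dg G U v ≤ dg J (U.erase v) u + (nb G U u ∩ nb G U v).card + 2 := by
    have hsub : ((nb G U u ∪ nb G U v).erase u).erase v ⊆ nb J (U.erase v) u := by
      intro x hx
      simp only [Finset.mem_erase, Finset.mem_union, mem_nb] at hx
      rw [mem_nb, Finset.mem_erase, contractEdge_adj]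
      refine ⟨⟨hx.1, ?_⟩, Ne.symm hx.2.1, ?_⟩
      · tauto
      · rcases hx.2.2 with h | h
        · exact Or.inl ⟨h.2, huv', hx.1⟩
        · exact Or.inr (Or.inl ⟨rfl, hx.1, h.2⟩)
    have c1 := Finset.card_le_card hsub
    have c2 := Finset.card_union_add_card_inter (nb G U u) (nb G U v)
    have c3 := Finset.pred_card_le_card_erase (s := nb G U u ∪ nb G U v) (a := u)
    have c4 := Finset.pred_card_le_card_erase (s := (nb G U u ∪ nb G U v).erase u) (a := v)
    unfold dg
    omega
  have h3 : ∑ a ∈ (U.erase v).erase u, (if a ∈ nb G U u ∩ nb G U v then 1 else 0) ≤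
      (nb G U u ∩ nb G U v).card := by
    rw [← Finset.card_filter]
    exact Finset.card_le_card fun x hx => (Finset.mem_filter.1 hx).2
  have h4 := Finset.sum_le_sum h1
  rw [Finset.sum_add_distrib] at h4
  rw [← Finset.add_sum_erase U _ hv, ← Finset.add_sum_erase (U.erase v) _ hue,
    ← Finset.add_sum_erase (U.erase v) (fun a => dg J (U.erase v) a) hue]
  omega

/-- A graph of large average degree has a large clique minor. -/
lemma CliqueModel.of_sum_dg (k : ℕ) : ∀ (G : SimpleGraph V) (U : Finset V), U.Nonempty →
    2 ^ k * U.card ≤ ∑ u ∈ U, dg G U u → CliqueModel G k U := by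
  classical
  induction k with
  | zero =>
    intro G U _ _
    exact ⟨fun _ => ∅, fun i => i.elim0, fun i => i.elim0, fun i => i.elim0,
      fun i => i.elim0, fun i => i.elim0⟩
  | succ k ih =>
    intro G U
    induction hn : U.card using Nat.strong_induction_on generalizing G U with
    | _ n ihn =>
    subst hn
    intro hU hsum
    by_cases hex : ∃ u ∈ U, ∃ v ∈ U, G.Adj u v ∧ (nb G U u ∩ nb G U v).card < 2 ^ k
    · obtain ⟨u, hu, v, hv, huv, hlt⟩ := hex
      refine CliqueModel.of_contractEdge huv hu hv ?_
      have hcard := Finset.card_erase_add_one hv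
      refine ihn _ (by omega) (contractEdge G u v) _ rfl
        ⟨u, Finset.mem_erase.2 ⟨huv.ne, hu⟩⟩ ?_
      have := sum_dg_contractEdge huv hu hv
      rw [← hcard] at hsum
      rw [pow_succ] at hsum ⊢
      nlinarith
    · push Not at hex
      have hpos : 0 < ∑ u ∈ U, dg G U u := by
        have := Finset.card_pos.2 hU
        exact lt_of_lt_of_le (by positivity) hsum
      obtain ⟨v, hv, hv0⟩ := Finset.exists_ne_zero_of_sum_ne_zero hpos.ne'
      have hN : (nb G U v).Nonempty := Finset.card_ne_zero.1 hv0
      obtain ⟨f, hfU, hfn, hfc, hfd, hft⟩ := ih G (nb G U v) hN (by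
        rw [mul_comm, ← smul_eq_mul]
        refine Finset.card_nsmul_le_sum _ _ _ fun w hw => ?_
        rw [mem_nb] at hw
        refine (hex v hv w hw.1 hw.2).trans (Finset.card_le_card fun x hx => ?_)
        rw [Finset.mem_inter, mem_nb, mem_nb] at hx
        exact mem_nb.2 ⟨mem_nb.2 hx.1, hx.2.2⟩)
      have hvN : v ∉ nb G U v := fun h => (mem_nb.1 h).2.ne rfl
      have hvf : ∀ i, Touch G {v} (f i) := fun i => by
        obtain ⟨x, hx⟩ := hfn i
        exact ⟨v, rfl, x, hx, (mem_nb.1 (hfU i hx)).2⟩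
      have hvd : ∀ i, Disjoint {v} (f i) := fun i =>
        Set.disjoint_singleton_left.2 fun h => hvN (hfU i h)
      refine ⟨Fin.cons {v} f, ?_, ?_, ?_, ?_, ?_⟩
      · refine Fin.cases ?_ fun i => ?_
        · simpa using hv
        · exact (hfU i).trans (Finset.coe_subset.2 (nb_subset G U v))
      · exact Fin.cases ⟨v, rfl⟩ hfn
      · exact Fin.cases (PreConn.singleton G v) hfc
      · refine Fin.cases (Fin.cases (fun h => (h rfl).elim) fun j _ => hvd j) fun i =>
          Fin.cases (fun _ => (hvd i).symm) fun j hij => hfd fun h => hij (congrArg Fin.succ h)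
      · refine Fin.cases (Fin.cases (fun h => (h rfl).elim) fun j _ => hvf j) fun i =>
          Fin.cases (fun _ => (hvf i).symm) fun j hij => hft fun h => hij (congrArg Fin.succ h)

lemma NoCliqueSix.sum_dg_le {G : SimpleGraph V} (hG : NoCliqueSix G) (U : Finset V) :
    ∑ u ∈ U, dg G U u ≤ 64 * U.card := by
  by_contra! h
  have hU : U.Nonempty := by
    rw [Finset.nonempty_iff_ne_empty]
    rintro rfl
    simp at h
  obtain ⟨f, -, h1⟩ := CliqueModel.of_sum_dg 6 G U hU (by norm_num; exact h.le)
  exact hG ⟨f, fun i => Set.subset_univ _, h1⟩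

lemma NoCliqueSix.sum_dg_le_add {G : SimpleGraph V} (hG : NoCliqueSix G) (U W : Finset V) :
    ∑ u ∈ U, dg G W u ≤ 64 * (U.card + W.card) := by
  classical
  calc ∑ u ∈ U, dg G W u ≤ ∑ u ∈ U, dg G (U ∪ W) u :=
        Finset.sum_le_sum fun u _ => dg_mono G Finset.subset_union_right u
    _ ≤ ∑ u ∈ U ∪ W, dg G (U ∪ W) u :=
        Finset.sum_le_sum_of_subset Finset.subset_union_left
    _ ≤ 64 * (U ∪ W).card := hG.sum_dg_le _
    _ ≤ 64 * (U.card + W.card) := Nat.mul_le_mul_left _ (Finset.card_union_le _ _)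

/-! ### Contracting stars -/

/-- The graph of the pairs `a z, b z` with `z ∈ Z`. -/
def pairGraph (Z : Finset V) (a b : V → V) : SimpleGraph V :=
  SimpleGraph.fromRel fun x y => ∃ z ∈ Z, a z = x ∧ b z = y

lemma pairGraph_adj {Z : Finset V} {a b : V → V} {x y : V} :
    (pairGraph Z a b).Adj x y ↔ x ≠ y ∧ ∃ z ∈ Z, (a z = x ∧ b z = y) ∨ (a z = y ∧ b z = x) := by
  simp only [pairGraph, SimpleGraph.fromRel_adj]
  grind

lemma pairGraph_isMinor {G : SimpleGraph V} {Z A : Finset V} {a b : V → V}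
    (hZA : Disjoint Z A) (ha : ∀ z ∈ Z, a z ∈ nb G A z) (hb : ∀ z ∈ Z, b z ∈ nb G A z) :
    IsMinor (pairGraph Z a b) G := by
  classical
  have hZ : ∀ z ∈ Z, z ∉ A := fun z hz => Finset.disjoint_left.1 hZA hz
  refine ⟨fun x => {y | x ∈ A ∧ (y = x ∨ (y ∈ Z ∧ a y = x))}, fun x => ?_, fun x y hxy => ?_,
    fun x y hxy => ?_⟩
  · by_cases hx : x ∈ A
    · refine PreConn.of_root x fun v hv => ?_
      rcases hv.2 with rfl | ⟨hvZ, hvx⟩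
      · exact Relation.ReflTransGen.refl
      · refine Relation.ReflTransGen.single ⟨⟨hx, Or.inl rfl⟩, hv, ?_⟩
        rw [← hvx]
        exact (mem_nb.1 (ha v hvZ)).2.symm
    · intro u hu
      exact (hx hu.1).elim
  · refine Set.disjoint_left.2 ?_
    rintro z ⟨hx, rfl | ⟨hz, rfl⟩⟩ ⟨hy, rfl | ⟨hz', rfl⟩⟩
    · exact hxy rfl
    · exact hZ _ hz' hx
    · exact hZ _ hz hy
    · exact hxy rfl
  · obtain ⟨hne, z, hz, ⟨rfl, rfl⟩ | ⟨rfl, rfl⟩⟩ := pairGraph_adj.1 hxy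
    · exact ⟨z, ⟨(mem_nb.1 (ha z hz)).1, Or.inr ⟨hz, rfl⟩⟩, b z,
        ⟨(mem_nb.1 (hb z hz)).1, Or.inl rfl⟩, (mem_nb.1 (hb z hz)).2⟩
    · exact ⟨b z, ⟨(mem_nb.1 (hb z hz)).1, Or.inl rfl⟩, z,
        ⟨(mem_nb.1 (ha z hz)).1, Or.inr ⟨hz, rfl⟩⟩, (mem_nb.1 (hb z hz)).2.symm⟩

lemma NoCliqueSix.card_le_of_pairs {G : SimpleGraph V} (hG : NoCliqueSix G) {Z A : Finset V}
    {a b : V → V} (hZA : Disjoint Z A) (ha : ∀ z ∈ Z, a z ∈ nb G A z)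
    (hb : ∀ z ∈ Z, b z ∈ nb G A z) (hab : ∀ z ∈ Z, a z ≠ b z)
    (hinj : Set.InjOn (fun z => s(a z, b z)) Z) : Z.card ≤ 32 * A.card := by
  classical
  have h1 := (hG.of_minor (pairGraph_isMinor hZA ha hb)).sum_dg_le A
  rw [sum_dg_eq_card] at h1
  have h2 : (Z.image fun z => (a z, b z)) ∪ (Z.image fun z => (b z, a z)) ⊆
      (A ×ˢ A).filter fun p => (pairGraph Z a b).Adj p.1 p.2 := by
    intro p hp
    rw [Finset.mem_union, Finset.mem_image, Finset.mem_image] at hp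
    rw [Finset.mem_filter, Finset.mem_product, pairGraph_adj]
    rcases hp with ⟨z, hz, rfl⟩ | ⟨z, hz, rfl⟩
    · exact ⟨⟨(mem_nb.1 (ha z hz)).1, (mem_nb.1 (hb z hz)).1⟩, hab z hz, z, hz, Or.inl ⟨rfl, rfl⟩⟩
    · exact ⟨⟨(mem_nb.1 (hb z hz)).1, (mem_nb.1 (ha z hz)).1⟩, (hab z hz).symm, z, hz,
        Or.inr ⟨rfl, rfl⟩⟩
  have h3 := Finset.card_le_card h2
  rw [Finset.card_union_of_disjoint, Finset.card_image_of_injOn, Finset.card_image_of_injOn] at h3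
  · omega
  · intro z hz w hw hzw
    simp only [Prod.mk.injEq] at hzw
    exact hinj hz hw (by simp [hzw.1, hzw.2])
  · intro z hz w hw hzw
    simp only [Prod.mk.injEq] at hzw
    exact hinj hz hw (by simp [hzw.1, hzw.2])
  · rw [Finset.disjoint_left]
    intro p hp hp'
    obtain ⟨z, hz, rfl⟩ := Finset.mem_image.1 hp
    obtain ⟨w, hw, hwz⟩ := Finset.mem_image.1 hp'
    simp only [Prod.mk.injEq] at hwz
    have : w = z := hinj hw hz (by simp [hwz.1, hwz.2, Sym2.eq_swap])
    subst this
    exact hab w hw hwz.2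

end Minors

section Counting

variable {V : Type*}

/-- Three vertices of a planar graph have at most two common neighbours. -/
lemma SimpleGraph.IsPlanar.card_common_le_two {G : SimpleGraph V} (hG : G.IsPlanar)
    {x y z : V} (hxy : x ≠ y) (hxz : x ≠ z) (hyz : y ≠ z) (W : Finset V)
    (hW : ∀ w ∈ W, G.Adj w x ∧ G.Adj w y ∧ G.Adj w z) : W.card ≤ 2 := by
  by_contra! h
  obtain ⟨a, ha, b, hb, c, hc, hab, hac, hbc⟩ := Finset.two_lt_card.1 h
  have hadj : ∀ i j : Fin 3, G.Adj (![a, b, c] i) (![x, y, z] j) := by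
    intro i j
    have h1 := hW a ha
    have h2 := hW b hb
    have h3 := hW c hc
    fin_cases i <;> fin_cases j <;> simp [h1, h2, h3]
  have hinj : ∀ {p q r : V}, p ≠ q → p ≠ r → q ≠ r → Function.Injective ![p, q, r] := by
    intro p q r h1 h2 h3 i j
    fin_cases i <;> fin_cases j <;> simp [h1, h2, h3, h1.symm, h2.symm, h3.symm]
  refine hG.not_minor_three_three (fun i => {![a, b, c] i}) (fun i => {![x, y, z] i})
    (fun i => PreConn.singleton G _) (fun i => PreConn.singleton G _)
    (fun i j hij => ?_) (fun i j hij => ?_) (fun i j => ?_)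
    (fun i j => ⟨_, rfl, _, rfl, hadj i j⟩)
  · exact Set.disjoint_singleton.2 fun h => hij (hinj hab hac hbc h)
  · exact Set.disjoint_singleton.2 fun h => hij (hinj hxy hxz hyz h)
  · exact Set.disjoint_singleton.2 (hadj i j).ne

/-- If the neighbourhoods in `B` of the vertices of `W` are cliques of a sparse graph, then few
of them have at least three elements. -/
lemma SimpleGraph.IsPlanar.card_le_of_cliques {G F : SimpleGraph V} (hG : G.IsPlanar)
    (hF : NoCliqueSix F) (W : Finset V) (B : Finset V) (h3 : ∀ w ∈ W, 3 ≤ dg G B w)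
    (hcl : ∀ w ∈ W, ∀ x ∈ nb G B w, ∀ y ∈ nb G B w, x ≠ y → F.Adj x y) :
    W.card ≤ 8192 * B.card := by
  classical
  induction hn : B.card generalizing B W with
  | zero =>
    rw [Finset.card_eq_zero] at hn
    subst hn
    rcases W.eq_empty_or_nonempty with rfl | ⟨w, hw⟩
    · simp
    · have := h3 w hw
      simp [dg, nb] at this
  | succ n ih =>
    have hB : B.Nonempty := Finset.card_pos.1 (by omega)
    obtain ⟨b, hb, hb64⟩ : ∃ b ∈ B, dg F B b ≤ 64 := by
      refine Finset.exists_le_of_sum_le hB ?_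
      have := hF.sum_dg_le B
      simpa [mul_comm] using this
    have hW2 : (W.filter fun w => ¬ G.Adj w b).card ≤ 8192 * n := by
      have hnb : ∀ w ∈ W.filter fun w => ¬ G.Adj w b, nb G (B.erase b) w = nb G B w := by
        intro w hw
        ext x
        have := (Finset.mem_filter.1 hw).2
        simp only [mem_nb, Finset.mem_erase]
        constructor
        · exact fun h => ⟨h.1.2, h.2⟩
        · refine fun h => ⟨⟨?_, h.1⟩, h.2⟩
          rintro rfl
          exact this h.2
      refine ih _ (B.erase b) (fun w hw => ?_) (fun w hw => ?_) ?_
      · rw [dg, hnb w hw]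
        exact h3 w (Finset.mem_filter.1 hw).1
      · rw [hnb w hw]
        exact hcl w (Finset.mem_filter.1 hw).1
      · have := Finset.card_erase_add_one hb
        omega
    have hW1 : (W.filter fun w => G.Adj w b).card ≤ 8192 := by
      set N := nb F B b
      have hsub : (W.filter fun w => G.Adj w b) ⊆ N.offDiag.biUnion
          fun p => W.filter fun w => G.Adj w b ∧ G.Adj w p.1 ∧ G.Adj w p.2 := by
        intro w hw
        obtain ⟨hwW, hwb⟩ := Finset.mem_filter.1 hw
        have hbw : b ∈ nb G B w := mem_nb.2 ⟨hb, hwb⟩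
        have h1 : 1 < ((nb G B w).erase b).card := by
          rw [Finset.card_erase_of_mem hbw]
          have := h3 w hwW
          unfold dg at this
          omega
        obtain ⟨x, hx, y, hy, hxy⟩ := Finset.one_lt_card.1 h1
        rw [Finset.mem_erase] at hx hy
        refine Finset.mem_biUnion.2 ⟨(x, y), ?_, ?_⟩
        · rw [Finset.mem_offDiag]
          exact ⟨mem_nb.2 ⟨(mem_nb.1 hx.2).1, hcl w hwW b hbw x hx.2 (Ne.symm hx.1)⟩,
            mem_nb.2 ⟨(mem_nb.1 hy.2).1, hcl w hwW b hbw y hy.2 (Ne.symm hy.1)⟩, hxy⟩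
        · exact Finset.mem_filter.2 ⟨hwW, hwb, (mem_nb.1 hx.2).2, (mem_nb.1 hy.2).2⟩
      refine (Finset.card_le_card hsub).trans
        ((Finset.card_biUnion_le_card_mul _ _ 2 fun p hp => ?_).trans ?_)
      · rw [Finset.mem_offDiag] at hp
        exact hG.card_common_le_two (mem_nb.1 hp.1).2.ne (mem_nb.1 hp.2.1).2.ne hp.2.2 _
          fun w hw => (Finset.mem_filter.1 hw).2
      · have : N.card ≤ 64 := hb64
        rw [Finset.offDiag_card]
        have : N.card * N.card ≤ 64 * 64 := Nat.mul_le_mul this this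
        omega
    have := Finset.card_filter_add_card_filter_not (s := W) (fun w => G.Adj w b)
    omega

/-- In a planar graph, the number of vertices outside `B` with at least three neighbours in `B`
is linear in the size of `B`. -/
lemma SimpleGraph.IsPlanar.card_three_le {G : SimpleGraph V} (hG : G.IsPlanar)
    (W B : Finset V) (hWB : Disjoint W B) (h3 : ∀ w ∈ W, 3 ≤ dg G B w) :
    W.card ≤ 8224 * B.card := by
  classical
  let Good : Finset V → Prop := fun F => ∃ a b : V → V, (∀ z ∈ F, a z ∈ nb G B z) ∧
    (∀ z ∈ F, b z ∈ nb G B z) ∧ (∀ z ∈ F, a z ≠ b z) ∧ Set.InjOn (fun z => s(a z, b z)) F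
  obtain ⟨F, hF, hmax⟩ := (W.powerset.filter Good).exists_max_image Finset.card
    ⟨∅, by simp only [Finset.mem_filter, Finset.mem_powerset, Finset.empty_subset, true_and]
           exact ⟨id, id, by simp⟩⟩
  rw [Finset.mem_filter, Finset.mem_powerset] at hF
  obtain ⟨hFW, a, b, ha, hb, hab, hinj⟩ := hF
  have hFB : Disjoint F B := Finset.disjoint_of_subset_left hFW hWB
  have hF1 := hG.noCliqueSix.card_le_of_pairs hFB ha hb hab hinj
  have hrest : (W \ F).card ≤ 8192 * B.card := by
    refine hG.card_le_of_cliques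
      (hG.noCliqueSix.of_minor (pairGraph_isMinor hFB ha hb)) (W \ F) B
      (fun w hw => h3 w (Finset.mem_sdiff.1 hw).1) fun w hw x hx y hy hxy => ?_
    rw [Finset.mem_sdiff] at hw
    by_contra hnot
    have hnew : ∀ z ∈ F, s(a z, b z) ≠ s(x, y) := by
      intro z hz h
      refine hnot (pairGraph_adj.2 ⟨hxy, z, hz, ?_⟩)
      simpa using Sym2.eq_iff.1 h
    have hne : ∀ z ∈ F, z ≠ w := fun z hz h => hw.2 (h ▸ hz)
    have hgood : Good (insert w F) := by
      refine ⟨Function.update a w x, Function.update b w y, ?_, ?_, ?_, ?_⟩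
      · intro z hz
        rcases Finset.mem_insert.1 hz with rfl | hz
        · simpa using hx
        · simpa [hne z hz] using ha z hz
      · intro z hz
        rcases Finset.mem_insert.1 hz with rfl | hz
        · simpa using hy
        · simpa [hne z hz] using hb z hz
      · intro z hz
        rcases Finset.mem_insert.1 hz with rfl | hz
        · simpa using hxy
        · simpa [hne z hz] using hab z hz
      · intro z hz z' hz' h
        rcases Finset.mem_insert.1 (Finset.mem_coe.1 hz) with hzw | hzF <;>
          rcases Finset.mem_insert.1 (Finset.mem_coe.1 hz') with hzw' | hzF'
        · rw [hzw, hzw']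
        · subst hzw
          simp only [Function.update_self, Function.update_of_ne (hne z' hzF')] at h
          exact (hnew z' hzF' h.symm).elim
        · subst hzw'
          simp only [Function.update_self, Function.update_of_ne (hne z hzF)] at h
          exact (hnew z hzF h).elim
        · simp only [Function.update_of_ne (hne z hzF), Function.update_of_ne (hne z' hzF')] at h
          exact hinj hzF hzF' h
    have := hmax (insert w F) (Finset.mem_filter.2
      ⟨Finset.mem_powerset.2 (Finset.insert_subset hw.1 hFW), hgood⟩)
    rw [Finset.card_insert_of_notMem hw.2] at this
    omega
  have := Finset.card_sdiff_add_card_eq_card hFW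
  omega

open scoped Classical in
/-- The vertices of `U` having a common neighbour with `v` in `Z`. -/
noncomputable def linked (G : SimpleGraph V) (Z U : Finset V) (v : V) : Finset V :=
  U.filter fun u => u ≠ v ∧ ∃ z ∈ Z, G.Adj z u ∧ G.Adj z v

lemma mem_linked {G : SimpleGraph V} {Z U : Finset V} {u v : V} :
    u ∈ linked G Z U v ↔ u ∈ U ∧ u ≠ v ∧ ∃ z ∈ Z, G.Adj z u ∧ G.Adj z v := by
  simp [linked]

/-- Pairs of vertices of `U` linked by vertices with few neighbours in `U` are few. -/
lemma NoCliqueSix.sum_linked_le {G : SimpleGraph V} (hG : NoCliqueSix G) (Z U : Finset V)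
    (D : ℕ) (hD : ∀ z ∈ Z, dg G U z ≤ D) :
    ∑ v ∈ U, (linked G Z U v).card ≤ 2176 * D * U.card := by
  classical
  let Cov : Finset V → Prop := fun Z' => ∀ v ∈ U, linked G Z U v ⊆ linked G Z' U v
  obtain ⟨Z', hZ', hmin⟩ := (Z.powerset.filter Cov).exists_min_image Finset.card
    ⟨Z, by simp only [Finset.mem_filter, Finset.mem_powerset, Finset.Subset.refl, true_and]
           exact fun v _ => Finset.Subset.refl _⟩
  rw [Finset.mem_filter, Finset.mem_powerset] at hZ'
  obtain ⟨hZZ, hcov⟩ := hZ'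
  have hpriv : ∀ z : V, ∃ p : V × V, z ∈ Z' → p.1 ∈ nb G U z ∧ p.2 ∈ nb G U z ∧ p.1 ≠ p.2 ∧
      ∀ z' ∈ Z', G.Adj z' p.1 → G.Adj z' p.2 → z' = z := by
    intro z
    by_cases hz : z ∈ Z'
    · have hnot : ¬ Cov (Z'.erase z) := fun hc => by
        have := hmin (Z'.erase z) (Finset.mem_filter.2
          ⟨Finset.mem_powerset.2 ((Finset.erase_subset _ _).trans hZZ), hc⟩)
        have := Finset.card_erase_add_one hz
        omega
      simp only [Cov, not_forall] at hnot
      obtain ⟨v, hv, hnot⟩ := hnot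
      obtain ⟨u, hu, hu'⟩ := Finset.not_subset.1 hnot
      obtain ⟨huU, huv, z₁, hz₁, h1, h2⟩ := mem_linked.1 (hcov v hv hu)
      have huniq : ∀ z' ∈ Z', G.Adj z' u → G.Adj z' v → z' = z := by
        intro z' hz' h3 h4
        by_contra hne
        exact hu' (mem_linked.2 ⟨huU, huv, z', Finset.mem_erase.2 ⟨hne, hz'⟩, h3, h4⟩)
      have := huniq z₁ hz₁ h1 h2
      subst this
      exact ⟨(u, v), fun _ => ⟨mem_nb.2 ⟨huU, h1⟩, mem_nb.2 ⟨hv, h2⟩, huv, huniq⟩⟩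
    · exact ⟨(z, z), fun h => (hz h).elim⟩
  choose p hp using hpriv
  have hcard : (Z' \ U).card ≤ 32 * U.card := by
    have hm : ∀ z ∈ Z' \ U, z ∈ Z' := fun z hz => (Finset.mem_sdiff.1 hz).1
    refine hG.card_le_of_pairs (a := fun z => (p z).1) (b := fun z => (p z).2)
      Finset.sdiff_disjoint (fun z hz => (hp z (hm z hz)).1) (fun z hz => (hp z (hm z hz)).2.1)
      (fun z hz => (hp z (hm z hz)).2.2.1) ?_
    intro z hz w hw hzw
    have hz' := hp z (hm z hz)
    have hw' := hp w (hm w hw)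
    refine hw'.2.2.2 z (hm z hz) ?_ ?_
    · rcases Sym2.eq_iff.1 hzw with h | h
      · rw [← h.1]; exact (mem_nb.1 hz'.1).2
      · rw [← h.2]; exact (mem_nb.1 hz'.2.1).2
    · rcases Sym2.eq_iff.1 hzw with h | h
      · rw [← h.2]; exact (mem_nb.1 hz'.2.1).2
      · rw [← h.1]; exact (mem_nb.1 hz'.1).2
  have hcard' : Z'.card ≤ 33 * U.card := by
    have h1 := Finset.card_sdiff_add_card_inter Z' U
    have h2 := Finset.card_le_card (Finset.inter_subset_right (s₁ := Z') (s₂ := U))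
    omega
  have hpoint : ∀ v ∈ U, (linked G Z U v).card ≤ D * dg G Z' v := by
    intro v hv
    have hsub : linked G Z U v ⊆ (nb G Z' v).biUnion fun z => nb G U z := by
      intro u hu
      obtain ⟨huU, -, z, hz, h1, h2⟩ := mem_linked.1 (hcov v hv hu)
      exact Finset.mem_biUnion.2 ⟨z, mem_nb.2 ⟨hz, h2.symm⟩, mem_nb.2 ⟨huU, h1⟩⟩
    refine (Finset.card_le_card hsub).trans
      ((Finset.card_biUnion_le_card_mul _ _ D fun z hz => ?_).trans_eq (mul_comm _ _))
    exact hD z (hZZ (mem_nb.1 hz).1)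
  calc ∑ v ∈ U, (linked G Z U v).card ≤ ∑ v ∈ U, D * dg G Z' v := Finset.sum_le_sum hpoint
    _ = D * ∑ v ∈ U, dg G Z' v := by rw [Finset.mul_sum]
    _ ≤ D * (64 * (U.card + 33 * U.card)) := by
        refine Nat.mul_le_mul_left _ ((hG.sum_dg_le_add U Z').trans ?_)
        omega
    _ = 2176 * D * U.card := by ring

end Counting

section Separator

variable {V : Type*}

/-- Growing a ball around `v` inside `R` until its boundary is relatively small. -/
lemma exists_ball_small_boundary (G : SimpleGraph V) [DecidableEq V] (R : Finset V) (ℓ ρ : ℕ)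
    (hρ : R.card * ℓ ^ ρ < (ℓ + 1) ^ ρ) {v : V} (hv : v ∈ R) :
    ∃ D S : Finset V, v ∈ D ∧ D ⊆ R ∧ S ⊆ R ∧ Disjoint D S ∧ ℓ * S.card ≤ D.card ∧
      (∀ x ∈ D, ∀ y ∈ R, G.Adj x y → y ∈ D ∨ y ∈ S) ∧
      ∀ x ∈ D, ∃ P : Finset V, P ⊆ R ∧ v ∈ P ∧ x ∈ P ∧ PreConn G (P : Set V) ∧ P.card ≤ ρ := by
  classical
  let step : Finset V → Finset V := fun D => D ∪ R.filter fun y => ∃ x ∈ D, G.Adj x y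
  let ball : ℕ → Finset V := fun i => step^[i] {v}
  have hsucc : ∀ i, ball (i + 1) = step (ball i) := fun i => Function.iterate_succ_apply' _ _ _
  have hsub : ∀ i, ball i ⊆ R := by
    intro i
    induction i with
    | zero => simpa [ball] using hv
    | succ i ih =>
      rw [hsucc]
      exact Finset.union_subset ih (Finset.filter_subset _ _)
  have hvb : ∀ i, v ∈ ball i := by
    intro i
    induction i with
    | zero => simp [ball]
    | succ i ih =>
      rw [hsucc]
      exact Finset.mem_union_left _ ih
  have hpath : ∀ i, ∀ x ∈ ball i, ∃ P : Finset V, P ⊆ R ∧ v ∈ P ∧ x ∈ P ∧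
      PreConn G (P : Set V) ∧ P.card ≤ i + 1 := by
    intro i
    induction i with
    | zero =>
      intro x hx
      obtain rfl : x = v := by simpa [ball] using hx
      exact ⟨{x}, by simpa using hv, by simp, by simp, by simpa using PreConn.singleton G x,
        by simp⟩
    | succ i ih =>
      intro x hx
      rw [hsucc, Finset.mem_union, Finset.mem_filter] at hx
      rcases hx with hx | ⟨hxR, y, hy, hyx⟩
      · obtain ⟨P, h1, h2, h3, h4, h5⟩ := ih x hx
        exact ⟨P, h1, h2, h3, h4, by omega⟩
      · obtain ⟨P, h1, h2, h3, h4, h5⟩ := ih y hy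
        refine ⟨insert x P, Finset.insert_subset hxR h1, Finset.mem_insert_of_mem h2,
          Finset.mem_insert_self _ _, ?_, (Finset.card_insert_le _ _).trans (by omega)⟩
        rw [Finset.coe_insert, ← Set.singleton_union]
        exact (PreConn.singleton G x).union h4 ⟨x, rfl, y, h3, hyx.symm⟩
  obtain ⟨i, hi, hb⟩ : ∃ i < ρ, ℓ * (ball (i + 1) \ ball i).card ≤ (ball i).card := by
    by_contra! hcon
    have hgrow : ∀ i ≤ ρ, (ℓ + 1) ^ i ≤ (ball i).card * ℓ ^ i := by
      intro i
      induction i with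
      | zero => intro _; simp [ball]
      | succ i ih =>
        intro hi
        have h1 := ih (by omega)
        have h2 := hcon i (by omega)
        have h3 : ball i ⊆ ball (i + 1) := by rw [hsucc]; exact Finset.subset_union_left
        have h4 := Finset.card_sdiff_add_card_eq_card h3
        calc (ℓ + 1) ^ (i + 1) = (ℓ + 1) ^ i * (ℓ + 1) := pow_succ _ _
          _ ≤ (ball i).card * ℓ ^ i * (ℓ + 1) := Nat.mul_le_mul_right _ h1
          _ = ((ball i).card * ℓ + (ball i).card) * ℓ ^ i := by ring
          _ ≤ ((ball (i + 1)).card * ℓ) * ℓ ^ i := by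
              refine Nat.mul_le_mul_right _ ?_
              rw [← h4]
              nlinarith
          _ = (ball (i + 1)).card * ℓ ^ (i + 1) := by ring
    have h1 := hgrow ρ le_rfl
    have h2 := Nat.mul_le_mul_right (ℓ ^ ρ) (Finset.card_le_card (hsub ρ))
    omega
  refine ⟨ball i, ball (i + 1) \ ball i, hvb i, hsub i,
    Finset.sdiff_subset.trans (hsub _), Finset.disjoint_sdiff, hb, ?_, ?_⟩
  · intro x hx y hy hxy
    by_cases hyi : y ∈ ball i
    · exact Or.inl hyi
    · refine Or.inr (Finset.mem_sdiff.2 ⟨?_, hyi⟩)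
      rw [hsucc]
      exact Finset.mem_union_right _ (Finset.mem_filter.2 ⟨hy, x, hx, hxy⟩)
  · intro x hx
    obtain ⟨P, h1, h2, h3, h4, h5⟩ := hpath i x hx
    exact ⟨P, h1, h2, h3, h4, by omega⟩

/-- Intermediate state in the construction of a separator: `W` has been split off from the
remaining part `R`, by the separating set `S` and the branch sets in `𝓑`. -/
structure SeparatorState (G : SimpleGraph V) [DecidableEq V] (V₀ : Finset V) (ℓ b : ℕ)
    (R S W : Finset V) (𝓑 : Finset (Finset V)) : Prop where
  cover : V₀ ⊆ R ∪ S ∪ W ∪ 𝓑.biUnion id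
  R_sub : R ⊆ V₀
  W_sub : W ⊆ V₀
  disj : Disjoint W R
  no_edge : ∀ w ∈ W, ∀ r ∈ R, ¬ G.Adj w r
  S_card : ℓ * S.card ≤ W.card
  W_card : 3 * W.card ≤ 2 * V₀.card
  branch_card : 𝓑.card ≤ 5
  branch_size : ∀ X ∈ 𝓑, X.card ≤ b
  branch_conn : ∀ X ∈ 𝓑, PreConn G (X : Set V)
  branch_nonempty : ∀ X ∈ 𝓑, X.Nonempty
  branch_sub : ∀ X ∈ 𝓑, X ⊆ V₀
  branch_disj : ∀ X ∈ 𝓑, Disjoint X R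
  branch_pair : ∀ X ∈ 𝓑, ∀ Y ∈ 𝓑, X ≠ Y → Disjoint X Y ∧ Touch G (X : Set V) (Y : Set V)

lemma NoCliqueSix.card_branch_le {G : SimpleGraph V} (hG : NoCliqueSix G)
    (𝓑 : Finset (Finset V)) (hc : ∀ X ∈ 𝓑, PreConn G (X : Set V)) (hn : ∀ X ∈ 𝓑, X.Nonempty)
    (hp : ∀ X ∈ 𝓑, ∀ Y ∈ 𝓑, X ≠ Y → Disjoint X Y ∧ Touch G (X : Set V) (Y : Set V)) :
    𝓑.card ≤ 5 := by
  by_contra! h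
  obtain ⟨𝓒, hsub, hcard⟩ := Finset.exists_subset_card_eq (show 6 ≤ 𝓑.card by omega)
  let e := (Finset.equivFinOfCardEq hcard).symm
  have hm : ∀ i, (e i : Finset V) ∈ 𝓑 := fun i => hsub (e i).2
  have hne : ∀ i j, i ≠ j → (e i : Finset V) ≠ e j := fun i j hij h =>
    hij (e.injective (Subtype.ext h))
  exact hG ⟨fun i => ((e i : Finset V) : Set V), fun i => Set.subset_univ _,
    fun i => Finset.coe_nonempty.2 (hn _ (hm i)), fun i => hc _ (hm i),
    fun i j hij => Finset.disjoint_coe.2 (hp _ (hm i) _ (hm j) (hne i j hij)).1,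
    fun i j hij => (hp _ (hm i) _ (hm j) (hne i j hij)).2⟩

lemma SeparatorState.exists_separator {G : SimpleGraph V} (hG : NoCliqueSix G) [DecidableEq V]
    {V₀ : Finset V} {ℓ ρ : ℕ} (hρ : V₀.card * ℓ ^ ρ < (ℓ + 1) ^ ρ) {R S W : Finset V}
    {𝓑 : Finset (Finset V)} (h : SeparatorState G V₀ ℓ (10 * ρ + 1) R S W 𝓑) :
    ∃ Z W' R' : Finset V, V₀ ⊆ Z ∪ W' ∪ R' ∧ W' ⊆ V₀ ∧ R' ⊆ V₀ ∧ Disjoint W' R' ∧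
      (∀ w ∈ W', ∀ r ∈ R', ¬ G.Adj w r) ∧ 3 * W'.card ≤ 2 * V₀.card ∧
      3 * R'.card ≤ 2 * V₀.card ∧ ℓ * Z.card ≤ V₀.card + ℓ * (50 * ρ + 5) := by
  classical
  induction hm : 6 * R.card + 𝓑.card using Nat.strong_induction_on generalizing R S W 𝓑 with
  | _ m ih =>
  subst hm
  have hWR : W.card + R.card ≤ V₀.card := by
    rw [← Finset.card_union_of_disjoint h.disj]
    exact Finset.card_le_card (Finset.union_subset h.W_sub h.R_sub)
  by_cases hR : 3 * R.card ≤ 2 * V₀.card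
  · refine ⟨S ∪ 𝓑.biUnion id, W, R, fun x hx => ?_, h.W_sub, h.R_sub, h.disj, h.no_edge, h.W_card,
      hR, ?_⟩
    · have := h.cover hx
      simp only [Finset.mem_union] at this ⊢
      tauto
    · have h1 : (𝓑.biUnion id).card ≤ 𝓑.card * (10 * ρ + 1) :=
        Finset.card_biUnion_le_card_mul _ _ _ h.branch_size
      have h2 : 𝓑.card * (10 * ρ + 1) ≤ 5 * (10 * ρ + 1) := Nat.mul_le_mul_right _ h.branch_card
      have h3 := Finset.card_union_le S (𝓑.biUnion id)
      have h4 := h.S_card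
      calc ℓ * (S ∪ 𝓑.biUnion id).card ≤ ℓ * (S.card + (50 * ρ + 5)) :=
            Nat.mul_le_mul_left _ (by omega)
        _ = ℓ * S.card + ℓ * (50 * ρ + 5) := by ring
        _ ≤ _ := by omega
  push Not at hR
  by_cases hi : ∃ X ∈ 𝓑, ∀ x ∈ X, ∀ r ∈ R, ¬ G.Adj x r
  · obtain ⟨X, hX, hXR⟩ := hi
    have hWXR : Disjoint (W ∪ X) R := Finset.disjoint_union_left.2 ⟨h.disj, h.branch_disj X hX⟩
    have hWX : W ∪ X ⊆ V₀ := Finset.union_subset h.W_sub (h.branch_sub X hX)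
    have hcard : (W ∪ X).card + R.card ≤ V₀.card := by
      rw [← Finset.card_union_of_disjoint hWXR]
      exact Finset.card_le_card (Finset.union_subset hWX h.R_sub)
    have hmem : ∀ Y ∈ 𝓑.erase X, Y ∈ 𝓑 := fun Y hY => Finset.mem_of_mem_erase hY
    have hec := Finset.card_erase_add_one hX
    refine ih _ (by omega) (R := R) (S := S) (W := W ∪ X) (𝓑 := 𝓑.erase X) ?_ rfl
    refine ⟨fun x hx => ?_, h.R_sub, hWX, hWXR, ?_, ?_, by omega, by have := h.branch_card; omega,
      fun Y hY => h.branch_size Y (hmem Y hY), fun Y hY => h.branch_conn Y (hmem Y hY),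
      fun Y hY => h.branch_nonempty Y (hmem Y hY), fun Y hY => h.branch_sub Y (hmem Y hY),
      fun Y hY => h.branch_disj Y (hmem Y hY),
      fun Y hY Y' hY' => h.branch_pair Y (hmem Y hY) Y' (hmem Y' hY')⟩
    · have := h.cover hx
      simp only [Finset.mem_union, Finset.mem_biUnion, id] at this ⊢
      rcases this with ((h1 | h1) | h1) | ⟨Y, hY, hxY⟩
      · tauto
      · tauto
      · tauto
      · by_cases hYX : Y = X
        · subst hYX; tauto
        · exact Or.inr ⟨Y, Finset.mem_erase.2 ⟨hYX, hY⟩, hxY⟩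
    · intro w hw r hr
      rcases Finset.mem_union.1 hw with hw | hw
      · exact h.no_edge w hw r hr
      · exact hXR w hw r hr
    · exact h.S_card.trans (Finset.card_le_card Finset.subset_union_left)
  push Not at hi
  have hρR : R.card * ℓ ^ ρ < (ℓ + 1) ^ ρ :=
    (Nat.mul_le_mul_right _ (Finset.card_le_card h.R_sub)).trans_lt hρ
  have hballs := fun v (hv : v ∈ R) => exists_ball_small_boundary G R ℓ ρ hρR hv
  choose! D T hvD hDR hTR hDT hT hbd hpath using hballs
  by_cases hii : ∃ v ∈ R, 2 * (D v).card ≤ R.card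
  · obtain ⟨v, hv, hsmall⟩ := hii
    have hWD : Disjoint W (D v) := Finset.disjoint_of_subset_right (hDR v hv) h.disj
    have hcW := Finset.card_union_of_disjoint hWD
    have hlt : (R \ (D v ∪ T v)).card < R.card := by
      refine Finset.card_lt_card ((Finset.ssubset_iff_of_subset Finset.sdiff_subset).2 ⟨v, hv, ?_⟩)
      simp [hvD v hv]
    refine ih _ (by omega) (R := R \ (D v ∪ T v)) (S := S ∪ T v) (W := W ∪ D v) (𝓑 := 𝓑) ?_ rfl
    refine ⟨fun x hx => ?_, Finset.sdiff_subset.trans h.R_sub,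
      Finset.union_subset h.W_sub ((hDR v hv).trans h.R_sub), ?_, ?_, ?_, by omega, h.branch_card,
      h.branch_size, h.branch_conn, h.branch_nonempty, h.branch_sub,
      fun X hX => Finset.disjoint_of_subset_right Finset.sdiff_subset (h.branch_disj X hX),
      h.branch_pair⟩
    · have := h.cover hx
      simp only [Finset.mem_union, Finset.mem_sdiff] at this ⊢
      tauto
    · refine Finset.disjoint_union_left.2
        ⟨Finset.disjoint_of_subset_right Finset.sdiff_subset h.disj, ?_⟩
      exact Finset.disjoint_of_subset_left Finset.subset_union_left Finset.disjoint_sdiff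
    · intro w hw r hr hwr
      rw [Finset.mem_sdiff, Finset.mem_union] at hr
      rcases Finset.mem_union.1 hw with hw | hw
      · exact h.no_edge w hw r hr.1 hwr
      · exact hr.2 (hbd v hv w hw r hr.1 hwr)
    · have h1 := Finset.card_union_le S (T v)
      have h2 := hT v hv
      have h3 := h.S_card
      rw [hcW]
      calc ℓ * (S ∪ T v).card ≤ ℓ * (S.card + (T v).card) := Nat.mul_le_mul_left _ h1
        _ = ℓ * S.card + ℓ * (T v).card := by ring
        _ ≤ _ := by omega
  push Not at hii
  obtain ⟨r₀, hr₀⟩ : R.Nonempty := Finset.card_pos.1 (by omega)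
  have hlink : ∀ X : Finset V, ∃ P : Finset V, X ∈ 𝓑 → P ⊆ R ∧ r₀ ∈ P ∧ PreConn G (P : Set V) ∧
      P.card ≤ 2 * ρ ∧ Touch G (P : Set V) (X : Set V) := by
    intro X
    by_cases hX : X ∈ 𝓑
    · obtain ⟨x, hx, r, hr, hxr⟩ := hi X hX
      have hmeet : ¬ Disjoint (D r₀) (D r) := by
        intro hdis
        have h1 := Finset.card_union_of_disjoint hdis
        have h2 := Finset.card_le_card (Finset.union_subset (hDR r₀ hr₀) (hDR r hr))
        have h3 := hii r₀ hr₀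
        have h4 := hii r hr
        omega
      obtain ⟨y, hy, hy'⟩ := Finset.not_disjoint_iff.1 hmeet
      obtain ⟨P, hP1, hP2, hP3, hP4, hP5⟩ := hpath r₀ hr₀ y hy
      obtain ⟨P', hQ1, hQ2, hQ3, hQ4, hQ5⟩ := hpath r hr y hy'
      refine ⟨P ∪ P', fun _ => ⟨Finset.union_subset hP1 hQ1, Finset.mem_union_left _ hP2, ?_,
        (Finset.card_union_le _ _).trans (by omega), r, ?_, x, hx, hxr.symm⟩⟩
      · rw [Finset.coe_union]
        exact hP4.union_of_mem hQ4 hP3 hQ3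
      · exact Finset.mem_coe.2 (Finset.mem_union_right _ hQ2)
    · exact ⟨∅, fun h => (hX h).elim⟩
  choose P hP using hlink
  set N : Finset V := insert r₀ (𝓑.biUnion P) with hN
  have hr₀N : r₀ ∈ N := Finset.mem_insert_self _ _
  have hPN : ∀ X ∈ 𝓑, P X ⊆ N := fun X hX =>
    (Finset.subset_biUnion_of_mem P hX).trans (Finset.subset_insert _ _)
  have hNR : N ⊆ R := Finset.insert_subset hr₀ (Finset.biUnion_subset.2 fun X hX => (hP X hX).1)
  have hNconn : PreConn G (N : Set V) := by
    refine PreConn.of_root r₀ fun v hv => ?_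
    rcases Finset.mem_insert.1 (Finset.mem_coe.1 hv) with rfl | hv
    · exact Relation.ReflTransGen.refl
    · obtain ⟨X, hX, hvX⟩ := Finset.mem_biUnion.1 hv
      exact PreConn.walk_mono (Finset.coe_subset.2 (hPN X hX))
        ((hP X hX).2.2.1 r₀ (hP X hX).2.1 v hvX)
  have hNcard : N.card ≤ 10 * ρ + 1 := by
    have h2 : (𝓑.biUnion P).card ≤ 𝓑.card * (2 * ρ) :=
      Finset.card_biUnion_le_card_mul _ _ _ fun X hX => (hP X hX).2.2.2.1
    have h3 : 𝓑.card * (2 * ρ) ≤ 5 * (2 * ρ) := Nat.mul_le_mul_right _ h.branch_card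
    exact (Finset.card_insert_le _ _).trans (by omega)
  have hNtouch : ∀ X ∈ 𝓑, Touch G (N : Set V) (X : Set V) := fun X hX =>
    (hP X hX).2.2.2.2.mono (Finset.coe_subset.2 (hPN X hX)) subset_rfl
  have hNdisj : ∀ X ∈ 𝓑, Disjoint N X := fun X hX =>
    (Finset.disjoint_of_subset_right hNR (h.branch_disj X hX)).symm
  have hc : ∀ X ∈ insert N 𝓑, PreConn G (X : Set V) := fun X hX => by
    rcases Finset.mem_insert.1 hX with rfl | hX
    · exact hNconn
    · exact h.branch_conn X hX
  have hn : ∀ X ∈ insert N 𝓑, X.Nonempty := fun X hX => by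
    rcases Finset.mem_insert.1 hX with rfl | hX
    · exact ⟨r₀, hr₀N⟩
    · exact h.branch_nonempty X hX
  have hp : ∀ X ∈ insert N 𝓑, ∀ Y ∈ insert N 𝓑, X ≠ Y →
      Disjoint X Y ∧ Touch G (X : Set V) (Y : Set V) := by
    intro X hX Y hY hXY
    rcases Finset.mem_insert.1 hX with hXN | hX <;> rcases Finset.mem_insert.1 hY with hYN | hY
    · exact (hXY (hXN.trans hYN.symm)).elim
    · rw [hXN]; exact ⟨hNdisj Y hY, hNtouch Y hY⟩
    · rw [hYN]; exact ⟨(hNdisj X hX).symm, (hNtouch X hX).symm⟩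
    · exact h.branch_pair X hX Y hY hXY
  have hlt : (R \ N).card < R.card :=
    Finset.card_lt_card ((Finset.ssubset_iff_of_subset Finset.sdiff_subset).2
      ⟨r₀, hr₀, fun h => (Finset.mem_sdiff.1 h).2 hr₀N⟩)
  have hci := Finset.card_insert_le N 𝓑
  refine ih _ (by omega) (R := R \ N) (S := S) (W := W) (𝓑 := insert N 𝓑) ?_ rfl
  refine ⟨fun x hx => ?_, Finset.sdiff_subset.trans h.R_sub, h.W_sub,
    Finset.disjoint_of_subset_right Finset.sdiff_subset h.disj,
    fun w hw r hr => h.no_edge w hw r (Finset.mem_sdiff.1 hr).1, h.S_card, h.W_card,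
    hG.card_branch_le _ hc hn hp, fun X hX => ?_, hc, hn, fun X hX => ?_, fun X hX => ?_, hp⟩
  · have := h.cover hx
    simp only [Finset.mem_union, Finset.mem_sdiff, Finset.biUnion_insert, id] at this ⊢
    tauto
  · rcases Finset.mem_insert.1 hX with rfl | hX
    · exact hNcard
    · exact h.branch_size X hX
  · rcases Finset.mem_insert.1 hX with rfl | hX
    · exact hNR.trans h.R_sub
    · exact h.branch_sub X hX
  · rcases Finset.mem_insert.1 hX with rfl | hX
    · exact Finset.disjoint_sdiff
    · exact Finset.disjoint_of_subset_right Finset.sdiff_subset (h.branch_disj X hX)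

/-- Graphs without a clique minor on six vertices have small balanced separators. -/
lemma NoCliqueSix.exists_separator {G : SimpleGraph V} (hG : NoCliqueSix G) [DecidableEq V]
    {V₀ : Finset V} {ℓ ρ : ℕ} (hρ : V₀.card * ℓ ^ ρ < (ℓ + 1) ^ ρ) :
    ∃ Z W' R' : Finset V, V₀ ⊆ Z ∪ W' ∪ R' ∧ W' ⊆ V₀ ∧ R' ⊆ V₀ ∧ Disjoint W' R' ∧
      (∀ w ∈ W', ∀ r ∈ R', ¬ G.Adj w r) ∧ 3 * W'.card ≤ 2 * V₀.card ∧
      3 * R'.card ≤ 2 * V₀.card ∧ ℓ * Z.card ≤ V₀.card + ℓ * (50 * ρ + 5) := by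
  refine SeparatorState.exists_separator hG hρ (R := V₀) (S := ∅) (W := ∅) (𝓑 := ∅) ?_
  constructor <;> simp

end Separator

section Hyperfinite

lemma exists_separator_parameters (lam : ℝ) (hlam : 0 < lam) :
    ∃ N : ℕ, 1 ≤ N ∧ ∀ n : ℕ, N ≤ n → ∃ ℓ ρ : ℕ, 0 < ℓ ∧ n * ℓ ^ ρ < (ℓ + 1) ^ ρ ∧
      ((n : ℝ) / ℓ + (50 * ρ + 5)) * (3 * Real.log n + 2) ^ 2 ≤ lam * n := by
  have h1 : ∀ᶠ x : ℝ in Filter.atTop, Real.log x ≤ x ^ ((1 : ℝ) / 12) := by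
    have := (isLittleO_log_rpow_atTop (show (0 : ℝ) < 1 / 12 by norm_num)).bound
      (show (0 : ℝ) < 1 by norm_num)
    filter_upwards [this, Filter.eventually_ge_atTop 1] with x hx hx1
    rw [one_mul, Real.norm_of_nonneg (Real.log_nonneg hx1),
      Real.norm_of_nonneg (by positivity)] at hx
    exact hx
  have h2 : ∀ᶠ x : ℝ in Filter.atTop, 1 + 100000 / lam ≤ x ^ ((1 : ℝ) / 12) :=
    (tendsto_rpow_atTop (show (0 : ℝ) < 1 / 12 by norm_num)).eventually_ge_atTop _
  have h3 := (tendsto_natCast_atTop_atTop (R := ℝ)).eventually (h1.and h2)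
  obtain ⟨N, hN⟩ := Filter.eventually_atTop.1 h3
  refine ⟨max N 1, le_max_right _ _, fun n hn => ?_⟩
  obtain ⟨hlog, hy⟩ := hN n ((le_max_left _ _).trans hn)
  have hn1 : 1 ≤ n := (le_max_right _ _).trans hn
  have hn1' : (1 : ℝ) ≤ n := by exact_mod_cast hn1
  set y : ℝ := (n : ℝ) ^ ((1 : ℝ) / 12) with hydef
  have hy12 : y ^ 12 = n := by
    rw [hydef, ← Real.rpow_natCast, ← Real.rpow_mul (by positivity)]
    norm_num
  have hlam' : 0 < 100000 / lam := by positivity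
  have hy1 : 1 ≤ y := by linarith
  set s := Nat.sqrt n with hs
  have hs1 : (s : ℝ) ≤ y ^ 6 := by
    have : (s : ℝ) * s ≤ n := by exact_mod_cast Nat.sqrt_le n
    have h6 : (n : ℝ) = y ^ 6 * y ^ 6 := by rw [← hy12]; ring
    rw [h6] at this
    exact abs_le_of_sq_le_sq' (by nlinarith) (by positivity) |>.2
  have hs2 : y ^ 6 ≤ (s : ℝ) + 1 := by
    have : (n : ℝ) ≤ (s + 1) * (s + 1) := by exact_mod_cast (Nat.lt_succ_sqrt n).le
    rw [← hy12] at this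
    exact abs_le_of_sq_le_sq' (by nlinarith) (by positivity) |>.2
  have hlog0 : 0 ≤ Real.log n := Real.log_nonneg hn1'
  set ρ : ℕ := ⌊((s : ℝ) + 2) * Real.log n⌋₊ + 1 with hρ
  have hρ1 : ((s : ℝ) + 2) * Real.log n < ρ := by
    rw [hρ]
    push_cast
    exact Nat.lt_floor_add_one _
  have hρ2 : (ρ : ℝ) ≤ (s + 2) * Real.log n + 1 := by
    rw [hρ]
    push_cast
    have := Nat.floor_le (show 0 ≤ ((s : ℝ) + 2) * Real.log n by positivity)
    linarith
  refine ⟨s + 1, ρ, Nat.succ_pos _, ?_, ?_⟩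
  · have hl0 : (0 : ℝ) < (s : ℝ) + 1 := by positivity
    have hl1 : (0 : ℝ) < (s : ℝ) + 1 + 1 := by positivity
    have key : Real.log n < ρ * (Real.log ((s : ℝ) + 1 + 1) - Real.log ((s : ℝ) + 1)) := by
      rw [← Real.log_div hl1.ne' hl0.ne']
      have h := Real.one_sub_inv_le_log_of_pos (div_pos hl1 hl0)
      have h' : 1 - (((s : ℝ) + 1 + 1) / (s + 1))⁻¹ = 1 / (s + 2) := by
        field_simp
        ring
      rw [h'] at h
      have h4 : Real.log n < ρ * (1 / ((s : ℝ) + 2)) := by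
        rw [mul_one_div, lt_div_iff₀ (by positivity)]
        linarith
      exact h4.trans_le (mul_le_mul_of_nonneg_left h (by positivity))
    have : (n : ℝ) * ((s : ℝ) + 1) ^ ρ < ((s : ℝ) + 1 + 1) ^ ρ := by
      rw [← Real.log_lt_log_iff (by positivity) (by positivity), Real.log_mul (by positivity)
        (by positivity), Real.log_pow, Real.log_pow]
      linarith
    exact_mod_cast this
  · have hb1 : (n : ℝ) / ((s + 1 : ℕ) : ℝ) ≤ y ^ 6 := by
      rw [div_le_iff₀ (by positivity), ← hy12]
      push_cast
      calc y ^ 12 = y ^ 6 * y ^ 6 := by ring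
        _ ≤ y ^ 6 * (s + 1) := by gcongr
    have hy6 : 1 ≤ y ^ 6 := one_le_pow₀ hy1
    have hy67 : y ^ 6 ≤ y ^ 7 := pow_le_pow_right₀ hy1 (by norm_num)
    have hy17 : 1 ≤ y ^ 7 := one_le_pow₀ hy1
    have hb2 : (ρ : ℝ) ≤ 4 * y ^ 7 := by
      have : ((s : ℝ) + 2) * Real.log n ≤ (3 * y ^ 6) * y :=
        mul_le_mul (by linarith) hlog hlog0 (by positivity)
      have h7 : (3 * y ^ 6) * y = 3 * y ^ 7 := by ring
      linarith
    have hb3 : (n : ℝ) / ((s + 1 : ℕ) : ℝ) + (50 * ρ + 5) ≤ 206 * y ^ 7 := by linarith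
    have hb4 : (3 * Real.log n + 2) ^ 2 ≤ (5 * y) ^ 2 := by
      refine pow_le_pow_left₀ (by positivity) (by linarith) 2
    calc _ ≤ (206 * y ^ 7) * (5 * y) ^ 2 := mul_le_mul hb3 hb4 (by positivity) (by positivity)
      _ ≤ 100000 * y ^ 9 := by nlinarith [show 0 < y ^ 9 by positivity]
      _ ≤ (lam * y) * y ^ 9 := by
          refine mul_le_mul_of_nonneg_right ?_ (by positivity)
          have : 100000 / lam ≤ y := by linarith
          rw [div_le_iff₀ hlam] at this
          linarith
      _ = lam * y ^ 10 := by ring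
      _ ≤ lam * y ^ 12 :=
          mul_le_mul_of_nonneg_left (pow_le_pow_right₀ hy1 (by norm_num)) hlam.le
      _ = lam * n := by rw [hy12]

open scoped Classical in
/-- Deleting the set `Q` splits `V₀` into unions of components of size at most `K`; these unions
are the fibres of a labelling. -/
def SplitsBy {V : Type*} (G : SimpleGraph V) (V₀ Q : Finset V) (K : ℕ) : Prop :=
  Q ⊆ V₀ ∧ ∃ lab : V → ℕ, (∀ u ∈ V₀ \ Q, ∀ v ∈ V₀ \ Q, G.Adj u v → lab u = lab v) ∧
    ∀ i, ((V₀ \ Q).filter fun v => lab v = i).card ≤ K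

open scoped Classical in
lemma SplitsBy.union {V : Type*} {G : SimpleGraph V}
    {V₀ Z W R Q₁ Q₂ : Finset V} {K : ℕ}
    (hcov : V₀ ⊆ Z ∪ W ∪ R) (hW : W ⊆ V₀) (hR : R ⊆ V₀) (hWR : Disjoint W R)
    (hno : ∀ w ∈ W, ∀ r ∈ R, ¬ G.Adj w r)
    (h₁ : SplitsBy G W Q₁ K) (h₂ : SplitsBy G R Q₂ K) :
    SplitsBy G V₀ ((Z ∩ V₀) ∪ (Q₁ ∪ Q₂)) K := by
  obtain ⟨hQ₁, lab₁, hl₁, hK₁⟩ := h₁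
  obtain ⟨hQ₂, lab₂, hl₂, hK₂⟩ := h₂
  have hsplit : ∀ v, v ∈ V₀ → v ∉ (Z ∩ V₀) ∪ (Q₁ ∪ Q₂) →
      (v ∈ W ∧ v ∈ W \ Q₁ ∧ v ∉ R) ∨ (v ∉ W ∧ v ∈ R ∧ v ∈ R \ Q₂) := by
    intro v hv hvQ
    have h1 := hcov hv
    have h2 : v ∈ W → v ∉ R := fun h => Finset.disjoint_left.1 hWR h
    simp only [Finset.mem_union, Finset.mem_inter, Finset.mem_sdiff] at h1 hvQ ⊢
    tauto
  refine ⟨Finset.union_subset Finset.inter_subset_right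
    (Finset.union_subset (hQ₁.trans hW) (hQ₂.trans hR)),
    fun v => if v ∈ W then 2 * lab₁ v else 2 * lab₂ v + 1, ?_, ?_⟩
  · intro u hu v hv huv
    rw [Finset.mem_sdiff] at hu hv
    rcases hsplit u hu.1 hu.2 with ⟨hu1, hu2, hu3⟩ | ⟨hu1, hu2, hu3⟩ <;>
      rcases hsplit v hv.1 hv.2 with ⟨hv1, hv2, hv3⟩ | ⟨hv1, hv2, hv3⟩
    · simp only [if_pos hu1, if_pos hv1, hl₁ u hu2 v hv2 huv]
    · exact (hno u hu1 v hv2 huv).elim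
    · exact (hno v hv1 u hu2 huv.symm).elim
    · simp only [if_neg hu1, if_neg hv1, hl₂ u hu3 v hv3 huv]
  · intro i
    rcases Nat.even_or_odd' i with ⟨k, rfl | rfl⟩
    · refine (Finset.card_le_card fun v hv => ?_).trans (hK₁ k)
      rw [Finset.mem_filter, Finset.mem_sdiff] at hv
      rcases hsplit v hv.1.1 hv.1.2 with ⟨h1, h2, h3⟩ | ⟨h1, h2, h3⟩
      · simp only [if_pos h1] at hv
        exact Finset.mem_filter.2 ⟨h2, by omega⟩
      · simp only [if_neg h1] at hv
        omega
    · refine (Finset.card_le_card fun v hv => ?_).trans (hK₂ k)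
      rw [Finset.mem_filter, Finset.mem_sdiff] at hv
      rcases hsplit v hv.1.1 hv.1.2 with ⟨h1, h2, h3⟩ | ⟨h1, h2, h3⟩
      · simp only [if_pos h1] at hv
        omega
      · simp only [if_neg h1] at hv
        exact Finset.mem_filter.2 ⟨h3, by omega⟩

/-- Graphs without a clique minor on six vertices are hyperfinite. -/
lemma exists_splitsBy (lam : ℝ) (hlam : 0 < lam) :
    ∃ K : ℕ, ∀ (V : Type) (G : SimpleGraph V), NoCliqueSix G → ∀ V₀ : Finset V,
      ∃ Q : Finset V, (Q.card : ℝ) ≤ lam * V₀.card ∧ SplitsBy G V₀ Q K := by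
  classical
  obtain ⟨N, hN1, hN⟩ := exists_separator_parameters lam hlam
  refine ⟨N, fun V G hG => ?_⟩
  have main : ∀ j : ℕ, ∀ V₀ : Finset V, (V₀.card : ℝ) ≤ (3 / 2 : ℝ) ^ j * N →
      ∃ Q : Finset V, (Q.card : ℝ) ≤ lam * (1 - 1 / ((j : ℝ) + 1)) * V₀.card ∧
        SplitsBy G V₀ Q N := by
    intro j
    induction j with
    | zero =>
      intro V₀ h
      refine ⟨∅, by simp, Finset.empty_subset _, fun _ => 0, fun _ _ _ _ _ => rfl, fun i => ?_⟩
      have : V₀.card ≤ N := by simpa using h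
      exact (Finset.card_le_card ((Finset.filter_subset _ _).trans Finset.sdiff_subset)).trans this
    | succ j ih =>
      intro V₀ h
      have hj1 : (0 : ℝ) < (j : ℝ) + 1 := by positivity
      have hmono : 1 - 1 / ((j : ℝ) + 1) ≤ 1 - 1 / (((j + 1 : ℕ) : ℝ) + 1) := by
        push_cast
        have : 1 / ((j : ℝ) + 1 + 1) ≤ 1 / ((j : ℝ) + 1) :=
          one_div_le_one_div_of_le hj1 (by linarith)
        linarith
      by_cases hle : (V₀.card : ℝ) ≤ (3 / 2 : ℝ) ^ j * N
      · obtain ⟨Q, hQ, hs⟩ := ih V₀ hle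
        refine ⟨Q, hQ.trans ?_, hs⟩
        gcongr
      · push Not at hle
        have hN1' : (1 : ℝ) ≤ N := by exact_mod_cast hN1
        have hpow : (1 : ℝ) ≤ (3 / 2 : ℝ) ^ j := one_le_pow₀ (by norm_num)
        have hNn : N ≤ V₀.card := by
          have : (N : ℝ) ≤ V₀.card := by nlinarith
          exact_mod_cast this
        obtain ⟨ℓ, ρ, hℓ, hρ, hsize⟩ := hN V₀.card hNn
        obtain ⟨Z, W, R, hcov, hW, hR, hWR, hno, hWc, hRc, hZ⟩ := hG.exists_separator hρ
        have hWc' : (3 : ℝ) * W.card ≤ 2 * V₀.card := by exact_mod_cast hWc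
        have hRc' : (3 : ℝ) * R.card ≤ 2 * V₀.card := by exact_mod_cast hRc
        rw [pow_succ] at h
        obtain ⟨Q₁, hQ₁, hs₁⟩ := ih W (by linarith)
        obtain ⟨Q₂, hQ₂, hs₂⟩ := ih R (by linarith)
        refine ⟨_, ?_, SplitsBy.union hcov hW hR hWR hno hs₁ hs₂⟩
        set n : ℝ := (V₀.card : ℝ) with hn
        have hℓ' : (0 : ℝ) < ℓ := by exact_mod_cast hℓ
        have hZ' : (Z.card : ℝ) ≤ n / ℓ + (50 * ρ + 5) := by
          have : (ℓ : ℝ) * Z.card ≤ n + ℓ * (50 * ρ + 5) := by rw [hn]; exact_mod_cast hZ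
          have h5 : n / ℓ + (50 * ρ + 5) = (n + ℓ * (50 * ρ + 5)) / ℓ := by field_simp
          rw [h5, le_div_iff₀ hℓ']
          linarith
        have hjlog : (j : ℝ) ≤ 3 * Real.log n := by
          have h6 : (3 / 2 : ℝ) ^ j ≤ n := by nlinarith
          have h7 := Real.log_le_log (by positivity) h6
          rw [Real.log_pow] at h7
          have h8 := Real.one_sub_inv_le_log_of_pos (show (0 : ℝ) < 3 / 2 by norm_num)
          have h9 : (j : ℝ) * (1 / 3) ≤ j * Real.log (3 / 2) := by
            refine mul_le_mul_of_nonneg_left ?_ (by positivity)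
            norm_num at h8 ⊢
            linarith
          linarith
        have hZ'' : (Z.card : ℝ) ≤ lam * n * (1 / ((j : ℝ) + 1) - 1 / ((j : ℝ) + 1 + 1)) := by
          have h10 : 1 / ((j : ℝ) + 1) - 1 / ((j : ℝ) + 1 + 1) =
              1 / (((j : ℝ) + 1) * (j + 2)) := by
            field_simp
            ring
          rw [h10, mul_one_div, le_div_iff₀ (by positivity)]
          have h11 : ((j : ℝ) + 1) * (j + 2) ≤ (3 * Real.log n + 2) ^ 2 := by
            nlinarith [show (0 : ℝ) ≤ j by positivity]
          calc (Z.card : ℝ) * (((j : ℝ) + 1) * (j + 2)) ≤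
              (n / ℓ + (50 * ρ + 5)) * (3 * Real.log n + 2) ^ 2 :=
                mul_le_mul hZ' h11 (by positivity) (by positivity)
            _ ≤ lam * n := hsize
        have hQc : ((((Z ∩ V₀) ∪ (Q₁ ∪ Q₂)).card : ℕ) : ℝ) ≤ Z.card + (Q₁.card + Q₂.card) := by
          have h12 := Finset.card_union_le (Z ∩ V₀) (Q₁ ∪ Q₂)
          have h13 := Finset.card_union_le Q₁ Q₂
          have h14 := Finset.card_le_card (Finset.inter_subset_left (s₁ := Z) (s₂ := V₀))
          exact_mod_cast h12.trans (by omega)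
        have hcard : (W.card : ℝ) + R.card ≤ n := by
          have := Finset.card_le_card (Finset.union_subset hW hR)
          rw [Finset.card_union_of_disjoint hWR] at this
          rw [hn]
          exact_mod_cast this
        have ha : 0 ≤ lam * (1 - 1 / ((j : ℝ) + 1)) := by
          refine mul_nonneg hlam.le ?_
          rw [sub_nonneg, div_le_one hj1]
          linarith [show (0 : ℝ) ≤ j by positivity]
        have h15 := mul_le_mul_of_nonneg_left hcard ha
        push_cast
        calc _ ≤ (Z.card : ℝ) + (Q₁.card + Q₂.card) := hQc
          _ ≤ lam * n * (1 / ((j : ℝ) + 1) - 1 / ((j : ℝ) + 1 + 1)) +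
              lam * (1 - 1 / ((j : ℝ) + 1)) * n := by linarith
          _ = lam * (1 - 1 / ((j : ℝ) + 1 + 1)) * n := by ring
  intro V₀
  obtain ⟨j, hj⟩ := pow_unbounded_of_one_lt (V₀.card : ℝ) (show (1 : ℝ) < 3 / 2 by norm_num)
  have hN1' : (1 : ℝ) ≤ N := by exact_mod_cast hN1
  obtain ⟨Q, hQ, hs⟩ := main j V₀ (by nlinarith)
  refine ⟨Q, hQ.trans ?_, hs⟩
  have : 0 ≤ 1 / ((j : ℝ) + 1) := by positivity
  have h16 : lam * (1 - 1 / ((j : ℝ) + 1)) ≤ lam := by nlinarith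
  exact mul_le_mul_of_nonneg_right h16 (by positivity)

end Hyperfinite

section Matching

variable {W : Type*} [Fintype W]

/-- The total weight of the matching encoded by `σ`; each edge is counted twice. -/
def matchingWeight (c : W → W → ℝ) (σ : W → W) : ℝ := ∑ x, c x (σ x)

/-- A maximum weight matching, encoded as an involution, all of whose edges have positive weight. -/
structure IsMaxMatching (c : W → W → ℝ) (σ : W → W) : Prop where
  invol : Function.Involutive σ
  pos : ∀ x, σ x ≠ x → 0 < c x (σ x)
  max : ∀ τ : W → W, Function.Involutive τ → matchingWeight c τ ≤ matchingWeight c σ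

/-- A symmetric nonnegative weight function vanishing on the diagonal. -/
structure IsEdgeWeight (c : W → W → ℝ) : Prop where
  nonneg : ∀ x y, 0 ≤ c x y
  symm : ∀ x y, c x y = c y x
  diag : ∀ x, c x x = 0

lemma IsEdgeWeight.exists_isMaxMatching {c : W → W → ℝ} (hc : IsEdgeWeight c) {σ : W → W}
    (hσ : Function.Involutive σ)
    (hmax : ∀ τ : W → W, Function.Involutive τ → matchingWeight c τ ≤ matchingWeight c σ) :
    ∃ τ, IsMaxMatching c τ ∧ matchingWeight c τ = matchingWeight c σ ∧
      ∀ x, τ x ≠ x → τ x = σ x := by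
  classical
  set τ : W → W := fun x => if c x (σ x) = 0 then x else σ x with hτ
  have h0 : ∀ x, c x (σ x) = 0 → τ x = x := fun x h => by simp [hτ, h]
  have h1 : ∀ x, c x (σ x) ≠ 0 → τ x = σ x := fun x h => by simp [hτ, h]
  have hinv : Function.Involutive τ := by
    intro x
    by_cases h : c x (σ x) = 0
    · rw [h0 x h, h0 x h]
    · rw [h1 x h, h1 (σ x) (by rw [hσ x, hc.symm]; exact h), hσ x]
  have hw : matchingWeight c τ = matchingWeight c σ := by
    refine Finset.sum_congr rfl fun x _ => ?_
    by_cases h : c x (σ x) = 0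
    · rw [h0 x h, h, hc.diag]
    · rw [h1 x h]
  refine ⟨τ, ⟨hinv, fun x hx => ?_, fun ρ hρ => hw ▸ hmax ρ hρ⟩, hw, fun x hx => ?_⟩
  · by_cases h : c x (σ x) = 0
    · exact (hx (h0 x h)).elim
    · rw [h1 x h]
      exact lt_of_le_of_ne (hc.nonneg _ _) (Ne.symm h)
  · by_cases h : c x (σ x) = 0
    · exact (hx (h0 x h)).elim
    · exact h1 x h

lemma IsMaxMatching.not_fixed_both {c : W → W → ℝ} (hc : IsEdgeWeight c) {σ : W → W}
    (hσ : IsMaxMatching c σ) {x y : W} (hxy : 0 < c x y) (hx : σ x = x) : σ y ≠ y := by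
  classical
  intro hy
  have hne : x ≠ y := by
    rintro rfl
    rw [hc.diag] at hxy
    exact hxy.false
  have hinv : Function.Involutive fun z => σ (Equiv.swap x y z) := by
    intro z
    have hcomm : ∀ z, σ (Equiv.swap x y z) = Equiv.swap x y (σ z) := by
      intro z
      by_cases h1 : z = x
      · subst h1
        rw [hx, Equiv.swap_apply_left, hy]
      by_cases h2 : z = y
      · subst h2
        rw [hy, Equiv.swap_apply_right, hx]
      rw [Equiv.swap_apply_of_ne_of_ne h1 h2, Equiv.swap_apply_of_ne_of_ne]
      · rw [← hx]
        exact fun h => h1 (hσ.invol.injective h)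
      · rw [← hy]
        exact fun h => h2 (hσ.invol.injective h)
    show σ (Equiv.swap x y (σ (Equiv.swap x y z))) = z
    rw [hcomm z, Equiv.swap_apply_self, hσ.invol]
  have hlt : matchingWeight c σ < matchingWeight c fun z => σ (Equiv.swap x y z) := by
    refine Finset.sum_lt_sum (fun z _ => ?_) ⟨x, Finset.mem_univ _, ?_⟩
    · by_cases h1 : z = x
      · subst h1
        rw [hx, hc.diag]
        exact hc.nonneg _ _
      by_cases h2 : z = y
      · subst h2
        rw [hy, hc.diag]
        exact hc.nonneg _ _
      simp only [Equiv.swap_apply_of_ne_of_ne h1 h2, le_refl]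
    · simp only [hx, hc.diag, Equiv.swap_apply_left, hy]
      exact hxy
  exact (hσ.max _ hinv).not_gt hlt

/-- Two maximum matchings can be exchanged along the alternating path starting at a vertex `t`
missed by the second one; it ends in at most one of two vertices missed by the first. -/
lemma IsMaxMatching.exists_fixed {c : W → W → ℝ} {σ τ : W → W}
    (hσ : IsMaxMatching c σ) (hτ : IsMaxMatching c τ) {u v t : W} (huv : u ≠ v)
    (hu : σ u = u) (hv : σ v = v) (ht : τ t = t) :
    ∃ μ, IsMaxMatching c μ ∧ μ t = t ∧ ((u ≠ t ∧ μ u = u) ∨ (v ≠ t ∧ μ v = v)) := by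
  classical
  set S : Equiv.Perm W := hσ.invol.toPerm with hS
  set T : Equiv.Perm W := hτ.invol.toPerm with hT
  have hSS : S * S = 1 := Equiv.ext fun x => hσ.invol x
  have hTT : T * T = 1 := Equiv.ext fun x => hτ.invol x
  have hSi : S⁻¹ = S := inv_eq_of_mul_eq_one_left hSS
  have hTi : T⁻¹ = T := inv_eq_of_mul_eq_one_left hTT
  set ρ : Equiv.Perm W := S * T with hρ
  have hρi : ρ⁻¹ = T * S := by rw [hρ, mul_inv_rev, hSi, hTi]
  have hTρ : ∀ k : ℤ, T * ρ ^ k = ρ ^ (-k) * T := by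
    intro k
    have h1 : T * ρ * T⁻¹ = ρ⁻¹ := by
      rw [hρi, hTi, hρ, mul_assoc, mul_assoc, hTT, mul_one]
    have h2 := conj_zpow (a := T) (b := ρ) (i := k)
    rw [h1, inv_zpow'] at h2
    rw [h2, mul_assoc, mul_assoc, inv_mul_cancel, mul_one]
  have hTt : T t = t := ht
  have hTP : ∀ k : ℤ, τ ((ρ ^ k) t) = (ρ ^ (-k)) t := by
    intro k
    have h := congrArg (fun f : Equiv.Perm W => f t) (hTρ k)
    simp only [Equiv.Perm.mul_apply, hTt] at h
    exact h
  have hSP : ∀ k : ℤ, σ ((ρ ^ k) t) = (ρ ^ (1 - k)) t := by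
    intro k
    have h1 : S * ρ ^ k = ρ ^ (1 - k) * T := by
      have h3 : S = ρ * T := by rw [hρ, mul_assoc, hTT, mul_one]
      rw [h3, mul_assoc, hTρ, ← mul_assoc, ← zpow_one_add, sub_eq_add_neg]
    have h := congrArg (fun f : Equiv.Perm W => f t) h1
    simp only [Equiv.Perm.mul_apply, hTt] at h
    exact h
  set P : Set W := {x | ∃ k : ℤ, x = (ρ ^ k) t} with hP
  have hσP : ∀ x, σ x ∈ P ↔ x ∈ P := by
    have h : ∀ x, x ∈ P → σ x ∈ P := by
      rintro x ⟨k, rfl⟩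
      exact ⟨1 - k, hSP k⟩
    exact fun x => ⟨fun hx => by simpa [hσ.invol x] using h _ hx, h x⟩
  have hτP : ∀ x, τ x ∈ P ↔ x ∈ P := by
    have h : ∀ x, x ∈ P → τ x ∈ P := by
      rintro x ⟨k, rfl⟩
      exact ⟨-k, hTP k⟩
    exact fun x => ⟨fun hx => by simpa [hτ.invol x] using h _ hx, h x⟩
  have htP : t ∈ P := ⟨0, by simp⟩
  have hnot : u ∉ P ∨ v ∉ P := by
    by_contra hcon
    push Not at hcon
    obtain ⟨⟨a, ha⟩, b, hb⟩ := hcon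
    have key : ∀ (a : ℤ) (x : W), x = (ρ ^ a) t → σ x = x →
        ρ ^ (2 * a - 1) ∈ MulAction.stabilizer (Equiv.Perm W) t := by
      intro a x hx hfix
      rw [hx, hSP] at hfix
      rw [MulAction.mem_stabilizer_iff, Equiv.Perm.smul_def]
      have h1 : 2 * a - 1 = -(1 - a) + a := by ring
      rw [h1, zpow_add, Equiv.Perm.mul_apply, ← hfix, ← Equiv.Perm.mul_apply, ← zpow_add]
      simp
    have hA := key a u ha hu
    have hB := key b v hb hv
    have hAB := Subgroup.mul_mem _ (Subgroup.zpow_mem _ hA b) (Subgroup.zpow_mem _ hB (-a))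
    have hAB' : ρ ^ (a - b) ∈ MulAction.stabilizer (Equiv.Perm W) t := by
      rw [← zpow_mul, ← zpow_mul, ← zpow_add] at hAB
      have : (2 * a - 1) * b + (2 * b - 1) * -a = a - b := by ring
      rwa [this] at hAB
    rw [MulAction.mem_stabilizer_iff, Equiv.Perm.smul_def] at hAB'
    refine huv ?_
    have h1 : a = b + (a - b) := by ring
    rw [ha, hb, h1, zpow_add, Equiv.Perm.mul_apply, hAB']
  set μ : W → W := fun x => if x ∈ P then τ x else σ x with hμ
  set κ : W → W := fun x => if x ∈ P then σ x else τ x with hκ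
  have hμi : Function.Involutive μ := by
    intro x
    by_cases hx : x ∈ P
    · simp only [hμ, if_pos hx, if_pos ((hτP x).2 hx), hτ.invol x]
    · simp only [hμ, if_neg hx, if_neg (mt (hσP x).1 hx), hσ.invol x]
  have hκi : Function.Involutive κ := by
    intro x
    by_cases hx : x ∈ P
    · simp only [hκ, if_pos hx, if_pos ((hσP x).2 hx), hσ.invol x]
    · simp only [hκ, if_neg hx, if_neg (mt (hτP x).1 hx), hτ.invol x]
  have hsum : matchingWeight c μ + matchingWeight c κ =
      matchingWeight c σ + matchingWeight c τ := by
    simp only [matchingWeight, ← Finset.sum_add_distrib]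
    refine Finset.sum_congr rfl fun x _ => ?_
    by_cases hx : x ∈ P
    · simp only [hμ, hκ, if_pos hx, add_comm]
    · simp only [hμ, hκ, if_neg hx]
  have h1 := hτ.max κ hκi
  refine ⟨μ, ⟨hμi, fun x => ?_, fun ω hω => ?_⟩, ?_, ?_⟩
  · by_cases hx : x ∈ P
    · simpa only [hμ, if_pos hx] using hτ.pos x
    · simpa only [hμ, if_neg hx] using hσ.pos x
  · have h2 := hσ.max ω hω
    linarith
  · simp only [hμ, if_pos htP, ht]
  · rcases hnot with h | h
    · exact Or.inl ⟨fun h' => h (h' ▸ htP), by simp only [hμ, if_neg h, hu]⟩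
    · exact Or.inr ⟨fun h' => h (h' ▸ htP), by simp only [hμ, if_neg h, hv]⟩

open scoped Classical in
/-- For nonzero weights there is a set `D` of positive pairs which every maximum matching meets
at least as often as `q` does. -/
lemma IsEdgeWeight.exists_tight_pairs {c : W → W → ℝ} (hc : IsEdgeWeight c)
    (hne : ∃ x y, 0 < c x y) {q : W → W → ℝ}
    (hq : ∀ x y, 0 ≤ q x y) (hqs : ∀ x y, q x y = q y x) (hq1 : ∀ x, ∑ y, q x y ≤ 1)
    (hodd : ∀ Y : Finset W, 3 ≤ Y.card → ∑ x ∈ Y, ∑ y ∈ Y, q x y ≤ Y.card - 1) :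
    ∃ D : Finset (W × W), D.Nonempty ∧ (∀ p ∈ D, 0 < c p.1 p.2) ∧
      (∀ x y, (x, y) ∈ D → (y, x) ∈ D) ∧
      ∀ σ, IsMaxMatching c σ →
        ∑ p ∈ D, q p.1 p.2 ≤ (Finset.univ.filter fun x => σ x ≠ x ∧ (x, σ x) ∈ D).card := by
  by_cases hcov : ∃ v, ∀ σ, IsMaxMatching c σ → σ v ≠ v
  · obtain ⟨v, hv⟩ := hcov
    by_cases hv0 : ∃ σ, IsMaxMatching c σ
    · obtain ⟨σ₀, hσ₀⟩ := hv0
      refine ⟨Finset.univ.filter fun p => 0 < c p.1 p.2 ∧ (p.1 = v ∨ p.2 = v),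
        ⟨(v, σ₀ v), ?_⟩, ?_, ?_, ?_⟩
      · simpa using hσ₀.pos v (hv σ₀ hσ₀)
      · intro p hp
        exact (Finset.mem_filter.1 hp).2.1
      · intro x y hxy
        simp only [Finset.mem_filter, Finset.mem_univ, true_and] at hxy ⊢
        exact ⟨by rw [hc.symm]; exact hxy.1, hxy.2.symm⟩
      · intro σ hσ
        have hvσ := hv σ hσ
        have h2 : (2 : ℕ) ≤ (Finset.univ.filter fun x => σ x ≠ x ∧
            (x, σ x) ∈ Finset.univ.filter fun p : W × W =>
              0 < c p.1 p.2 ∧ (p.1 = v ∨ p.2 = v)).card := by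
          rw [← Finset.card_pair hvσ]
          refine Finset.card_le_card fun x hx => ?_
          simp only [Finset.mem_insert, Finset.mem_singleton] at hx
          simp only [Finset.mem_filter, Finset.mem_univ, true_and]
          have hp := hσ.pos v hvσ
          rcases hx with rfl | rfl
          · rw [hσ.invol v]
            exact ⟨hvσ.symm, by rw [hc.symm]; exact hp, Or.inr rfl⟩
          · exact ⟨hvσ, hp, Or.inl rfl⟩
        refine le_trans ?_ (Nat.cast_le.2 h2)
        have hsub : (Finset.univ.filter fun p : W × W => 0 < c p.1 p.2 ∧ (p.1 = v ∨ p.2 = v)) ⊆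
            (Finset.univ.image fun y => (v, y)) ∪ (Finset.univ.image fun y => (y, v)) := by
          rintro ⟨x, y⟩ hp
          simp only [Finset.mem_filter, Finset.mem_univ, true_and] at hp
          simp only [Finset.mem_union, Finset.mem_image, Finset.mem_univ, true_and, Prod.mk.injEq]
          rcases hp.2 with rfl | rfl
          · exact Or.inl ⟨y, rfl, rfl⟩
          · exact Or.inr ⟨x, rfl, rfl⟩
        have hle := Finset.sum_le_sum_of_subset_of_nonneg (f := fun p : W × W => q p.1 p.2) hsub
          (fun p _ _ => hq _ _)
        have hle2 : ∑ p ∈ (Finset.univ.image fun y => (v, y)) ∪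
            (Finset.univ.image fun y => (y, v)), q p.1 p.2 ≤
            ∑ p ∈ (Finset.univ.image fun y => (v, y)), q p.1 p.2 +
            ∑ p ∈ (Finset.univ.image fun y => (y, v)), q p.1 p.2 := by
          rw [← Finset.sum_union_inter]
          exact le_add_of_nonneg_right (Finset.sum_nonneg fun p _ => hq _ _)
        rw [Finset.sum_image (by intro a _ b _ h; exact (Prod.mk.inj h).2),
          Finset.sum_image (by intro a _ b _ h; exact (Prod.mk.inj h).1)] at hle2
        have h3 : ∑ y, q y v = ∑ y, q v y := Finset.sum_congr rfl fun y _ => hqs _ _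
        have h4 := hq1 v
        push_cast
        simp only at hle2
        linarith
    · obtain ⟨x, y, hxy⟩ := hne
      refine ⟨{(x, y), (y, x)}, ⟨(x, y), by simp⟩, ?_, ?_, fun σ hσ => (hv0 ⟨σ, hσ⟩).elim⟩
      · intro p hp
        simp only [Finset.mem_insert, Finset.mem_singleton] at hp
        rcases hp with rfl | rfl
        · exact hxy
        · rw [hc.symm]; exact hxy
      · intro a b hab
        simp only [Finset.mem_insert, Finset.mem_singleton, Prod.mk.injEq] at hab ⊢
        tauto
  · push Not at hcov
    set r : W → W → Prop := fun u v => u = v ∨ ∀ σ, IsMaxMatching c σ → σ u = u → σ v ≠ v with hr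
    have hrsymm : ∀ u v, r u v → r v u := by
      rintro u v (h | h)
      · exact Or.inl h.symm
      · exact Or.inr fun σ hσ hv hu => h σ hσ hu hv
    have hrtrans : ∀ u t v, r u t → r t v → r u v := by
      intro u t v hut htv
      by_contra hcon
      simp only [hr, not_or] at hcon
      obtain ⟨hne, hex⟩ := hcon
      push Not at hex
      obtain ⟨σ, hσ, hu, hv⟩ := hex
      obtain ⟨τ, hτ, ht⟩ := hcov t
      obtain ⟨μ, hμ, hμt, ⟨h1, h2⟩ | ⟨h1, h2⟩⟩ := hσ.exists_fixed hτ hne hu hv ht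
      · rcases hut with h | h
        · exact h1 h
        · exact h μ hμ h2 hμt
      · rcases htv with h | h
        · exact h1 h.symm
        · exact h μ hμ hμt h2
    have hrpos : ∀ u v, 0 < c u v → r u v := fun u v huv =>
      Or.inr fun σ hσ hu => hσ.not_fixed_both hc huv hu
    obtain ⟨x₀, y₀, hxy⟩ := hne
    set Y : Finset W := Finset.univ.filter fun y => r x₀ y with hY
    have hmemY : ∀ y, y ∈ Y ↔ r x₀ y := fun y => by simp [hY]
    have hx₀ : x₀ ∈ Y := (hmemY _).2 (Or.inl rfl)
    have hy₀ : y₀ ∈ Y := (hmemY _).2 (hrpos _ _ hxy)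
    have hx0y0 : x₀ ≠ y₀ := by
      rintro rfl
      rw [hc.diag] at hxy
      exact hxy.false
    have hclosed : ∀ σ, IsMaxMatching c σ → ∀ x ∈ Y, σ x ≠ x → σ x ∈ Y := by
      intro σ hσ x hx hfix
      exact (hmemY _).2 (hrtrans _ _ _ ((hmemY _).1 hx) (hrpos _ _ (hσ.pos x hfix)))
    have hmiss : ∀ σ, IsMaxMatching c σ → ∀ u ∈ Y, ∀ v ∈ Y, σ u = u → σ v = v → u = v := by
      intro σ hσ u hu v hv h1 h2
      rcases hrtrans _ _ _ (hrsymm _ _ ((hmemY _).1 hu)) ((hmemY _).1 hv) with h | h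
      · exact h
      · exact (h σ hσ h1 h2).elim
    have hcard : 3 ≤ Y.card := by
      by_contra hlt
      obtain ⟨σ, hσ, hfix⟩ := hcov x₀
      have hYeq : Y = {x₀, y₀} := by
        symm
        refine Finset.eq_of_subset_of_card_le ?_ ?_
        · intro z hz
          simp only [Finset.mem_insert, Finset.mem_singleton] at hz
          rcases hz with rfl | rfl
          · exact hx₀
          · exact hy₀
        · rw [Finset.card_pair hx0y0]
          omega
      have hy0 : σ y₀ ≠ y₀ := hσ.not_fixed_both hc hxy hfix
      have hmem := hclosed σ hσ y₀ hy₀ hy0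
      rw [hYeq, Finset.mem_insert, Finset.mem_singleton] at hmem
      rcases hmem with h | h
      · have := hσ.invol y₀
        rw [h, hfix] at this
        exact hx0y0 this
      · exact hy0 h
    refine ⟨(Y ×ˢ Y).filter fun p => 0 < c p.1 p.2, ⟨(x₀, y₀), ?_⟩, ?_, ?_, ?_⟩
    · simp [hx₀, hy₀, hxy]
    · intro p hp
      exact (Finset.mem_filter.1 hp).2
    · intro x y hp
      simp only [Finset.mem_filter, Finset.mem_product] at hp ⊢
      exact ⟨hp.1.symm, by rw [hc.symm]; exact hp.2⟩
    · intro σ hσ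
      have h1 : ∑ p ∈ (Y ×ˢ Y).filter (fun p => 0 < c p.1 p.2), q p.1 p.2 ≤ (Y.card : ℝ) - 1 := by
        refine le_trans ?_ (hodd Y hcard)
        rw [← Finset.sum_product' (f := q)]
        exact Finset.sum_le_sum_of_subset_of_nonneg (Finset.filter_subset _ _)
          fun p _ _ => hq _ _
      refine h1.trans ?_
      have h2 : (Y.filter fun x => σ x = x).card ≤ 1 := by
        rw [Finset.card_le_one]
        intro a ha b hb
        rw [Finset.mem_filter] at ha hb
        exact hmiss σ hσ a ha.1 b hb.1 ha.2 hb.2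
      have h3 := Finset.card_filter_add_card_filter_not (s := Y) (fun x => σ x = x)
      have h4 : (Y.filter fun x => ¬ σ x = x).card ≤ (Finset.univ.filter fun x => σ x ≠ x ∧
          (x, σ x) ∈ (Y ×ˢ Y).filter fun p => 0 < c p.1 p.2).card := by
        refine Finset.card_le_card fun x hx => ?_
        rw [Finset.mem_filter] at hx
        simp only [Finset.mem_filter, Finset.mem_univ, true_and, Finset.mem_product]
        exact ⟨hx.2, ⟨hx.1, hclosed σ hσ x hx.1 hx.2⟩, hσ.pos x hx.2⟩
      have h5 : Y.card ≤ (Finset.univ.filter fun x => σ x ≠ x ∧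
          (x, σ x) ∈ (Y ×ˢ Y).filter fun p => 0 < c p.1 p.2).card + 1 := by omega
      have h6 : (Y.card : ℝ) ≤ (Finset.univ.filter fun x => σ x ≠ x ∧
          (x, σ x) ∈ (Y ×ˢ Y).filter fun p => 0 < c p.1 p.2).card + 1 := by exact_mod_cast h5
      linarith

/-- A weak form of Edmonds' matching polytope theorem: a symmetric `q` satisfying the degree
constraints and slightly strengthened odd set constraints is dominated by matchings in every
direction `c`. -/
theorem IsEdgeWeight.exists_matching {c : W → W → ℝ} (hc : IsEdgeWeight c) {q : W → W → ℝ}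
    (hq : ∀ x y, 0 ≤ q x y) (hqs : ∀ x y, q x y = q y x) (hq1 : ∀ x, ∑ y, q x y ≤ 1)
    (hodd : ∀ Y : Finset W, 3 ≤ Y.card → ∑ x ∈ Y, ∑ y ∈ Y, q x y ≤ Y.card - 1) :
    ∃ σ : W → W, Function.Involutive σ ∧ ∑ x, ∑ y, c x y * q x y ≤ matchingWeight c σ := by
  classical
  by_contra hcon
  push Not at hcon
  set I : Finset (W → W) := Finset.univ.filter Function.Involutive with hI
  have hmemI : ∀ σ, σ ∈ I ↔ Function.Involutive σ := fun σ => by simp [hI]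
  have hIne : I.Nonempty := ⟨id, (hmemI _).2 fun x => rfl⟩
  set ν : (W → W → ℝ) → ℝ := fun d => I.sup' hIne fun σ => matchingWeight d σ with hν
  have hνle : ∀ d σ, Function.Involutive σ → matchingWeight d σ ≤ ν d := fun d σ hσ =>
    Finset.le_sup' (fun σ => matchingWeight d σ) ((hmemI σ).2 hσ)
  have hνex : ∀ d, ∃ σ, Function.Involutive σ ∧ ν d = matchingWeight d σ := by
    intro d
    obtain ⟨σ, hσ, h⟩ := Finset.exists_mem_eq_sup' hIne fun σ => matchingWeight d σ
    exact ⟨σ, (hmemI σ).1 hσ, h⟩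
  set tot : (W → W → ℝ) → ℝ := fun d => ∑ x, ∑ y, d x y with htot
  set dot : (W → W → ℝ) → ℝ := fun d => ∑ x, ∑ y, d x y * q x y with hdot
  obtain ⟨σ₀, hσ₀, hνc⟩ := hνex c
  have hg : ν c < dot c := hνc ▸ hcon σ₀ hσ₀
  have htc : 0 ≤ tot c := Finset.sum_nonneg fun x _ => Finset.sum_nonneg fun y _ => hc.nonneg x y
  obtain ⟨θ, hθ, hθc⟩ : ∃ θ > 0, ν c - dot c + θ * tot c < 0 := by
    refine ⟨(dot c - ν c) / (2 * (1 + tot c)), by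
      have : 0 < dot c - ν c := by linarith
      positivity, ?_⟩
    have h1 : (dot c - ν c) / (2 * (1 + tot c)) * tot c ≤ (dot c - ν c) / 2 := by
      rw [div_mul_eq_mul_div, div_le_iff₀ (by positivity)]
      nlinarith
    linarith
  set F : (W → W → ℝ) → ℝ := fun d => ν d - dot d + θ * tot d with hF
  set S : Set (W → W → ℝ) := {d | IsEdgeWeight d ∧ ∀ x y, d x y ≤ c x y} with hS
  have hcont : Continuous F := by
    have h1 : Continuous ν := by
      refine Continuous.finset_sup'_apply hIne fun σ _ => ?_
      unfold matchingWeight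
      fun_prop
    have h2 : Continuous dot := by fun_prop
    have h3 : Continuous tot := by fun_prop
    fun_prop
  have hSc : IsCompact S := by
    have hbox : IsCompact (Set.univ.pi fun x : W => Set.univ.pi fun y : W =>
        Set.Icc (0 : ℝ) (c x y)) :=
      isCompact_univ_pi fun x => isCompact_univ_pi fun y => isCompact_Icc
    refine hbox.of_isClosed_subset ?_ ?_
    · have : S = (⋂ x, ⋂ y, {d : W → W → ℝ | 0 ≤ d x y}) ∩ (⋂ x, ⋂ y, {d | d x y = d y x}) ∩
          (⋂ x, {d | d x x = 0}) ∩ ⋂ x, ⋂ y, {d | d x y ≤ c x y} := by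
        ext d
        simp only [hS, Set.mem_ofPred_eq, Set.mem_inter_iff, Set.mem_iInter]
        exact ⟨fun h => ⟨⟨⟨h.1.nonneg, h.1.symm⟩, h.1.diag⟩, h.2⟩,
          fun h => ⟨⟨h.1.1.1, h.1.1.2, h.1.2⟩, h.2⟩⟩
      rw [this]
      refine IsClosed.inter (IsClosed.inter (IsClosed.inter ?_ ?_) ?_) ?_
      · exact isClosed_iInter fun x => isClosed_iInter fun y =>
          isClosed_le continuous_const (by fun_prop)
      · exact isClosed_iInter fun x => isClosed_iInter fun y =>
          isClosed_eq (by fun_prop) (by fun_prop)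
      · exact isClosed_iInter fun x => isClosed_eq (by fun_prop) continuous_const
      · exact isClosed_iInter fun x => isClosed_iInter fun y =>
          isClosed_le (by fun_prop) continuous_const
    · intro d hd
      simp only [Set.mem_univ_pi]
      exact fun x y => ⟨hd.1.nonneg x y, hd.2 x y⟩
  obtain ⟨d, hdS, hdmin⟩ := hSc.exists_isMinOn ⟨c, hc, fun _ _ => le_rfl⟩ hcont.continuousOn
  obtain ⟨hd, hdc⟩ := hdS
  have hFd : F d < 0 := lt_of_le_of_lt (hdmin ⟨hc, fun _ _ => le_rfl⟩) hθc
  have hne : ∃ x y, 0 < d x y := by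
    by_contra hzero
    push Not at hzero
    have h0 : ∀ x y, d x y = 0 := fun x y => le_antisymm (hzero x y) (hd.nonneg x y)
    have h1 : 0 ≤ ν d := by
      have := hνle d id fun x => rfl
      simpa [matchingWeight, h0] using this
    have h2 : dot d = 0 := by simp [hdot, h0]
    have h3 : tot d = 0 := by simp [htot, h0]
    have : F d = ν d := by simp [hF, h2, h3]
    linarith
  obtain ⟨D, hDne, hDpos, hDsymm, hDcount⟩ := hd.exists_tight_pairs hne hq hqs hq1 hodd
  have hev : ∀ᶠ δ : ℝ in nhdsWithin 0 (Set.Ioi 0), 0 < δ ∧ (∀ p ∈ D, δ ≤ d p.1 p.2) ∧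
      ∀ σ ∈ I, matchingWeight d σ < ν d →
        δ * ∑ p ∈ D, q p.1 p.2 ≤ ν d - matchingWeight d σ := by
    refine Filter.Eventually.and self_mem_nhdsWithin (Filter.Eventually.and ?_ ?_)
    · rw [Filter.eventually_all_finset]
      exact fun p hp => nhdsWithin_le_nhds (eventually_le_nhds (hDpos p hp))
    · rw [Filter.eventually_all_finset]
      intro σ _
      by_cases hlt : matchingWeight d σ < ν d
      · have ht : Filter.Tendsto (fun δ : ℝ => δ * ∑ p ∈ D, q p.1 p.2)
            (nhdsWithin 0 (Set.Ioi 0)) (nhds (0 * ∑ p ∈ D, q p.1 p.2)) :=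
          (Filter.tendsto_id.mul_const _).mono_left nhdsWithin_le_nhds
        rw [zero_mul] at ht
        filter_upwards [ht.eventually (eventually_le_nhds (sub_pos.2 hlt))] with δ hδ _ using hδ
      · exact Filter.Eventually.of_forall fun δ h => (hlt h).elim
  obtain ⟨δ, hδ, hδD, hδI⟩ := hev.exists
  set d' : W → W → ℝ := fun x y => d x y - if (x, y) ∈ D then δ else 0 with hd'
  have hd'le : ∀ x y, d' x y ≤ d x y := by
    intro x y
    simp only [hd']
    split_ifs <;> linarith
  have hd'E : IsEdgeWeight d' := by
    refine ⟨fun x y => ?_, fun x y => ?_, fun x => ?_⟩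
    · simp only [hd']
      split_ifs with h
      · linarith [hδD _ h]
      · linarith [hd.nonneg x y]
    · simp only [hd', hd.symm x y, show (x, y) ∈ D ↔ (y, x) ∈ D from ⟨hDsymm _ _, hDsymm _ _⟩]
    · have : (x, x) ∉ D := fun h => by
        have := hDpos _ h
        simp [hd.diag] at this
      simp [hd', this, hd.diag]
  have hsumD : ∀ f : W → W → ℝ, ∑ x, ∑ y, (if (x, y) ∈ D then f x y else 0) =
      ∑ p ∈ D, f p.1 p.2 := by
    intro f
    rw [← Finset.sum_product' (f := fun x y => if (x, y) ∈ D then f x y else 0),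
      Finset.univ_product_univ, Finset.sum_ite_mem, Finset.univ_inter]
  have hdot' : dot d' = dot d - δ * ∑ p ∈ D, q p.1 p.2 := by
    have h1 : ∀ x y, d' x y * q x y =
        d x y * q x y - if (x, y) ∈ D then δ * q x y else 0 := by
      intro x y
      simp only [hd']
      split_ifs <;> ring
    simp only [hdot, h1, Finset.sum_sub_distrib, hsumD fun x y => δ * q x y, Finset.mul_sum]
  have htot' : tot d' < tot d := by
    have h1 : tot d' = tot d - ∑ p ∈ D, δ := by
      simp only [htot, hd', Finset.sum_sub_distrib, hsumD fun _ _ => δ]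
    have h2 : 0 < ∑ p ∈ D, δ := Finset.sum_pos (fun _ _ => hδ) hDne
    linarith
  have hν' : ν d' ≤ ν d - δ * ∑ p ∈ D, q p.1 p.2 := by
    obtain ⟨σ, hσ, hσν⟩ := hνex d'
    rw [hσν]
    have hle : matchingWeight d' σ ≤ matchingWeight d σ :=
      Finset.sum_le_sum fun x _ => hd'le _ _
    rcases (hνle d σ hσ).lt_or_eq with hlt | heq
    · linarith [hδI σ ((hmemI σ).2 hσ) hlt]
    · obtain ⟨τ, hτ, -, hτσ⟩ := hd.exists_isMaxMatching hσ fun ω hω => heq ▸ hνle d ω hω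
      have h1 : matchingWeight d' σ = matchingWeight d σ -
          ((Finset.univ.filter fun x => (x, σ x) ∈ D).card : ℝ) * δ := by
        simp only [matchingWeight, hd', Finset.sum_sub_distrib, ← Finset.sum_filter,
          Finset.sum_const, nsmul_eq_mul]
      have h2 : (Finset.univ.filter fun x => τ x ≠ x ∧ (x, τ x) ∈ D).card ≤
          (Finset.univ.filter fun x => (x, σ x) ∈ D).card := by
        refine Finset.card_le_card fun x hx => ?_
        simp only [Finset.mem_filter, Finset.mem_univ, true_and] at hx ⊢
        rw [← hτσ x hx.1]
        exact hx.2
      have h3 : ∑ p ∈ D, q p.1 p.2 ≤ ((Finset.univ.filter fun x => (x, σ x) ∈ D).card : ℝ) :=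
        (hDcount τ hτ).trans (by exact_mod_cast h2)
      have h4 := mul_le_mul_of_nonneg_left h3 hδ.le
      linarith
  have hlast : F d ≤ F d' := hdmin ⟨hd'E, fun x y => (hd'le x y).trans (hdc x y)⟩
  have h5 := mul_lt_mul_of_pos_left htot' hθ
  simp only [hF] at hlast
  linarith

end Matching

section Potential

variable {W ι : Type*} [Fintype W]

/-- `q` satisfies the degree constraints and the strengthened odd set constraints. -/
structure IsFractionalMatching (q : W → W → ℝ) : Prop where
  nonneg : ∀ x y, 0 ≤ q x y
  symm : ∀ x y, q x y = q y x
  sum_le : ∀ x, ∑ y, q x y ≤ 1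
  odd : ∀ Y : Finset W, 3 ≤ Y.card → ∑ x ∈ Y, ∑ y ∈ Y, q x y ≤ Y.card - 1

open scoped Classical in
lemma IsFractionalMatching.exists_involutive {q : W → W → ℝ} (hq : IsFractionalMatching q)
    (R : Finset ι) (a b : ι → W) (hab : ∀ v ∈ R, a v ≠ b v) (Φ : ι → ℝ) (hΦ : ∀ v, 0 ≤ Φ v) :
    ∃ σ : W → W, Function.Involutive σ ∧
      ∑ v ∈ R, Φ v * q (a v) (b v) ≤ ∑ v ∈ R, if σ (a v) = b v then Φ v else 0 := by
  set c : W → W → ℝ := fun x y => ∑ v ∈ R, ((if a v = x ∧ b v = y then Φ v else 0) +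
    if b v = x ∧ a v = y then Φ v else 0) with hc
  have hcE : IsEdgeWeight c := by
    refine ⟨fun x y => Finset.sum_nonneg fun v _ => ?_, fun x y => ?_, fun x => ?_⟩
    · have := hΦ v
      split_ifs <;> simp [this]
    · refine Finset.sum_congr rfl fun v _ => ?_
      rw [add_comm]
      simp only [and_comm]
    · refine Finset.sum_eq_zero fun v hv => ?_
      have := hab v hv
      rw [if_neg, if_neg, add_zero]
      · rintro ⟨h1, h2⟩
        exact this (h2.trans h1.symm)
      · rintro ⟨h1, h2⟩
        exact this (h1.trans h2.symm)
  obtain ⟨σ, hσ, hle⟩ := hcE.exists_matching hq.nonneg hq.symm hq.sum_le hq.odd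
  refine ⟨σ, hσ, ?_⟩
  have h1 : ∑ x, ∑ y, c x y * q x y = 2 * ∑ v ∈ R, Φ v * q (a v) (b v) := by
    have key : ∀ (a b : ι → W), ∑ x, ∑ y, ∑ v ∈ R,
        (if a v = x ∧ b v = y then Φ v else 0) * q x y = ∑ v ∈ R, Φ v * q (a v) (b v) := by
      intro a b
      calc _ = ∑ v ∈ R, ∑ x, ∑ y, (if a v = x ∧ b v = y then Φ v else 0) * q x y := by
            exact (Finset.sum_congr rfl fun x _ => Finset.sum_comm).trans Finset.sum_comm
        _ = _ := by
          refine Finset.sum_congr rfl fun v _ => ?_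
          simp only [ite_mul, zero_mul, ite_and]
          rw [Finset.sum_eq_single (a v)]
          · simp
          · intro x _ hx
            simp [Ne.symm hx]
          · simp
    simp only [hc, Finset.sum_mul, add_mul, Finset.sum_add_distrib]
    rw [key a b, key b a, two_mul]
    congr 1
    exact Finset.sum_congr rfl fun v _ => by rw [hq.symm]
  have h2 : matchingWeight c σ = 2 * ∑ v ∈ R, if σ (a v) = b v then Φ v else 0 := by
    have key : ∀ (a b : ι → W), ∑ x, ∑ v ∈ R,
        (if a v = x ∧ b v = σ x then Φ v else 0) =
          ∑ v ∈ R, if b v = σ (a v) then Φ v else 0 := by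
      intro a b
      rw [Finset.sum_comm]
      refine Finset.sum_congr rfl fun v _ => ?_
      simp only [ite_and, Finset.sum_ite_eq, Finset.mem_univ, if_true]
    simp only [matchingWeight, hc, Finset.sum_add_distrib]
    rw [key a b, key b a, two_mul]
    congr 1
    · exact Finset.sum_congr rfl fun v _ => by simp only [eq_comm]
    · refine Finset.sum_congr rfl fun v _ => ?_
      have : a v = σ (b v) ↔ σ (a v) = b v := by
        constructor
        · intro h; rw [h, hσ]
        · intro h; rw [← h, hσ]
      simp only [this]
  linarith

open scoped Classical in
lemma IsFractionalMatching.exists_matchings_potential {q : W → W → ℝ}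
    (hq : IsFractionalMatching q) (R : Finset ι) (a b : ι → W) (hab : ∀ v ∈ R, a v ≠ b v)
    (L : ι → Finset ℤ) {t : ℝ} (ht : 0 ≤ t) (Γ : Finset ℤ) :
    ∃ M : ℤ → W → W, (∀ γ, Function.Involutive (M γ)) ∧
      ∑ v ∈ R, Real.exp (-t * ((L v ∩ Γ).filter fun γ => M γ (a v) = b v).card +
        (1 - Real.exp (-t)) * q (a v) (b v) * (L v ∩ Γ).card) ≤ R.card := by
  induction Γ using Finset.induction_on with
  | empty => exact ⟨fun _ => id, fun _ _ => rfl, by simp⟩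
  | insert γ Γ hγ ih =>
    obtain ⟨M, hM, hsum⟩ := ih
    set s : ℝ := 1 - Real.exp (-t) with hs
    set Φ : ι → ℝ := fun v => Real.exp (-t * ((L v ∩ Γ).filter fun γ => M γ (a v) = b v).card +
        s * q (a v) (b v) * (L v ∩ Γ).card) with hΦ
    obtain ⟨σ, hσ, hle⟩ := hq.exists_involutive (R.filter fun v => γ ∈ L v) a b
      (fun v hv => hab v (Finset.mem_filter.1 hv).1)
      (fun v => Φ v * Real.exp (s * q (a v) (b v))) (fun v => by positivity)
    refine ⟨Function.update M γ σ, fun γ' => ?_, le_trans ?_ hsum⟩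
    · by_cases h : γ' = γ
      · subst h
        rwa [Function.update_self]
      · rw [Function.update_of_ne h]
        exact hM γ'
    have hfilter : ∀ v, ((L v ∩ Γ).filter fun γ' => Function.update M γ σ γ' (a v) = b v) =
        (L v ∩ Γ).filter fun γ' => M γ' (a v) = b v := by
      intro v
      refine Finset.filter_congr fun γ' hγ' => ?_
      rw [Function.update_of_ne]
      rintro rfl
      exact hγ (Finset.mem_inter.1 hγ').2
    have hnot : ∀ v, γ ∉ L v ∩ Γ := fun v h => hγ (Finset.mem_inter.1 h).2
    have hterm : ∀ v, Real.exp (-t * ((L v ∩ insert γ Γ).filter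
          fun γ' => Function.update M γ σ γ' (a v) = b v).card +
        s * q (a v) (b v) * (L v ∩ insert γ Γ).card) = if γ ∈ L v then
        Φ v * Real.exp (s * q (a v) (b v)) -
          s * (if σ (a v) = b v then Φ v * Real.exp (s * q (a v) (b v)) else 0) else Φ v := by
      intro v
      by_cases hv : γ ∈ L v
      · rw [if_pos hv, Finset.inter_insert_of_mem hv, Finset.card_insert_of_notMem (hnot v),
          Finset.filter_insert, Function.update_self, hfilter]
        by_cases hhit : σ (a v) = b v
        · rw [if_pos hhit, if_pos hhit,
            Finset.card_insert_of_notMem fun h => hnot v (Finset.mem_filter.1 h).1]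
          have hexp : Φ v * Real.exp (s * q (a v) (b v)) -
              s * (Φ v * Real.exp (s * q (a v) (b v))) =
              Real.exp (-t) * (Φ v * Real.exp (s * q (a v) (b v))) := by rw [hs]; ring
          rw [hexp]
          simp only [hΦ, ← Real.exp_add]
          congr 1
          push_cast
          ring
        · rw [if_neg hhit, if_neg hhit, mul_zero, sub_zero]
          simp only [hΦ, ← Real.exp_add]
          congr 1
          push_cast
          ring
      · rw [if_neg hv, Finset.inter_insert_of_notMem hv, hfilter]
    have hs0 : 0 ≤ s := by
      rw [hs, sub_nonneg, Real.exp_le_one_iff]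
      linarith
    have hexp1 : ∀ y : ℝ, Real.exp y * (1 - y) ≤ 1 := by
      intro y
      calc Real.exp y * (1 - y) ≤ Real.exp y * Real.exp (-y) := by
            gcongr
            linarith [Real.add_one_le_exp (-y)]
        _ = 1 := by rw [← Real.exp_add]; simp
    simp only [hterm]
    rw [Finset.sum_ite, Finset.sum_sub_distrib, ← Finset.mul_sum,
      ← Finset.sum_filter_add_sum_filter_not R (fun v => γ ∈ L v) Φ]
    refine add_le_add_left ?_ _
    have h1 := mul_le_mul_of_nonneg_left hle hs0
    rw [Finset.mul_sum] at h1
    have h2 : ∑ v ∈ R with γ ∈ L v, Φ v * Real.exp (s * q (a v) (b v)) ≤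
        ∑ v ∈ R with γ ∈ L v, Φ v +
        ∑ v ∈ R with γ ∈ L v, s * (Φ v * Real.exp (s * q (a v) (b v)) * q (a v) (b v)) := by
      rw [← Finset.sum_add_distrib]
      refine Finset.sum_le_sum fun v _ => ?_
      have h3 := mul_le_mul_of_nonneg_left (hexp1 (s * q (a v) (b v)))
        (show 0 ≤ Φ v from (Real.exp_pos _).le)
      linarith
    linarith

open scoped Classical in
/-- Colour classes of matchings can be chosen so that every `v ∈ R` sees the pair `a v, b v`
matched in about a `q (a v) (b v)` proportion of the colours of its list. -/
theorem IsFractionalMatching.exists_matchings {q : W → W → ℝ}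
    (hq : IsFractionalMatching q) (R : Finset ι) (a b : ι → W) (hab : ∀ v ∈ R, a v ≠ b v)
    (L : ι → Finset ℤ) {t : ℝ} (ht0 : 0 < t) :
    ∃ M : ℤ → W → W, (∀ γ, Function.Involutive (M γ)) ∧ ∀ v ∈ R,
      (1 - t) * (q (a v) (b v) * (L v).card) - Real.log R.card / t ≤
        ((L v).filter fun γ => M γ (a v) = b v).card := by
  obtain ⟨M, hM, hsum⟩ := hq.exists_matchings_potential R a b hab L ht0.le (R.biUnion L)
  refine ⟨M, hM, fun v hv => ?_⟩
  have h1 := (Finset.single_le_sum (fun v _ => (Real.exp_pos _).le) hv).trans hsum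
  have hLv : L v ∩ R.biUnion L = L v :=
    Finset.inter_eq_left.2 (Finset.subset_biUnion_of_mem L hv)
  rw [hLv] at h1
  have hR : (0 : ℝ) < R.card := by exact_mod_cast Finset.card_pos.2 ⟨v, hv⟩
  rw [← Real.le_log_iff_exp_le hR] at h1
  set h : ℝ := (((L v).filter fun γ => M γ (a v) = b v).card : ℝ) with hh
  have h2 : t * (1 - t) ≤ 1 - Real.exp (-t) := by
    have h3 : Real.exp (-t) * (1 + t) ≤ 1 := by
      calc Real.exp (-t) * (1 + t) ≤ Real.exp (-t) * Real.exp t := by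
            gcongr
            linarith [Real.add_one_le_exp t]
        _ = 1 := by rw [← Real.exp_add]; simp
    have h4 : Real.exp (-t) ≤ 1 - t + t ^ 2 := by
      refine le_of_mul_le_mul_right (h3.trans ?_) (show 0 < 1 + t by linarith)
      nlinarith [pow_pos ht0 3]
    linarith
  have h3 : 0 ≤ q (a v) (b v) * (L v).card := mul_nonneg (hq.nonneg _ _) (Nat.cast_nonneg _)
  have h4 := mul_le_mul_of_nonneg_right h2 h3
  have h5 : t * ((1 - t) * (q (a v) (b v) * (L v).card)) - Real.log R.card ≤ t * h := by
    linarith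
  have h6 : (1 - t) * (q (a v) (b v) * (L v).card) - Real.log R.card / t =
      (t * ((1 - t) * (q (a v) (b v) * (L v).card)) - Real.log R.card) / t := by
    field_simp
  rw [h6, div_le_iff₀ ht0]
  linarith

end Potential

section Fractional

lemma sub_le_mul_of_concave {s u r : ℝ} (hs0 : 0 ≤ s) (hs1 : s ≤ 1 / 2) (hu0 : 0 ≤ u)
    (hu1 : u ≤ 1 / 2 + s / 200) (hr0 : 0 ≤ r) (hr1 : r ≤ 1 - u) :
    1 - u - r ≤ 2 / 3 * (1 - s / 4) * (1 + u - r) * (3 / 2 + s - 2 * u) := by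
  have hD : 1 / 2 ≤ 3 / 2 + s - 2 * u := by linarith
  have h1 : 1 - u ≤ 2 / 3 * (1 - s / 4) * (1 + u) * (3 / 2 + s - 2 * u) := by
    have e1 : 2 / 3 * (1 - s / 4) * (1 + u) * (3 / 2 + s - 2 * u) - (1 - u) =
        (5 / 12 * s - s ^ 2 / 6) + u * (2 / 3 * (1 - s / 4) * (s - 1 / 2 - 2 * u) + 1) := by ring
    have e2 : 0 ≤ 5 / 12 * s - s ^ 2 / 6 := by nlinarith
    have e3 : 0 ≤ 2 / 3 * (1 - s / 4) * (s - 1 / 2 - 2 * u) + 1 := by nlinarith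
    have e4 := mul_nonneg hu0 e3
    linarith
  set A : ℝ := 2 / 3 * (1 - s / 4) * (3 / 2 + s - 2 * u) with hA
  have hA0 : 0 ≤ A := by
    have : 0 ≤ 1 - s / 4 := by linarith
    positivity
  have h1' : 1 - u ≤ A * (1 + u) := by rw [hA]; linarith
  have h2 : 1 - u - r ≤ A * (1 + u - r) := by
    by_cases hA1 : A ≤ 1
    · nlinarith
    · push Not at hA1
      nlinarith
  rw [hA] at h2
  linarith

open scoped Classical in
/-- The normalised local densities of a minimal dense set of big vertices form a fractional
matching. -/
lemma isFractionalMatching_of_density {W : Type*} [Fintype W] {X : Finset W} {K : ℕ}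
    (hK : X.card ≤ K) {s η δ : ℝ} (hs0 : 0 < s) (hs1 : s ≤ 1 / 2) (hη : η ≤ s / 100)
    (hδ0 : 0 ≤ δ) (hδ : K * δ ≤ s / 100)
    {w : W → W → ℝ} {p : W → ℝ} (hw0 : ∀ x y, 0 ≤ w x y) (hws : ∀ x y, w x y = w y x)
    (hp0 : ∀ x, 0 ≤ p x) (hwp : ∀ x ∈ X, ∑ y ∈ X, w x y + p x ≤ 1)
    (hY : ∀ Y ⊆ X, ∑ x ∈ Y, p x ≤ ∑ x ∈ Y, ∑ y ∈ X \ Y, w x y + η * Y.card) :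
    IsFractionalMatching fun x y => if x ∈ X ∧ y ∈ X ∧ x ≠ y then
      (w x y + δ) / (3 / 2 + s - p x - p y) else 0 := by
  have hcard0 : ∀ Y ⊆ X, (Y.card : ℝ) * δ ≤ s / 100 := by
    intro Y hYX
    have h1 : (Y.card : ℝ) ≤ K := by exact_mod_cast (Finset.card_le_card hYX).trans hK
    exact (mul_le_mul_of_nonneg_right h1 hδ0).trans hδ
  have hpx : ∀ x ∈ X, p x ≤ 1 / 2 + s / 200 := by
    intro x hx
    have h1 := hY {x} (Finset.singleton_subset_iff.2 hx)
    simp only [Finset.sum_singleton, Finset.card_singleton, Nat.cast_one, mul_one] at h1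
    have h2 : ∑ y ∈ X \ {x}, w x y ≤ ∑ y ∈ X, w x y :=
      Finset.sum_le_sum_of_subset_of_nonneg Finset.sdiff_subset fun y _ _ => hw0 _ _
    linarith [hwp x hx]
  have hα : ∀ x ∈ X, 1 / 2 ≤ 3 / 2 + s - 2 * p x := fun x hx => by linarith [hpx x hx]
  set q : W → W → ℝ := fun x y => if x ∈ X ∧ y ∈ X ∧ x ≠ y then
      (w x y + δ) / (3 / 2 + s - p x - p y) else 0 with hq
  have hq0 : ∀ x y, 0 ≤ q x y := by
    intro x y
    simp only [hq]
    split_ifs with h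
    · have h1 := hα x h.1
      have h2 := hα y h.2.1
      exact div_nonneg (add_nonneg (hw0 _ _) hδ0) (by linarith)
    · exact le_rfl
  have hqX : ∀ x y, x ∉ X ∨ y ∉ X → q x y = 0 := by
    intro x y h
    simp only [hq]
    rw [if_neg]
    tauto
  have hrow : ∀ x, ∑ y, q x y ≤ 1 := by
    intro x
    by_cases hx : x ∈ X
    · have hden : 0 < 1 + s - p x - s / 200 := by linarith [hpx x hx]
      have h1 : ∑ y, q x y = ∑ y ∈ X, q x y :=
        (Finset.sum_subset (Finset.subset_univ X) fun y _ hy => hqX x y (Or.inr hy)).symm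
      have h2 : ∀ y ∈ X, q x y ≤ (w x y + δ) / (1 + s - p x - s / 200) := by
        intro y hy
        simp only [hq]
        have h3 := hw0 x y
        split_ifs with h
        · exact div_le_div_of_nonneg_left (by linarith) hden (by linarith [hpx y hy])
        · positivity
      rw [h1]
      refine (Finset.sum_le_sum h2).trans ?_
      rw [← Finset.sum_div, div_le_one hden, Finset.sum_add_distrib, Finset.sum_const,
        nsmul_eq_mul]
      linarith [hcard0 X subset_rfl, hwp x hx]
    · rw [Finset.sum_eq_zero fun y _ => hqX x y (Or.inl hx)]
      exact zero_le_one
  have hodd : ∀ Y ⊆ X, ∑ x ∈ Y, ∑ y ∈ Y, q x y ≤ 2 / 3 * Y.card := by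
    intro Y hYX
    set β : W → ℝ := fun x => 1 / (3 / 2 + s - 2 * p x) with hβ
    have hqβ : ∀ x ∈ Y, ∀ y ∈ Y, q x y ≤ (w x y + δ) * ((β x + β y) / 2) := by
      intro x hx y hy
      have h1 := hα x (hYX hx)
      have h2 := hα y (hYX hy)
      have h3 := hw0 x y
      simp only [hq, hβ]
      split_ifs with h
      · rw [div_eq_mul_one_div]
        refine mul_le_mul_of_nonneg_left ?_ (by linarith)
        rw [div_add_div _ _ (by linarith) (by linarith), div_div, div_le_div_iff₀ (by linarith)
          (by positivity)]
        nlinarith [sq_nonneg (p x - p y)]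
      · have h4 : 0 < 3 / 2 + s - 2 * p x := by linarith
        have h5 : 0 < 3 / 2 + s - 2 * p y := by linarith
        positivity
    have hsum : ∑ x ∈ Y, ∑ y ∈ Y, q x y ≤ ∑ x ∈ Y, β x * ∑ y ∈ Y, (w x y + δ) := by
      refine (Finset.sum_le_sum fun x hx => Finset.sum_le_sum fun y hy => hqβ x hx y hy).trans
        (le_of_eq ?_)
      have h1 : ∑ x ∈ Y, ∑ y ∈ Y, (w x y + δ) * (β x / 2) =
          ∑ x ∈ Y, ∑ y ∈ Y, (w x y + δ) * (β y / 2) := by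
        rw [Finset.sum_comm]
        exact Finset.sum_congr rfl fun x _ => Finset.sum_congr rfl fun y _ => by rw [hws]
      have h2 : ∑ x ∈ Y, ∑ y ∈ Y, (w x y + δ) * ((β x + β y) / 2) =
          ∑ x ∈ Y, ∑ y ∈ Y, (w x y + δ) * (β x / 2) +
            ∑ x ∈ Y, ∑ y ∈ Y, (w x y + δ) * (β y / 2) := by
        simp only [← Finset.sum_add_distrib]
        exact Finset.sum_congr rfl fun x _ => Finset.sum_congr rfl fun y _ => by ring
      rw [h2, ← h1, ← two_mul, Finset.mul_sum]
      refine Finset.sum_congr rfl fun x _ => ?_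
      rw [← Finset.sum_mul]
      ring
    refine hsum.trans ?_
    set r : W → ℝ := fun x => ∑ y ∈ X \ Y, w x y with hr
    have hterm : ∀ x ∈ Y, β x * ∑ y ∈ Y, (w x y + δ) ≤
        2 / 3 * (1 - s / 4) * (1 + p x - r x) + s / 50 := by
      intro x hx
      have h1 := hα x (hYX hx)
      have hden : 0 < 3 / 2 + s - 2 * p x := by linarith
      have h2 : ∑ y ∈ Y, w x y + r x = ∑ y ∈ X, w x y := by
        rw [add_comm]
        exact Finset.sum_sdiff hYX
      have h3 : 0 ≤ r x := Finset.sum_nonneg fun y _ => hw0 _ _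
      have h4 : 0 ≤ ∑ y ∈ Y, w x y := Finset.sum_nonneg fun y _ => hw0 _ _
      have h5 := hwp x (hYX hx)
      have h6 := sub_le_mul_of_concave hs0.le hs1 (hp0 x) (hpx x (hYX hx)) h3 (by linarith)
      rw [Finset.sum_add_distrib, Finset.sum_const, nsmul_eq_mul]
      have h7 := hcard0 Y hYX
      simp only [hβ]
      rw [one_div_mul_eq_div, div_le_iff₀ hden]
      nlinarith
    refine (Finset.sum_le_sum hterm).trans ?_
    rw [Finset.sum_add_distrib, ← Finset.mul_sum, Finset.sum_sub_distrib, Finset.sum_add_distrib]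
    simp only [Finset.sum_const, nsmul_eq_mul]
    have h1 := hY Y hYX
    have h2 : (0 : ℝ) ≤ Y.card := Nat.cast_nonneg _
    have h3 : (Y.card : ℝ) * 1 + ∑ x ∈ Y, p x - ∑ x ∈ Y, r x ≤ (1 + s / 100) * Y.card := by
      have : η * (Y.card : ℝ) ≤ s / 100 * Y.card := mul_le_mul_of_nonneg_right hη h2
      simp only [hr]
      linarith
    have h4 : 0 ≤ 2 / 3 * (1 - s / 4) := by linarith
    have h5 := mul_le_mul_of_nonneg_left h3 h4
    have h6 : 2 / 3 * (1 - s / 4) * (1 + s / 100) + s / 50 ≤ 2 / 3 := by nlinarith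
    have h7 := mul_le_mul_of_nonneg_right h6 h2
    linarith
  refine ⟨hq0, fun x y => ?_, hrow, fun Y hY3 => ?_⟩
  · simp only [hq, hws x y, show (x ∈ X ∧ y ∈ X ∧ x ≠ y) ↔ (y ∈ X ∧ x ∈ X ∧ y ≠ x) by tauto,
      sub_right_comm _ (p x)]
  · have h1 : ∑ x ∈ Y, ∑ y ∈ Y, q x y = ∑ x ∈ Y ∩ X, ∑ y ∈ Y ∩ X, q x y := by
      rw [← Finset.sum_subset (Finset.inter_subset_left (s₁ := Y) (s₂ := X))]
      · refine Finset.sum_congr rfl fun x _ => (Finset.sum_subset Finset.inter_subset_left ?_).symm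
        intro y hy hyn
        exact hqX x y (Or.inr fun h => hyn (Finset.mem_inter.2 ⟨hy, h⟩))
      · intro x hx hxn
        exact Finset.sum_eq_zero fun y _ =>
          hqX x y (Or.inl fun h => hxn (Finset.mem_inter.2 ⟨hx, h⟩))
    rw [h1]
    have hY3' : (3 : ℝ) ≤ Y.card := by exact_mod_cast hY3
    by_cases h3 : (Y ∩ X).card ≤ 2
    · have h4 : ∑ x ∈ Y ∩ X, ∑ y ∈ Y ∩ X, q x y ≤ ∑ x ∈ Y ∩ X, (1 : ℝ) :=
        Finset.sum_le_sum fun x _ => (Finset.sum_le_sum_of_subset_of_nonneg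
          (Finset.subset_univ _) fun y _ _ => hq0 _ _).trans (hrow x)
      rw [Finset.sum_const, nsmul_eq_mul, mul_one] at h4
      have h5 : ((Y ∩ X).card : ℝ) ≤ 2 := by exact_mod_cast h3
      linarith
    · have h4 := hodd (Y ∩ X) Finset.inter_subset_right
      have h5 : ((Y ∩ X).card : ℝ) ≤ Y.card := by
        exact_mod_cast Finset.card_le_card Finset.inter_subset_left
      linarith

end Fractional

section Greedy

variable {V : Type*}

/-- `c` is a list colouring of the square of `G` on `U` in which neighbours in `G` get colours at
distance at least `g`. -/
structure IsListColouring (G : SimpleGraph V) (L : V → Finset ℤ) (g : ℝ) (U : Finset V)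
    (c : V → ℤ) : Prop where
  mem : ∀ v ∈ U, c v ∈ L v
  ne : ∀ u ∈ U, ∀ v ∈ U, u ≠ v → (∃ w, G.Adj u w ∧ G.Adj w v) → c u ≠ c v
  gap : ∀ u ∈ U, ∀ v ∈ U, G.Adj u v → g ≤ |(c u : ℝ) - c v|

open scoped Classical in
/-- Greedy extension of a colouring from `U \ R` to `U` using the sublists `A`. -/
lemma IsListColouring.extend {G : SimpleGraph V} {L : V → Finset ℤ} {g : ℝ} {U R : Finset V}
    {c : V → ℤ} (hc : IsListColouring G L g (U \ R) c) (hRU : R ⊆ U) {A : V → Finset ℤ}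
    (hA : ∀ v ∈ R, A v ⊆ L v) {N : V → Finset V}
    (hN : ∀ v ∈ R, ∀ u ∈ U, u ≠ v → (∃ w, G.Adj u w ∧ G.Adj w v) →
      u ∈ N v ∨ (u ∉ R ∧ c u ∉ A v) ∨ (u ∈ R ∧ Disjoint (A u) (A v)))
    {D : ℕ} (hD : g ≤ D)
    (hcard : ∀ v ∈ R, (N v).card + dg G U v * (2 * D + 1) < (A v).card) :
    ∃ c', IsListColouring G L g U c' := by
  have main : ∀ S ⊆ R, ∃ c', IsListColouring G L g ((U \ R) ∪ S) c' ∧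
      (∀ u, u ∉ R → c' u = c u) ∧ ∀ v ∈ S, c' v ∈ A v := by
    intro S
    induction S using Finset.induction_on with
    | empty => exact fun _ => ⟨c, by simpa using hc, fun _ _ => rfl, by simp⟩
    | insert v S hvS ih =>
      intro hSR
      obtain ⟨c', hc', hcR, hcA⟩ := ih ((Finset.subset_insert _ _).trans hSR)
      have hvR : v ∈ R := hSR (Finset.mem_insert_self _ _)
      set F : Finset ℤ := (N v).image c' ∪
        (nb G U v).biUnion fun u => Finset.Icc (c' u - D) (c' u + D) with hF
      have hFc : F.card < (A v).card := by
        refine lt_of_le_of_lt ?_ (hcard v hvR)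
        refine (Finset.card_union_le _ _).trans (add_le_add Finset.card_image_le ?_)
        refine Finset.card_biUnion_le_card_mul _ _ _ fun u _ => ?_
        rw [Int.card_Icc]
        omega
      obtain ⟨γ, hγA, hγF⟩ := Finset.exists_mem_notMem_of_card_lt_card hFc
      simp only [hF, Finset.mem_union, Finset.mem_image, Finset.mem_biUnion, Finset.mem_Icc,
        not_or, not_exists, not_and, not_le] at hγF
      have hsub : (U \ R) ∪ S ⊆ U := Finset.union_subset Finset.sdiff_subset
        (((Finset.subset_insert _ _).trans hSR).trans hRU)
      have hmem : ∀ u, u ∈ (U \ R) ∪ insert v S → u ≠ v → u ∈ (U \ R) ∪ S := by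
        intro u hu huv
        simp only [Finset.mem_union, Finset.mem_insert] at hu ⊢
        tauto
      have hne : ∀ u ∈ (U \ R) ∪ S, u ≠ v → (∃ w, G.Adj u w ∧ G.Adj w v) → c' u ≠ γ := by
        intro u hu huv hw
        rcases hN v hvR u (hsub hu) huv hw with h | ⟨h1, h2⟩ | ⟨h1, h2⟩
        · exact hγF.1 u h
        · rw [hcR u h1]
          exact fun h => h2 (h ▸ hγA)
        · have huS : u ∈ S := by
            simp only [Finset.mem_union, Finset.mem_sdiff] at hu
            tauto
          exact fun h => Finset.disjoint_left.1 h2 (hcA u huS) (h ▸ hγA)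
      have hgap : ∀ u ∈ (U \ R) ∪ S, G.Adj v u → g ≤ |(c' u : ℝ) - γ| := by
        intro u hu huv
        have h1 := hγF.2 u (mem_nb.2 ⟨hsub hu, huv⟩)
        refine hD.trans ?_
        have h2 : (D : ℤ) ≤ |c' u - γ| := by
          by_cases h3 : c' u - D ≤ γ
          · have := h1 h3
            rw [abs_sub_comm]
            exact le_trans (by omega) (le_abs_self _)
          · exact le_trans (by omega) (le_abs_self _)
        exact_mod_cast h2
      refine ⟨Function.update c' v γ, ⟨fun u hu => ?_, fun u hu u' hu' huu' hw => ?_,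
        fun u hu u' hu' hadj => ?_⟩, fun u hu => ?_, fun u hu => ?_⟩
      · by_cases huv : u = v
        · subst huv
          rw [Function.update_self]
          exact hA u hvR hγA
        · rw [Function.update_of_ne huv]
          exact hc'.mem u (hmem u hu huv)
      · by_cases huv : u = v
        · subst huv
          rw [Function.update_self, Function.update_of_ne huu'.symm]
          obtain ⟨w, hw1, hw2⟩ := hw
          exact (hne u' (hmem u' hu' huu'.symm) huu'.symm ⟨w, hw2.symm, hw1.symm⟩).symm
        · by_cases hu'v : u' = v
          · subst hu'v
            rw [Function.update_self, Function.update_of_ne huv]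
            exact hne u (hmem u hu huv) huv hw
          · rw [Function.update_of_ne huv, Function.update_of_ne hu'v]
            exact hc'.ne u (hmem u hu huv) u' (hmem u' hu' hu'v) huu' hw
      · have huu' := hadj.ne
        by_cases huv : u = v
        · subst huv
          rw [Function.update_self, Function.update_of_ne huu'.symm, abs_sub_comm]
          exact hgap u' (hmem u' hu' huu'.symm) hadj
        · by_cases hu'v : u' = v
          · subst hu'v
            rw [Function.update_self, Function.update_of_ne huv]
            exact hgap u (hmem u hu huv) hadj.symm
          · rw [Function.update_of_ne huv, Function.update_of_ne hu'v]
            exact hc'.gap u (hmem u hu huv) u' (hmem u' hu' hu'v) hadj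
      · have huv : u ≠ v := by
          rintro rfl
          exact hu hvR
        rw [Function.update_of_ne huv]
        exact hcR u hu
      · by_cases huv : u = v
        · subst huv
          rwa [Function.update_self]
        · rw [Function.update_of_ne huv]
          exact hcA u ((Finset.mem_insert.1 hu).resolve_left huv)
  obtain ⟨c', hc', -⟩ := main R subset_rfl
  rw [Finset.sdiff_union_of_subset hRU] at hc'
  exact ⟨c', hc'⟩

open scoped Classical in
/-- The colours of `v` left over by the coloured neighbours of `a v` and `b v`. -/
noncomputable def freeColours (G : SimpleGraph V) (L : V → Finset ℤ) (W : Finset V)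
    (c : V → ℤ) (a b : V → V) (v : V) : Finset ℤ :=
  L v \ ((nb G W (a v)).image c ∪ (nb G W (b v)).image c)

lemma card_le_card_freeColours (G : SimpleGraph V) (L : V → Finset ℤ) (W : Finset V)
    (c : V → ℤ) (a b : V → V) (v : V) :
    (L v).card ≤ (freeColours G L W c a b v).card + dg G W (a v) + dg G W (b v) := by
  classical
  have h1 := Finset.le_card_sdiff ((nb G W (a v)).image c ∪ (nb G W (b v)).image c) (L v)
  have h2 := Finset.card_union_le ((nb G W (a v)).image c) ((nb G W (b v)).image c)
  have h3 : ((nb G W (a v)).image c).card ≤ dg G W (a v) := Finset.card_image_le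
  have h4 : ((nb G W (b v)).image c).card ≤ dg G W (b v) := Finset.card_image_le
  unfold freeColours
  omega

lemma card_le_card_freeColours_self (G : SimpleGraph V) (L : V → Finset ℤ) (W : Finset V)
    (c : V → ℤ) (a : V → V) (v : V) :
    (L v).card ≤ (freeColours G L W c a a v).card + dg G W (a v) := by
  classical
  have h1 := Finset.le_card_sdiff ((nb G W (a v)).image c ∪ (nb G W (a v)).image c) (L v)
  have h2 : ((nb G W (a v)).image c ∪ (nb G W (a v)).image c).card ≤ dg G W (a v) := by
    rw [Finset.union_self]
    exact Finset.card_image_le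
  unfold freeColours
  omega

open scoped Classical in
/-- Extension of a colouring to vertices all of whose neighbours outside `Z` are `a v` and `b v`,
using for `v` only colours whose matching joins `a v` to `b v`. -/
lemma IsListColouring.extend_matchings {G : SimpleGraph V} {L : V → Finset ℤ} {g : ℝ}
    {U R Z : Finset V} {c : V → ℤ} (hc : IsListColouring G L g (U \ R) c) (hRU : R ⊆ U)
    {a b : V → V} (hab : ∀ v ∈ R, ∀ w, G.Adj v w → w ∈ Z ∨ w = a v ∨ w = b v)
    {M : ℤ → V → V} (hM : ∀ γ, Function.Involutive (M γ)) {D : ℕ} (hD : g ≤ D)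
    (hcard : ∀ v ∈ R, (linked G Z U v).card + (R.filter fun u => s(a u, b u) = s(a v, b v)).card +
      dg G U v * (2 * D + 1) <
        ((freeColours G L (U \ R) c a b v).filter fun γ => M γ (a v) = b v).card) :
    ∃ c', IsListColouring G L g U c' := by
  refine hc.extend hRU
    (A := fun v => (freeColours G L (U \ R) c a b v).filter fun γ => M γ (a v) = b v)
    (N := fun v => linked G Z U v ∪ R.filter fun u => s(a u, b u) = s(a v, b v))
    (fun v _ => (Finset.filter_subset _ _).trans Finset.sdiff_subset) ?_ hD ?_
  · rintro v hv u hu huv ⟨w, huw, hwv⟩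
    by_cases hwZ : w ∈ Z
    · exact Or.inl (Finset.mem_union_left _ (mem_linked.2 ⟨hu, huv, w, hwZ, huw.symm, hwv⟩))
    have hwv' := (hab v hv w hwv.symm).resolve_left hwZ
    by_cases huR : u ∈ R
    · have huw' := (hab u huR w huw).resolve_left hwZ
      by_cases hs : s(a u, b u) = s(a v, b v)
      · exact Or.inl (Finset.mem_union_right _ (Finset.mem_filter.2 ⟨huR, hs⟩))
      · refine Or.inr (Or.inr ⟨huR, Finset.disjoint_left.2 fun γ h1 h2 => hs ?_⟩)
        have e1 := (Finset.mem_filter.1 h1).2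
        have e2 := (Finset.mem_filter.1 h2).2
        have e3 : M γ (b u) = a u := by rw [← e1, hM]
        have e4 : M γ (b v) = a v := by rw [← e2, hM]
        rw [Sym2.eq_iff]
        rcases hwv' with h | h <;> rcases huw' with h' | h'
        · have h3 : a u = a v := h'.symm.trans h
          exact Or.inl ⟨h3, by rw [← e1, ← e2, h3]⟩
        · have h3 : b u = a v := h'.symm.trans h
          exact Or.inr ⟨by rw [← e3, ← e2, h3], h3⟩
        · have h3 : a u = b v := h'.symm.trans h
          exact Or.inr ⟨h3, by rw [← e1, ← e4, h3]⟩
        · have h3 : b u = b v := h'.symm.trans h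
          exact Or.inl ⟨by rw [← e3, ← e4, h3], h3⟩
    · refine Or.inr (Or.inl ⟨huR, fun hmem => ?_⟩)
      have h1 := (Finset.mem_sdiff.1 (Finset.mem_filter.1 hmem).1).2
      refine h1 ?_
      have h2 : u ∈ nb G (U \ R) w := mem_nb.2 ⟨Finset.mem_sdiff.2 ⟨hu, huR⟩, huw.symm⟩
      rcases hwv' with h | h
      · exact Finset.mem_union_left _ (Finset.mem_image_of_mem c (h ▸ h2))
      · exact Finset.mem_union_right _ (Finset.mem_image_of_mem c (h ▸ h2))
  · intro v hv
    exact lt_of_le_of_lt (Nat.add_le_add_right (Finset.card_union_le _ _) _) (hcard v hv)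

end Greedy

section DenseSubset

open scoped Classical in
/-- If almost all of the weight `d` on `B` is accounted for by the pairs `{a v, b v}` with `v ∈ S`,
and the graph of these pairs splits into small pieces, then there is a small set `X` all of whose
subsets have almost all of their weight accounted for by pairs inside `X`. -/
lemma exists_dense_subset {V : Type*} {B S Q : Finset V} {a b : V → V} (ha : ∀ v ∈ S, a v ∈ B)
    (hb : ∀ v ∈ S, b v ∈ B) (hab : ∀ v ∈ S, a v ≠ b v) {d : V → ℝ} {lam Δ η : ℝ}
    (hlam : 0 < lam) (hΔ : 0 < Δ) (hη : 0 < η) (hη1 : η ≤ 1) (hd : ∀ x ∈ B, lam * Δ ≤ d x)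
    (hdΔ : ∀ x ∈ B, d x ≤ Δ) (hB : B.Nonempty)
    (hS : ∑ x ∈ B, d x ≤ 2 * (S.card : ℝ) + η / 2 * ∑ x ∈ B, d x)
    (hdeg : ∀ x ∈ B, ((S.filter fun v => a v = x ∨ b v = x).card : ℝ) ≤ d x) {K : ℕ}
    (hQ : (Q.card : ℝ) ≤ lam * η / 32 * B.card) (hsplit : SplitsBy (pairGraph S a b) B Q K) :
    ∃ X ⊆ B, X.card ≤ K ∧ (S.filter fun v => a v ∈ X ∧ b v ∈ X).Nonempty ∧
      ∀ Y ⊆ X, (1 - η) * ∑ x ∈ Y, d x ≤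
        2 * ((S.filter fun v => (a v ∈ X ∧ b v ∈ X) ∧ (a v ∈ Y ∨ b v ∈ Y)).card : ℝ) := by
  obtain ⟨hQB, lab, hlab, hK⟩ := hsplit
  set R : Finset V → Finset V := fun X => S.filter fun v => a v ∈ X ∧ b v ∈ X with hR
  set f : Finset V → ℝ := fun X => (1 - η) * ∑ x ∈ X, d x - 2 * ((R X).card : ℝ) with hf
  have hd0 : ∀ x ∈ B, 0 ≤ d x := fun x hx => (by positivity : 0 ≤ lam * Δ).trans (hd x hx)
  have hvolB : 0 < ∑ x ∈ B, d x :=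
    Finset.sum_pos (fun x hx => (by positivity : 0 < lam * Δ).trans_le (hd x hx)) hB
  have hfneg : f (B \ Q) < 0 := by
    have h1 : S.card ≤ (R (B \ Q)).card +
        ∑ x ∈ Q, (S.filter fun v => a v = x ∨ b v = x).card := by
      have hsub : S ⊆ R (B \ Q) ∪ Q.biUnion fun x => S.filter fun v => a v = x ∨ b v = x := by
        intro v hv
        simp only [hR, Finset.mem_union, Finset.mem_filter, Finset.mem_sdiff, Finset.mem_biUnion]
        by_cases h1 : a v ∈ Q
        · exact Or.inr ⟨_, h1, hv, Or.inl rfl⟩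
        by_cases h2 : b v ∈ Q
        · exact Or.inr ⟨_, h2, hv, Or.inr rfl⟩
        exact Or.inl ⟨hv, ⟨ha v hv, h1⟩, hb v hv, h2⟩
      exact (Finset.card_le_card hsub).trans ((Finset.card_union_le _ _).trans
        (Nat.add_le_add_left Finset.card_biUnion_le _))
    have h1' : (S.card : ℝ) ≤ (R (B \ Q)).card +
        ∑ x ∈ Q, ((S.filter fun v => a v = x ∨ b v = x).card : ℝ) := by exact_mod_cast h1
    have h2 : ∑ x ∈ Q, ((S.filter fun v => a v = x ∨ b v = x).card : ℝ) ≤ ∑ x ∈ Q, d x :=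
      Finset.sum_le_sum fun x hx => hdeg x (hQB hx)
    have h3 : ∑ x ∈ Q, d x ≤ Q.card * Δ := by
      rw [← nsmul_eq_mul]
      exact Finset.sum_le_card_nsmul _ _ _ fun x hx => hdΔ x (hQB hx)
    have h4 : B.card * (lam * Δ) ≤ ∑ x ∈ B, d x := by
      rw [← nsmul_eq_mul]
      exact Finset.card_nsmul_le_sum _ _ _ hd
    have h5 : Q.card * Δ ≤ η / 32 * ∑ x ∈ B, d x := by
      calc Q.card * Δ ≤ lam * η / 32 * B.card * Δ := by gcongr
        _ = η / 32 * (B.card * (lam * Δ)) := by ring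
        _ ≤ _ := by gcongr
    have h6 : ∑ x ∈ B \ Q, d x ≤ ∑ x ∈ B, d x :=
      Finset.sum_le_sum_of_subset_of_nonneg Finset.sdiff_subset fun x hx _ => hd0 x hx
    have h7 : (1 - η) * ∑ x ∈ B \ Q, d x ≤ (1 - η) * ∑ x ∈ B, d x :=
      mul_le_mul_of_nonneg_left h6 (by linarith)
    simp only [hf]
    nlinarith [mul_pos hη hvolB]
  obtain ⟨C, hCB, hCK, hfC⟩ : ∃ C ⊆ B, C.card ≤ K ∧ f C < 0 := by
    set F : ℕ → Finset V := fun i => (B \ Q).filter fun v => lab v = i with hF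
    set I := (B \ Q).image lab with hI
    have e1 : ∑ i ∈ I, ∑ x ∈ F i, d x = ∑ x ∈ B \ Q, d x :=
      Finset.sum_fiberwise_of_maps_to (fun x hx => Finset.mem_image_of_mem lab hx) _
    have e2 : (R (B \ Q)).card = ∑ i ∈ I, (R (F i)).card := by
      rw [Finset.card_eq_sum_card_fiberwise (f := fun v => lab (a v)) (t := I)]
      · refine Finset.sum_congr rfl fun i _ => congrArg Finset.card ?_
        ext v
        simp only [hR, hF, Finset.mem_filter]
        constructor
        · rintro ⟨⟨hv, h1, h2⟩, h3⟩
          refine ⟨hv, ⟨h1, h3⟩, h2, h3 ▸ ?_⟩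
          exact (hlab _ h1 _ h2 (pairGraph_adj.2 ⟨hab v hv, v, hv, Or.inl ⟨rfl, rfl⟩⟩)).symm
        · rintro ⟨hv, ⟨h1, h3⟩, h2, -⟩
          exact ⟨⟨hv, h1, h2⟩, h3⟩
      · intro v hv
        exact Finset.mem_coe.2 (Finset.mem_image_of_mem lab
          (Finset.mem_filter.1 (Finset.mem_coe.1 hv)).2.1)
    have e3 : ∑ i ∈ I, f (F i) = f (B \ Q) := by
      simp only [hf]
      rw [Finset.sum_sub_distrib, ← Finset.mul_sum, ← Finset.mul_sum, e1, e2]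
      push_cast
      rfl
    obtain ⟨i, -, hi⟩ : ∃ i ∈ I, f (F i) < 0 := by
      by_contra! h
      have := Finset.sum_nonneg h
      linarith
    exact ⟨F i, (Finset.filter_subset _ _).trans Finset.sdiff_subset, hK i, hi⟩
  obtain ⟨X, hXC, hXmin⟩ := Finset.exists_min_image C.powerset f ⟨C, Finset.mem_powerset_self C⟩
  rw [Finset.mem_powerset] at hXC
  have hXB := hXC.trans hCB
  refine ⟨X, hXB, (Finset.card_le_card hXC).trans hCK, ?_, fun Y hY => ?_⟩
  · have h1 : f X < 0 := (hXmin C (Finset.mem_powerset_self C)).trans_lt hfC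
    have h2 : 0 ≤ (1 - η) * ∑ x ∈ X, d x :=
      mul_nonneg (by linarith) (Finset.sum_nonneg fun x hx => hd0 x (hXB hx))
    have h3 : (0 : ℝ) < (R X).card := by
      simp only [hf] at h1
      linarith
    exact Finset.card_pos.1 (by exact_mod_cast h3)
  · have h1 := hXmin (X \ Y) (Finset.mem_powerset.2 (Finset.sdiff_subset.trans hXC))
    have h2 : ∑ x ∈ X \ Y, d x + ∑ x ∈ Y, d x = ∑ x ∈ X, d x := Finset.sum_sdiff hY
    have h3 : (R X).card = (R (X \ Y)).card +
        (S.filter fun v => (a v ∈ X ∧ b v ∈ X) ∧ (a v ∈ Y ∨ b v ∈ Y)).card := by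
      rw [← Finset.card_filter_add_card_filter_not (s := R X) fun v => a v ∉ Y ∧ b v ∉ Y]
      simp only [hR, Finset.filter_filter]
      congr 2 <;> ext v <;> simp only [Finset.mem_filter, Finset.mem_sdiff] <;> tauto
    have h3' : ((R X).card : ℝ) = (R (X \ Y)).card +
        ((S.filter fun v => (a v ∈ X ∧ b v ∈ X) ∧ (a v ∈ Y ∨ b v ∈ Y)).card : ℝ) := by
      exact_mod_cast h3
    simp only [hf] at h1
    rw [← h2, h3'] at h1
    linarith

end DenseSubset

section DenseExtension

variable {V : Type*}

open scoped Classical in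
/-- The number of `v ∈ R` whose pair `{a v, b v}` is `{x, y}`. -/
noncomputable def pairCount (R : Finset V) (a b : V → V) (x y : V) : ℕ :=
  (R.filter fun v => s(a v, b v) = s(x, y)).card

lemma pairCount_comm (R : Finset V) (a b : V → V) (x y : V) :
    pairCount R a b x y = pairCount R a b y x := by
  unfold pairCount
  rw [Sym2.eq_swap]

open scoped Classical in
lemma sum_sum_pairCount {R : Finset V} {a b : V → V} (hab : ∀ v ∈ R, a v ≠ b v)
    (Y Y' : Finset V) :
    ∑ x ∈ Y, ∑ y ∈ Y', pairCount R a b x y =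
      ∑ v ∈ R, ((if a v ∈ Y ∧ b v ∈ Y' then 1 else 0) + if b v ∈ Y ∧ a v ∈ Y' then 1 else 0) := by
  simp only [pairCount, Finset.card_filter]
  rw [Finset.sum_congr rfl fun x _ => Finset.sum_comm, Finset.sum_comm]
  refine Finset.sum_congr rfl fun v hv => ?_
  have h1 : ∀ x y, (if s(a v, b v) = s(x, y) then 1 else 0) =
      (if a v = x then if b v = y then 1 else 0 else 0) +
        if b v = x then if a v = y then 1 else 0 else 0 := by
    intro x y
    have := hab v hv
    simp only [Sym2.eq_iff]
    by_cases h1 : a v = x <;> by_cases h2 : b v = y <;> by_cases h3 : a v = y <;>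
      by_cases h4 : b v = x <;> simp_all
  simp only [h1, Finset.sum_add_distrib]
  congr 1
  · by_cases h2 : a v ∈ Y <;> by_cases h3 : b v ∈ Y' <;>
      simp [Finset.sum_ite_irrel, Finset.sum_ite_eq, h2, h3]
  · by_cases h2 : b v ∈ Y <;> by_cases h3 : a v ∈ Y' <;>
      simp [Finset.sum_ite_irrel, Finset.sum_ite_eq, h2, h3]

lemma dg_eq_dg_sdiff_add [DecidableEq V] (G : SimpleGraph V) {R U : Finset V} (h : R ⊆ U) (x : V) :
    dg G U x = dg G (U \ R) x + dg G R x := by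
  classical
  rw [dg_eq_sum, dg_eq_sum, dg_eq_sum, Finset.sum_sdiff h]

open scoped Classical in
lemma dg_eq_sum_pairCount {G : SimpleGraph V} {R X : Finset V} {a b : V → V}
    (hab : ∀ v ∈ R, a v ≠ b v) (ha : ∀ v ∈ R, a v ∈ nb G X v) (hb : ∀ v ∈ R, b v ∈ nb G X v)
    (hX : ∀ v ∈ R, ∀ x ∈ nb G X v, x = a v ∨ x = b v) {x : V} (hx : x ∈ X) :
    dg G R x = ∑ y ∈ X, pairCount R a b x y := by
  have h1 := sum_sum_pairCount hab {x} X
  rw [Finset.sum_singleton] at h1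
  rw [h1, dg_eq_sum]
  refine Finset.sum_congr rfl fun v hv => ?_
  have h2 := mem_nb.1 (ha v hv)
  have h3 := mem_nb.1 (hb v hv)
  have h4 := hab v hv
  simp only [Finset.mem_singleton, h2.1, h3.1, and_true]
  by_cases hxv : G.Adj x v
  · rcases hX v hv x (mem_nb.2 ⟨hx, hxv.symm⟩) with rfl | rfl
    · simp [hxv, h4.symm]
    · simp [hxv, h4]
  · have h5 : a v ≠ x := by
      rintro rfl
      exact hxv h2.2.symm
    have h6 : b v ≠ x := by
      rintro rfl
      exact hxv h3.2.symm
    simp [hxv, h5, h6]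

open scoped Classical in
/-- Extension of a colouring to the vertices whose two big neighbours lie in a dense set `X`. -/
lemma IsListColouring.extend_dense [Fintype V] {G : SimpleGraph V} {L : V → Finset ℤ} {g : ℝ}
    {U R Z X : Finset V} {c : V → ℤ} (hc : IsListColouring G L g (U \ R) c) (hRU : R ⊆ U)
    {a b : V → V} (hab : ∀ v ∈ R, a v ≠ b v) (ha : ∀ v ∈ R, a v ∈ nb G X v)
    (hb : ∀ v ∈ R, b v ∈ nb G X v)
    (hN : ∀ v ∈ R, ∀ w, G.Adj v w → w ∈ Z ∨ w = a v ∨ w = b v)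
    (hX : ∀ v ∈ R, ∀ x ∈ nb G X v, x = a v ∨ x = b v) {K K₁ D : ℕ} (hK : X.card ≤ K)
    {s δ Δ : ℝ} (hs0 : 0 < s) (hs1 : s ≤ 1 / 2) (hδ0 : 0 < δ) (hδ1 : δ ≤ 1)
    (hδ : K * δ ≤ s / 100) (hΔ : 0 < Δ) (hdg : ∀ x, (dg G U x : ℝ) ≤ Δ)
    (hL : ∀ v, (3 / 2 + s) * Δ ≤ (L v).card)
    (hY : ∀ Y ⊆ X, (1 - s / 100) * ∑ x ∈ Y, (dg G U x : ℝ) ≤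
      2 * ((R.filter fun v => a v ∈ Y ∨ b v ∈ Y).card : ℝ))
    (hlinked : ∀ v ∈ R, ((linked G Z U v).card : ℝ) ≤ δ / 8 * Δ)
    (hK₁ : ∀ v ∈ R, dg G U v ≤ K₁) (hD : g ≤ D)
    (hlog : Real.log (K * Δ) / (δ / 8) ≤ δ / 8 * Δ) (hKD : (K₁ : ℝ) * (2 * D + 1) ≤ δ / 8 * Δ) :
    ∃ c', IsListColouring G L g U c' := by
  set w : V → V → ℝ := fun x y => pairCount R a b x y / Δ with hw
  set p : V → ℝ := fun x => dg G (U \ R) x / Δ with hp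
  have hw0 : ∀ x y, 0 ≤ w x y := fun x y => by positivity
  have hp0 : ∀ x, 0 ≤ p x := fun x => by positivity
  have hdgU : ∀ x ∈ X, (dg G U x : ℝ) = dg G (U \ R) x + ∑ y ∈ X, (pairCount R a b x y : ℝ) := by
    intro x hx
    rw [dg_eq_dg_sdiff_add G hRU, dg_eq_sum_pairCount hab ha hb hX hx]
    push_cast
    rfl
  have hwp : ∀ x ∈ X, ∑ y ∈ X, w x y + p x ≤ 1 := by
    intro x hx
    simp only [hw, hp]
    rw [← Finset.sum_div, ← add_div, div_le_one hΔ]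
    linarith [hdg x, hdgU x hx]
  have hYp : ∀ Y ⊆ X, ∑ x ∈ Y, p x ≤ ∑ x ∈ Y, ∑ y ∈ X \ Y, w x y + s / 100 * Y.card := by
    intro Y hYX
    have h1 : 2 * ((R.filter fun v => a v ∈ Y ∨ b v ∈ Y).card : ℝ) =
        ∑ x ∈ Y, ∑ y ∈ X, (pairCount R a b x y : ℝ) +
          ∑ x ∈ Y, ∑ y ∈ X \ Y, (pairCount R a b x y : ℝ) := by
      have h2 : 2 * (R.filter fun v => a v ∈ Y ∨ b v ∈ Y).card =
          ∑ x ∈ Y, ∑ y ∈ X, pairCount R a b x y + ∑ x ∈ Y, ∑ y ∈ X \ Y, pairCount R a b x y := by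
        rw [sum_sum_pairCount hab, sum_sum_pairCount hab, Finset.card_filter, Finset.mul_sum,
          ← Finset.sum_add_distrib]
        refine Finset.sum_congr rfl fun v hv => ?_
        have h3 := (mem_nb.1 (ha v hv)).1
        have h4 := (mem_nb.1 (hb v hv)).1
        by_cases h5 : a v ∈ Y <;> by_cases h6 : b v ∈ Y <;> simp [h3, h4, h5, h6]
      exact_mod_cast h2
    have h2 := hY Y hYX
    have h3 : ∑ x ∈ Y, (dg G U x : ℝ) =
        ∑ x ∈ Y, (dg G (U \ R) x : ℝ) + ∑ x ∈ Y, ∑ y ∈ X, (pairCount R a b x y : ℝ) := by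
      rw [← Finset.sum_add_distrib]
      exact Finset.sum_congr rfl fun x hx => hdgU x (hYX hx)
    have h4 : ∑ x ∈ Y, (dg G U x : ℝ) ≤ Y.card * Δ := by
      rw [← nsmul_eq_mul]
      exact Finset.sum_le_card_nsmul _ _ _ fun x _ => hdg x
    have h5 : s / 100 * ∑ x ∈ Y, (dg G U x : ℝ) ≤ s / 100 * (Y.card * Δ) :=
      mul_le_mul_of_nonneg_left h4 (by positivity)
    simp only [hw, hp]
    simp only [← Finset.sum_div]
    rw [div_add' _ _ _ hΔ.ne', div_le_div_iff_of_pos_right hΔ]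
    linarith
  have hq := isFractionalMatching_of_density hK hs0 hs1 le_rfl hδ0.le hδ hw0
    (fun x y => by simp only [hw, pairCount_comm R a b x y]) hp0 hwp hYp
  obtain ⟨M, hM, hhits⟩ := hq.exists_matchings R a b hab
    (fun v => freeColours G L (U \ R) c a b v) (t := δ / 8) (by positivity)
  refine hc.extend_matchings hRU hN hM hD fun v hv => ?_
  have hav := (mem_nb.1 (ha v hv)).1
  have hbv := (mem_nb.1 (hb v hv)).1
  have hp_half : ∀ x ∈ X, p x ≤ 1 / 2 + s / 200 := by
    intro x hx
    have h1 := hYp {x} (Finset.singleton_subset_iff.2 hx)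
    simp only [Finset.sum_singleton, Finset.card_singleton, Nat.cast_one, mul_one] at h1
    have h2 : ∑ y ∈ X \ {x}, w x y ≤ ∑ y ∈ X, w x y :=
      Finset.sum_le_sum_of_subset_of_nonneg Finset.sdiff_subset fun y _ _ => hw0 _ _
    linarith [hwp x hx]
  have hden : 0 < 3 / 2 + s - p (a v) - p (b v) := by
    linarith [hp_half _ hav, hp_half _ hbv]
  have hfree : (3 / 2 + s - p (a v) - p (b v)) * Δ ≤ (freeColours G L (U \ R) c a b v).card := by
    have h1 : ((L v).card : ℝ) ≤ (freeColours G L (U \ R) c a b v).card + dg G (U \ R) (a v) +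
        dg G (U \ R) (b v) := by exact_mod_cast card_le_card_freeColours G L (U \ R) c a b v
    have h2 : ∀ x, p x * Δ = dg G (U \ R) x := fun x => div_mul_cancel₀ _ hΔ.ne'
    have h3 := hL v
    have h4 := h2 (a v)
    have h5 := h2 (b v)
    linarith
  have hqfree : pairCount R a b (a v) (b v) + δ * Δ ≤
      (w (a v) (b v) + δ) / (3 / 2 + s - p (a v) - p (b v)) *
        (freeColours G L (U \ R) c a b v).card := by
    rw [div_mul_eq_mul_div, le_div_iff₀ hden]
    have h1 : (pairCount R a b (a v) (b v) : ℝ) = w (a v) (b v) * Δ :=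
      (div_mul_cancel₀ _ hΔ.ne').symm
    rw [h1]
    have h2 : 0 ≤ w (a v) (b v) + δ := add_nonneg (hw0 _ _) hδ0.le
    linarith [mul_le_mul_of_nonneg_left hfree h2]
  have hcount : (pairCount R a b (a v) (b v) : ℝ) ≤ Δ := by
    have h1 : (pairCount R a b (a v) (b v) : ℝ) ≤ ∑ y ∈ X, (pairCount R a b (a v) y : ℝ) :=
      Finset.single_le_sum (f := fun y => (pairCount R a b (a v) y : ℝ))
        (fun y _ => by positivity) hbv
    have h2 : (0 : ℝ) ≤ dg G (U \ R) (a v) := by positivity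
    linarith [hdg (a v), hdgU _ hav]
  have hRK : Real.log R.card ≤ Real.log (K * Δ) := by
    refine Real.log_le_log (by exact_mod_cast Finset.card_pos.2 ⟨v, hv⟩) ?_
    have h1 : R ⊆ X.biUnion fun x => nb G U x := fun u hu =>
      Finset.mem_biUnion.2 ⟨a u, (mem_nb.1 (ha u hu)).1, mem_nb.2
        ⟨hRU hu, (mem_nb.1 (ha u hu)).2.symm⟩⟩
    have h2 : R.card ≤ ∑ x ∈ X, dg G U x := (Finset.card_le_card h1).trans Finset.card_biUnion_le
    calc (R.card : ℝ) ≤ ∑ x ∈ X, (dg G U x : ℝ) := by exact_mod_cast h2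
      _ ≤ X.card * Δ := by
        rw [← nsmul_eq_mul]
        exact Finset.sum_le_card_nsmul _ _ _ fun x _ => hdg x
      _ ≤ K * Δ := by gcongr
  have hhit := hhits v hv
  simp only [hav, hbv, hab v hv, ne_eq, not_false_eq_true, and_self, if_true] at hhit
  have hlog' : Real.log R.card / (δ / 8) ≤ δ / 8 * Δ :=
    (div_le_div_of_nonneg_right hRK (by positivity)).trans hlog
  have h1 := mul_le_mul_of_nonneg_left hqfree (show 0 ≤ 1 - δ / 8 by linarith)
  have h2 : δ / 8 * (pairCount R a b (a v) (b v) + δ * Δ) ≤ δ / 4 * Δ := by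
    have h3 : (pairCount R a b (a v) (b v) : ℝ) + δ * Δ ≤ 2 * Δ := by nlinarith
    nlinarith
  have h3 : (dg G U v : ℝ) * (2 * D + 1) ≤ δ / 8 * Δ := by
    refine le_trans ?_ hKD
    have : (dg G U v : ℝ) ≤ K₁ := by exact_mod_cast hK₁ v hv
    gcongr
  have h4 := hlinked v hv
  have h5 : 0 < δ * Δ := by positivity
  have h6 : ((linked G Z U v).card : ℝ) + pairCount R a b (a v) (b v) +
      dg G U v * (2 * D + 1) <
        (((freeColours G L (U \ R) c a b v).filter fun γ => M γ (a v) = b v).card : ℝ) := by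
    linarith
  unfold pairCount at h6
  exact_mod_cast h6

end DenseExtension

section Tame

variable {V : Type*}

/-- A vertex with few neighbours in `U` that is not big, whose neighbours are all big (in `B`) or
small (in `Z`), and that has few second neighbours through the small ones. -/
structure IsTame (G : SimpleGraph V) (U B Z : Finset V) (k : ℕ) (κ : ℝ) (v : V) : Prop where
  notMem : v ∉ B
  mem_or_mem : ∀ w, G.Adj v w → w ∈ Z ∨ w ∈ B
  dg_le : dg G U v ≤ k
  card_linked_le : ((linked G Z U v).card : ℝ) ≤ κ

lemma card_filter_mul_le {U : Finset V} {f : V → ℝ} (hf : ∀ v ∈ U, 0 ≤ f v) {m C : ℝ}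
    (hC : ∑ v ∈ U, f v ≤ C) (p : V → Prop) [DecidablePred p] (hp : ∀ v ∈ U, p v → m ≤ f v) :
    (U.filter p).card * m ≤ C := by
  rw [← nsmul_eq_mul]
  exact (Finset.card_nsmul_le_sum _ _ _ fun v hv =>
    hp v (Finset.mem_filter.1 hv).1 (Finset.mem_filter.1 hv).2).trans
      ((Finset.sum_le_sum_of_subset_of_nonneg (Finset.filter_subset _ _)
        fun v hv _ => hf v hv).trans hC)

open scoped Classical in
lemma NoCliqueSix.card_big_le [Fintype V] {G : SimpleGraph V} (hG : NoCliqueSix G) (U : Finset V)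
    {τ m : ℝ} (hτ : 0 < τ) (hm : 64 ≤ τ * (m - 64)) :
    ((Finset.univ.filter fun z => m ≤ dg G U z).card : ℝ) ≤ τ * U.card := by
  set B := Finset.univ.filter fun z => m ≤ dg G U z with hB
  have h1 : (B.card : ℝ) * m ≤ ∑ z ∈ B, (dg G U z : ℝ) := by
    rw [← nsmul_eq_mul]
    exact Finset.card_nsmul_le_sum _ _ _ fun v hv => (Finset.mem_filter.1 hv).2
  have h2 : ∑ z ∈ B, (dg G U z : ℝ) ≤ 64 * (B.card + U.card) := by
    exact_mod_cast hG.sum_dg_le_add B U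
  have h3 : (B.card : ℝ) * (m - 64) ≤ 64 * U.card := by linarith
  have h4 : (B.card : ℝ) * 64 ≤ B.card * (τ * (m - 64)) := by gcongr
  nlinarith

open scoped Classical in
/-- Almost all vertices of `U` are tame. -/
lemma NoCliqueSix.card_not_isTame_le [Fintype V] {G : SimpleGraph V} (hG : NoCliqueSix G)
    {U : Finset V} {τ m m' κ : ℝ} {k : ℕ} (hτ : 0 < τ) (hm : 64 ≤ τ * (m - 64)) (hm' : 0 ≤ m')
    (hmed : ∑ z ∈ Finset.univ.filter (fun z => m' ≤ dg G U z ∧ (dg G U z : ℝ) < m),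
      (dg G U z : ℝ) ≤ τ * U.card)
    (hk : 64 ≤ τ * k) (hκ : 0 < κ) (hκm : 2176 * m' ≤ τ * κ) :
    ((U.filter fun v => ¬ IsTame G U (Finset.univ.filter fun z => m ≤ dg G U z)
      (Finset.univ.filter fun z => (dg G U z : ℝ) < m') k κ v).card : ℝ) ≤ 4 * τ * U.card := by
  set B := Finset.univ.filter fun z => m ≤ dg G U z with hB
  set Z := Finset.univ.filter fun z => (dg G U z : ℝ) < m' with hZ
  set W := Finset.univ.filter fun z => m' ≤ dg G U z ∧ (dg G U z : ℝ) < m with hW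
  have hB' : (B.card : ℝ) ≤ τ * U.card := hG.card_big_le U hτ hm
  have h2 : ((W.biUnion fun z => nb G U z).card : ℝ) ≤ τ * U.card := by
    refine le_trans ?_ hmed
    exact_mod_cast (Finset.card_biUnion_le : (W.biUnion fun z => nb G U z).card ≤ _)
  have h3 : ((U.filter fun v => k < dg G U v).card : ℝ) ≤ τ * U.card := by
    have h4 : ∑ v ∈ U, (dg G U v : ℝ) ≤ 64 * U.card := by exact_mod_cast hG.sum_dg_le U
    have h5 := card_filter_mul_le (fun v _ => Nat.cast_nonneg _) h4 (fun v => k < dg G U v)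
      (m := k) fun v _ h => by exact_mod_cast h.le
    have h6 : (0 : ℝ) < k := pos_of_mul_pos_right (by linarith) hτ.le
    refine le_of_mul_le_mul_right (h5.trans ?_) h6
    have h7 : (0 : ℝ) ≤ U.card := Nat.cast_nonneg _
    nlinarith
  have h4 : ((U.filter fun v => κ < (linked G Z U v).card).card : ℝ) ≤ τ * U.card := by
    have h5 : ∑ v ∈ U, (linked G Z U v).card ≤ 2176 * ⌊m'⌋₊ * U.card :=
      hG.sum_linked_le Z U _ fun z hz => Nat.le_floor (Finset.mem_filter.1 hz).2.le
    have h5' : ∑ v ∈ U, ((linked G Z U v).card : ℝ) ≤ 2176 * m' * U.card := by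
      calc ∑ v ∈ U, ((linked G Z U v).card : ℝ) ≤ 2176 * (⌊m'⌋₊ : ℝ) * U.card := by
            exact_mod_cast h5
        _ ≤ _ := by
            have := Nat.floor_le hm'
            gcongr
    have h6 := card_filter_mul_le (fun v _ => Nat.cast_nonneg _) h5'
      (fun v => κ < (linked G Z U v).card) fun v _ h => h.le
    refine le_of_mul_le_mul_right (h6.trans ?_) hκ
    have h7 : (0 : ℝ) ≤ U.card := Nat.cast_nonneg _
    nlinarith
  have hsub : (U.filter fun v => ¬ IsTame G U B Z k κ v) ⊆ B ∪ (W.biUnion fun z => nb G U z) ∪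
      (U.filter fun v => k < dg G U v) ∪ U.filter fun v => κ < (linked G Z U v).card := by
    intro v hv
    obtain ⟨hvU, hv⟩ := Finset.mem_filter.1 hv
    by_contra hcon
    simp only [Finset.mem_union, not_or, Finset.mem_filter, not_and, not_lt,
      Finset.mem_biUnion, not_exists] at hcon
    obtain ⟨⟨⟨c1, c2⟩, c3⟩, c4⟩ := hcon
    refine hv ⟨c1, fun w hw => ?_, c3 hvU, c4 hvU⟩
    by_contra hcon
    simp only [hB, hZ, Finset.mem_filter, Finset.mem_univ, true_and, not_or, not_le,
      not_lt] at hcon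
    exact c2 w (Finset.mem_filter.2 ⟨Finset.mem_univ _, hcon⟩) (mem_nb.2 ⟨hvU, hw.symm⟩)
  have h5 : ((U.filter fun v => ¬ IsTame G U B Z k κ v).card : ℝ) ≤ B.card +
      (W.biUnion fun z => nb G U z).card + (U.filter fun v => k < dg G U v).card +
        (U.filter fun v => κ < (linked G Z U v).card).card := by
    have h6 := Finset.card_le_card hsub
    have h7 := Finset.card_union_le (B ∪ (W.biUnion fun z => nb G U z) ∪
      (U.filter fun v => k < dg G U v)) (U.filter fun v => κ < (linked G Z U v).card)
    have h8 := Finset.card_union_le (B ∪ (W.biUnion fun z => nb G U z))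
      (U.filter fun v => k < dg G U v)
    have h9 := Finset.card_union_le B (W.biUnion fun z => nb G U z)
    exact_mod_cast (by omega : (U.filter fun v => ¬ IsTame G U B Z k κ v).card ≤ B.card +
      (W.biUnion fun z => nb G U z).card + (U.filter fun v => k < dg G U v).card +
        (U.filter fun v => κ < (linked G Z U v).card).card)
  linarith

open scoped Classical in
/-- If almost all vertices of `U` are outside `B` and have at least two neighbours in `B`, then
those with exactly two account for almost all edges between `B` and `U`. -/
lemma SimpleGraph.IsPlanar.sum_dg_le_of_two_le {G : SimpleGraph V} (hG : G.IsPlanar)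
    {U B : Finset V} (hU : U.Nonempty) {P : V → Prop} {τ η m : ℝ} (hη : 0 < η)
    (hη1 : η ≤ 1) (hτ : 1024 * τ ≤ η) (hP : ((U.filter fun v => ¬ P v).card : ℝ) ≤ 4 * τ * U.card)
    (hPB : ∀ v, P v → v ∉ B) (h2 : ∀ v ∈ U, P v → 2 ≤ dg G B v)
    (hm : 2105856 ≤ η * m) (hB : ∀ x ∈ B, m ≤ dg G U x) :
    B.Nonempty ∧ ∑ x ∈ B, (dg G U x : ℝ) ≤
      2 * ((U.filter fun v => P v ∧ dg G B v = 2).card : ℝ) +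
        η / 2 * ∑ x ∈ B, (dg G U x : ℝ) := by
  have hG6 := hG.noCliqueSix
  set T := U.filter fun v => ¬ P v with hT
  set S2 := U.filter fun v => P v ∧ dg G B v = 2 with hS2
  set S3 := U.filter fun v => P v ∧ 3 ≤ dg G B v with hS3
  have hUpos : (0 : ℝ) < U.card := by exact_mod_cast Finset.card_pos.2 hU
  have hgood : (U.card : ℝ) ≤ 2 * (U.filter P).card := by
    have h3 : ((U.filter P).card : ℝ) + T.card = U.card := by
      exact_mod_cast Finset.card_filter_add_card_filter_not (s := U) P
    nlinarith
  have hvolU : (U.card : ℝ) ≤ ∑ x ∈ B, (dg G U x : ℝ) := by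
    have h3 : ∑ x ∈ B, (dg G U x : ℝ) = ∑ v ∈ U, (dg G B v : ℝ) := by
      exact_mod_cast sum_dg_comm G B U
    rw [h3]
    have h4 := card_filter_mul_le (U := U) (f := fun v => (dg G B v : ℝ))
      (fun v _ => Nat.cast_nonneg _) le_rfl P (m := 2) fun v hv hPv => by
        exact_mod_cast h2 v hv hPv
    linarith
  refine ⟨?_, ?_⟩
  · rw [Finset.nonempty_iff_ne_empty]
    rintro rfl
    rw [Finset.sum_empty] at hvolU
    linarith
  have hmpos : 0 < m := pos_of_mul_pos_right (by linarith) hη.le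
  have hvolB : B.card * m ≤ ∑ x ∈ B, (dg G U x : ℝ) := by
    rw [← nsmul_eq_mul]
    exact Finset.card_nsmul_le_sum _ _ _ hB
  have hdec : ∑ v ∈ U, dg G B v =
      ∑ v ∈ T, dg G B v + (∑ v ∈ S2, dg G B v + ∑ v ∈ S3, dg G B v) := by
    rw [← Finset.sum_filter_add_sum_filter_not U P, add_comm,
      ← Finset.sum_filter_add_sum_filter_not (U.filter P) fun v => dg G B v = 2]
    simp only [Finset.filter_filter]
    congr 2
    refine Finset.sum_congr (Finset.filter_congr fun v hv => ?_) fun _ _ => rfl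
    constructor
    · rintro ⟨h3, h4⟩
      have := h2 v hv h3
      exact ⟨h3, by omega⟩
    · rintro ⟨h3, h4⟩
      exact ⟨h3, by omega⟩
  have hS2sum : ∑ v ∈ S2, dg G B v = S2.card * 2 :=
    Finset.sum_const_nat fun v hv => (Finset.mem_filter.1 hv).2.2
  have hS3card : S3.card ≤ 8224 * B.card := by
    refine hG.card_three_le S3 B ?_ fun v hv => (Finset.mem_filter.1 hv).2.2
    exact Finset.disjoint_left.2 fun v hv => hPB v (Finset.mem_filter.1 hv).2.1
  have hsum : ∑ x ∈ B, dg G U x ≤ 2 * S2.card + 64 * T.card + 526464 * B.card := by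
    rw [sum_dg_comm, hdec, hS2sum]
    have h3 := hG6.sum_dg_le_add T B
    have h4 := hG6.sum_dg_le_add S3 B
    omega
  have hsum' : ∑ x ∈ B, (dg G U x : ℝ) ≤ 2 * S2.card + 64 * T.card + 526464 * B.card := by
    exact_mod_cast hsum
  have h3 : 64 * (T.card : ℝ) ≤ η / 4 * ∑ x ∈ B, (dg G U x : ℝ) := by nlinarith
  have h4 : 526464 * (B.card : ℝ) ≤ η / 4 * ∑ x ∈ B, (dg G U x : ℝ) := by
    have h5 : (0 : ℝ) ≤ B.card := Nat.cast_nonneg _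
    nlinarith
  linarith

end Tame

section Step

lemma eventually_linear_bounds (k : ℕ) (K : ℝ) {θ : ℝ} (hθ : 0 < θ) :
    ∀ᶠ n : ℕ in Filter.atTop, Real.log (K * n) / θ ≤ θ * n ∧
      (k : ℝ) * (2 * (⌈(n : ℝ) ^ ((1 : ℝ) / 4)⌉₊ : ℝ) + 1) ≤ θ * n := by
  have hn : Filter.Tendsto (fun n : ℕ => (n : ℝ)) Filter.atTop Filter.atTop :=
    tendsto_natCast_atTop_atTop
  have h1 : ∀ᶠ x : ℝ in Filter.atTop, Real.log x ≤ θ ^ 2 / 2 * x := by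
    filter_upwards [Real.isLittleO_log_id_atTop.bound (show 0 < θ ^ 2 / 2 by positivity),
      Filter.eventually_ge_atTop 1] with x hx hx1
    have h2 : ‖(id x : ℝ)‖ = x := by
      rw [id, Real.norm_eq_abs, abs_of_nonneg (by linarith)]
    rw [h2] at hx
    exact (le_abs_self _).trans hx
  have h2 : ∀ᶠ x : ℝ in Filter.atTop, x ^ ((1 : ℝ) / 4) ≤ θ / (4 * (k + 1)) * x := by
    filter_upwards [(tendsto_rpow_atTop (show (0 : ℝ) < 3 / 4 by norm_num)).eventually_ge_atTop
      (4 * ((k : ℝ) + 1) / θ), Filter.eventually_gt_atTop 0] with x hx hx0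
    have h3 : x = x ^ ((1 : ℝ) / 4) * x ^ ((3 : ℝ) / 4) := by
      rw [← Real.rpow_add hx0]
      norm_num
    rw [div_le_iff₀ hθ] at hx
    rw [div_mul_eq_mul_div, le_div_iff₀ (by positivity)]
    calc x ^ ((1 : ℝ) / 4) * (4 * (k + 1)) ≤ x ^ ((1 : ℝ) / 4) * (x ^ ((3 : ℝ) / 4) * θ) := by
          gcongr
      _ = θ * (x ^ ((1 : ℝ) / 4) * x ^ ((3 : ℝ) / 4)) := by ring
      _ = θ * x := by rw [← h3]
  filter_upwards [hn.eventually h1, hn.eventually h2,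
    hn.eventually_ge_atTop (2 * Real.log K / θ ^ 2), hn.eventually_ge_atTop 1,
    hn.eventually_ge_atTop (6 * k / θ)] with n hn1 hn2 hn3 hn4 hn5
  refine ⟨?_, ?_⟩
  · rw [div_le_iff₀ hθ]
    rw [div_le_iff₀ (by positivity)] at hn3
    rcases eq_or_ne K 0 with rfl | hK
    · rw [zero_mul, Real.log_zero]
      positivity
    rw [Real.log_mul hK (by linarith)]
    nlinarith
  · have h3 : (⌈(n : ℝ) ^ ((1 : ℝ) / 4)⌉₊ : ℝ) ≤ θ / (4 * (k + 1)) * n + 1 :=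
      (Nat.ceil_lt_add_one (by positivity)).le.trans (by linarith)
    rw [div_le_iff₀ hθ] at hn5
    have h4 : (k : ℝ) * (θ / (4 * (k + 1)) * n) ≤ θ * n / 4 := by
      have h5 : (k : ℝ) * (θ / (4 * (k + 1)) * n) = k / (k + 1) * (θ * n / 4) := by
        field_simp
      rw [h5]
      refine mul_le_of_le_one_left (by positivity) ?_
      rw [div_le_one (by positivity)]
      linarith
    calc (k : ℝ) * (2 * (⌈(n : ℝ) ^ ((1 : ℝ) / 4)⌉₊ : ℝ) + 1)
        ≤ k * (2 * (θ / (4 * (k + 1)) * n + 1) + 1) := by gcongr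
      _ ≤ θ * n := by linarith

open scoped Classical in
/-- Extension of a colouring to a vertex with at most one neighbour outside `Z`. -/
lemma IsListColouring.extend_singleton {V : Type*} {G : SimpleGraph V}
    {L : V → Finset ℤ} {g : ℝ} {U Z : Finset V} {c : V → ℤ} {v x : V} (hv : v ∈ U)
    (hc : IsListColouring G L g (U \ {v}) c) (hx : ∀ w, G.Adj v w → w ∈ Z ∨ w = x) {D : ℕ}
    (hD : g ≤ D)
    (hcard : dg G U x + (linked G Z U v).card + 1 + dg G U v * (2 * D + 1) < (L v).card) :
    ∃ c', IsListColouring G L g U c' := by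
  refine hc.extend_matchings (Finset.singleton_subset_iff.2 hv) (Z := Z) (a := fun _ => x)
    (b := fun _ => x) (M := fun _ => id) (D := D) ?_ (fun _ _ => rfl) hD ?_
  · intro u hu w hw
    rw [Finset.mem_singleton.1 hu] at hw
    rcases hx w hw with h | h
    · exact Or.inl h
    · exact Or.inr (Or.inl h)
  · intro u hu
    rw [Finset.mem_singleton.1 hu]
    have h1 := card_le_card_freeColours_self G L (U \ {v}) c (fun _ => x) v
    have h2 := dg_mono G (U := U \ {v}) (W := U) Finset.sdiff_subset x
    simp only [id, Finset.filter_true, Finset.card_singleton]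
    omega

open scoped Classical in
/-- One step of the induction: a nonempty set `R ⊆ U` to which every colouring of `U \ R` extends,
provided that few edges leave `U` towards vertices of intermediate degree. -/
theorem exists_extendable {s : ℝ} (hs0 : 0 < s) (hs1 : s ≤ 1 / 2) :
    ∃ τ : ℝ, 0 < τ ∧ ∀ lam : ℝ, 0 < lam → ∃ lam' : ℝ, 0 < lam' ∧ lam' < lam ∧
      ∃ Δ₀ : ℕ, ∀ (V : Type) [Fintype V] (G : SimpleGraph V), G.IsPlanar → ∀ Δ : ℕ, Δ₀ ≤ Δ →
        (∀ U x, dg G U x ≤ Δ) → ∀ L : V → Finset ℤ,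
        (∀ v, (3 / 2 + s) * (Δ : ℝ) ≤ (L v).card) → ∀ U : Finset V, U.Nonempty →
        ∑ z ∈ Finset.univ.filter (fun z => lam' * Δ ≤ dg G U z ∧ (dg G U z : ℝ) < lam * Δ),
          (dg G U z : ℝ) ≤ τ * U.card →
        ∃ R ⊆ U, R.Nonempty ∧ ∀ c, IsListColouring G L ((Δ : ℝ) ^ ((1 : ℝ) / 4)) (U \ R) c →
          ∃ c', IsListColouring G L ((Δ : ℝ) ^ ((1 : ℝ) / 4)) U c' := by
  set η : ℝ := s / 100 with hη
  set τ : ℝ := η / 1024 with hτ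
  have hη0 : 0 < η := by positivity
  have hτ0 : 0 < τ := by positivity
  obtain ⟨k, hk⟩ := exists_nat_ge (64 / τ)
  rw [div_le_iff₀' hτ0] at hk
  refine ⟨τ, hτ0, fun lam hlam => ?_⟩
  obtain ⟨K, hK⟩ := exists_splitsBy (lam * η / 32) (by positivity)
  set δ : ℝ := s / (100 * (K + 1)) with hδ
  have hδ0 : 0 < δ := by positivity
  have hKδ : (K : ℝ) * δ ≤ s / 100 := by
    have h1 : (K : ℝ) * δ = K / (K + 1) * (s / 100) := by
      rw [hδ]
      field_simp
    rw [h1]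
    refine mul_le_of_le_one_left (by positivity) ?_
    rw [div_le_one (by positivity)]
    linarith
  have hδ1 : δ ≤ 1 := by
    rw [hδ, div_le_one (by positivity)]
    have : (0 : ℝ) ≤ K := Nat.cast_nonneg _
    linarith
  have hn : Filter.Tendsto (fun n : ℕ => (n : ℝ)) Filter.atTop Filter.atTop :=
    tendsto_natCast_atTop_atTop
  obtain ⟨Δ₀, hΔ₀⟩ := Filter.eventually_atTop.1
    ((eventually_linear_bounds k K (show 0 < δ / 8 by positivity)).and
      ((hn.eventually_ge_atTop ((64 / τ + 64) / lam)).and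
        ((hn.eventually_ge_atTop (2105856 / (η * lam))).and (hn.eventually_ge_atTop 8))))
  refine ⟨min (lam / 2) (τ * (δ / 8) / 2176), by positivity,
    (min_le_left _ _).trans_lt (by linarith), Δ₀,
    fun V _ G hG Δ hΔ hdg L hL U hU hmed => ?_⟩
  obtain ⟨⟨hlog, hKD⟩, hbig, hbig', hΔ8⟩ := hΔ₀ Δ hΔ
  set lam' := min (lam / 2) (τ * (δ / 8) / 2176) with hlam'
  have hΔpos : (0 : ℝ) < Δ := by linarith
  have hlam'0 : 0 < lam' := by positivity
  have hG6 := hG.noCliqueSix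
  have hm : 64 ≤ τ * (lam * Δ - 64) := by
    rw [div_le_iff₀' hlam] at hbig
    have : 64 / τ ≤ lam * Δ - 64 := by linarith
    rwa [div_le_iff₀' hτ0] at this
  have hm2 : 2105856 ≤ η * (lam * Δ) := by
    rw [div_le_iff₀' (by positivity)] at hbig'
    linarith
  have hκm : 2176 * (lam' * Δ) ≤ τ * (δ / 8 * Δ) := by
    have : lam' ≤ τ * (δ / 8) / 2176 := min_le_right _ _
    nlinarith
  set B := Finset.univ.filter fun z => lam * Δ ≤ dg G U z with hB
  set Z := Finset.univ.filter fun z => (dg G U z : ℝ) < lam' * Δ with hZ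
  have htame := hG6.card_not_isTame_le (κ := δ / 8 * Δ) hτ0 hm (by positivity) hmed hk
    (by positivity) hκm
  rw [← hB, ← hZ] at htame
  have hD : (Δ : ℝ) ^ ((1 : ℝ) / 4) ≤ (⌈(Δ : ℝ) ^ ((1 : ℝ) / 4)⌉₊ : ℕ) := Nat.le_ceil _
  set D := ⌈(Δ : ℝ) ^ ((1 : ℝ) / 4)⌉₊ with hDdef
  have hdgΔ : ∀ x, (dg G U x : ℝ) ≤ Δ := fun x => by exact_mod_cast hdg U x
  by_cases hcase : ∃ v ∈ U, IsTame G U B Z k (δ / 8 * Δ) v ∧ dg G B v ≤ 1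
  · obtain ⟨v, hvU, hv, hv1⟩ := hcase
    have : Nonempty V := ⟨v⟩
    obtain ⟨x, hx⟩ := Finset.card_le_one_iff_subset_singleton.1 hv1
    refine ⟨{v}, Finset.singleton_subset_iff.2 hvU, Finset.singleton_nonempty v, fun c hc => ?_⟩
    refine hc.extend_singleton hvU (Z := Z) (x := x) (fun w hw => ?_) hD ?_
    · exact (hv.mem_or_mem w hw).imp_right fun h =>
        Finset.mem_singleton.1 (hx (mem_nb.2 ⟨h, hw⟩))
    · have h1 : (dg G U v : ℝ) * (2 * D + 1) ≤ k * (2 * D + 1) := by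
        have : (dg G U v : ℝ) ≤ k := by exact_mod_cast hv.dg_le
        gcongr
      have h2 : (dg G U x : ℝ) + (linked G Z U v).card + 1 + dg G U v * (2 * D + 1) <
          (L v).card := by
        have h3 := hv.card_linked_le
        have h4 := hL v
        have h5 := hdgΔ x
        have h6 : δ / 8 * Δ ≤ 1 / 8 * Δ := by gcongr
        nlinarith
      exact_mod_cast h2
  · push Not at hcase
    obtain ⟨hBne, hvol⟩ := hG.sum_dg_le_of_two_le hU (P := IsTame G U B Z k (δ / 8 * Δ)) hη0
      (by linarith) (by linarith) htame (fun v hv => hv.notMem) (fun v hv hP => hcase v hv hP) hm2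
      fun x hx => (Finset.mem_filter.1 hx).2
    set S := U.filter fun v => IsTame G U B Z k (δ / 8 * Δ) v ∧ dg G B v = 2 with hS
    have hpair : ∀ v : V, ∃ x y : V, v ∈ S → x ≠ y ∧ nb G B v = {x, y} := by
      intro v
      by_cases hv : v ∈ S
      · obtain ⟨x, y, h1, h2⟩ := Finset.card_eq_two.1 (Finset.mem_filter.1 hv).2.2
        exact ⟨x, y, fun _ => ⟨h1, h2⟩⟩
      · exact ⟨v, v, fun h => absurd h hv⟩
    choose a b hab' using hpair
    have hab : ∀ v ∈ S, a v ≠ b v := fun v hv => (hab' v hv).1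
    have hnb : ∀ v ∈ S, nb G B v = {a v, b v} := fun v hv => (hab' v hv).2
    have ha : ∀ v ∈ S, a v ∈ nb G B v := fun v hv => by simp [hnb v hv]
    have hb : ∀ v ∈ S, b v ∈ nb G B v := fun v hv => by simp [hnb v hv]
    have hSB : Disjoint S B := Finset.disjoint_left.2 fun v hv =>
      (Finset.mem_filter.1 hv).2.1.notMem
    obtain ⟨Q, hQ, hsplit⟩ := hK V (pairGraph S a b)
      (hG6.of_minor (pairGraph_isMinor hSB ha hb)) B
    have hdeg : ∀ x ∈ B, ((S.filter fun v => a v = x ∨ b v = x).card : ℝ) ≤ dg G U x := by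
      intro x _
      have : S.filter (fun v => a v = x ∨ b v = x) ⊆ nb G U x := by
        intro v hv
        obtain ⟨hvS, h⟩ := Finset.mem_filter.1 hv
        refine mem_nb.2 ⟨(Finset.mem_filter.1 hvS).1, ?_⟩
        rcases h with rfl | rfl
        · exact (mem_nb.1 (ha v hvS)).2.symm
        · exact (mem_nb.1 (hb v hvS)).2.symm
      exact_mod_cast Finset.card_le_card this
    obtain ⟨X, hXB, hXK, hRne, hXY⟩ := exists_dense_subset
      (fun v hv => (mem_nb.1 (ha v hv)).1) (fun v hv => (mem_nb.1 (hb v hv)).1) hab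
      (d := fun x => (dg G U x : ℝ)) hlam hΔpos hη0 (by linarith)
      (fun x hx => (Finset.mem_filter.1 hx).2) (fun x _ => hdgΔ x) hBne hvol hdeg hQ hsplit
    set R := S.filter fun v => a v ∈ X ∧ b v ∈ X with hR
    have hRS : R ⊆ S := Finset.filter_subset _ _
    have htameR : ∀ v ∈ R, IsTame G U B Z k (δ / 8 * Δ) v := fun v hv =>
      (Finset.mem_filter.1 (hRS hv)).2.1
    have hRU : R ⊆ U := hRS.trans (Finset.filter_subset _ _)
    have honly : ∀ v ∈ S, ∀ w ∈ nb G B v, w = a v ∨ w = b v := by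
      intro v hv w hw
      simpa [hnb v hv] using hw
    refine ⟨R, hRU, hRne, fun c hc => ?_⟩
    refine hc.extend_dense hRU (fun v hv => hab v (hRS hv)) (X := X) (Z := Z) ?_ ?_ ?_ ?_ hXK hs0
      hs1 hδ0 hδ1 hKδ hΔpos hdgΔ hL ?_ (fun v hv => (htameR v hv).card_linked_le)
      (fun v hv => (htameR v hv).dg_le) hD hlog hKD
    · exact fun v hv => mem_nb.2 ⟨(Finset.mem_filter.1 hv).2.1, (mem_nb.1 (ha v (hRS hv))).2⟩
    · exact fun v hv => mem_nb.2 ⟨(Finset.mem_filter.1 hv).2.2, (mem_nb.1 (hb v (hRS hv))).2⟩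
    · exact fun v hv w hw => ((htameR v hv).mem_or_mem w hw).imp_right fun h =>
        honly v (hRS hv) w (mem_nb.2 ⟨h, hw⟩)
    · exact fun v hv x hx => honly v (hRS hv) x (nb_mono G hXB v hx)
    · intro Y hYX
      have h1 := hXY Y hYX
      rw [hR, Finset.filter_filter]
      exact h1

end Step

section Scales

open scoped Classical in
lemma NoCliqueSix.sum_dg_big_le {V : Type*} [Fintype V] {G : SimpleGraph V} (hG : NoCliqueSix G)
    (U : Finset V) :
    ∑ z ∈ Finset.univ.filter (fun z => (128 : ℝ) ≤ dg G U z), (dg G U z : ℝ) ≤ 128 * U.card := by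
  set E := Finset.univ.filter fun z => (128 : ℝ) ≤ dg G U z with hE
  have h1 : (E.card : ℝ) * 128 ≤ ∑ z ∈ E, (dg G U z : ℝ) := by
    rw [← nsmul_eq_mul]
    exact Finset.card_nsmul_le_sum _ _ _ fun v hv => (Finset.mem_filter.1 hv).2
  have h2 : ∑ z ∈ E, (dg G U z : ℝ) ≤ 64 * (E.card + U.card) := by
    exact_mod_cast hG.sum_dg_le_add E U
  linarith

open scoped Classical in
/-- Among sufficiently many consecutive degree scales, one receives few edges from `U`. -/
lemma NoCliqueSix.exists_sparse_scale {V : Type*} [Fintype V] {G : SimpleGraph V}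
    (hG : NoCliqueSix G) {U : Finset V} (hU : U.Nonempty) {μ : ℕ → ℝ} (hμ : Antitone μ) {I : ℕ}
    {τ : ℝ} (hI : 128 < I * τ) (hμI : 128 ≤ μ I) :
    ∃ j < I, ∑ z ∈ Finset.univ.filter (fun z => μ (j + 1) ≤ dg G U z ∧ (dg G U z : ℝ) < μ j),
      (dg G U z : ℝ) ≤ τ * U.card := by
  by_contra! hcon
  set W : ℕ → Finset V := fun j =>
    Finset.univ.filter fun z => μ (j + 1) ≤ dg G U z ∧ (dg G U z : ℝ) < μ j with hW
  have hdisj : ∀ i j, i < j → Disjoint (W i) (W j) := by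
    intro i j hij
    refine Finset.disjoint_left.2 fun z hz hz' => ?_
    have h1 := (Finset.mem_filter.1 hz).2.1
    have h2 := (Finset.mem_filter.1 hz').2.2
    have h3 := hμ (Nat.succ_le_of_lt hij)
    exact absurd (h1.trans_lt h2) (not_lt.2 h3)
  have h1 : ∑ j ∈ Finset.range I, ∑ z ∈ W j, (dg G U z : ℝ) ≤ 128 * U.card := by
    rw [← Finset.sum_biUnion]
    · refine le_trans (Finset.sum_le_sum_of_subset_of_nonneg (fun z hz => ?_)
        fun _ _ _ => Nat.cast_nonneg _) (hG.sum_dg_big_le U)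
      obtain ⟨j, hj, hz⟩ := Finset.mem_biUnion.1 hz
      refine Finset.mem_filter.2 ⟨Finset.mem_univ _, hμI.trans ?_⟩
      exact (hμ (Nat.succ_le_of_lt (Finset.mem_range.1 hj))).trans (Finset.mem_filter.1 hz).2.1
    · intro i _ j _ hij
      rcases lt_or_gt_of_ne hij with h | h
      · exact hdisj i j h
      · exact (hdisj j i h).symm
  have h2 : I * (τ * U.card) ≤ ∑ j ∈ Finset.range I, ∑ z ∈ W j, (dg G U z : ℝ) := by
    have := Finset.card_nsmul_le_sum (Finset.range I) (fun j => ∑ z ∈ W j, (dg G U z : ℝ))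
      (τ * U.card) fun j hj => (hcon j (Finset.mem_range.1 hj)).le
    rwa [Finset.card_range, nsmul_eq_mul] at this
  have hUpos : (0 : ℝ) < U.card := by exact_mod_cast Finset.card_pos.2 hU
  nlinarith

/-- The list colouring theorem in terms of partial colourings, for small `s`. -/
theorem exists_isListColouring {s : ℝ} (hs0 : 0 < s) (hs1 : s ≤ 1 / 2) :
    ∃ Δ₀ : ℕ, ∀ (V : Type) [Fintype V] (G : SimpleGraph V), G.IsPlanar → ∀ Δ : ℕ, Δ₀ ≤ Δ →
      (∀ U x, dg G U x ≤ Δ) → ∀ L : V → Finset ℤ,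
      (∀ v, (3 / 2 + s) * (Δ : ℝ) ≤ (L v).card) →
      ∃ c, IsListColouring G L ((Δ : ℝ) ^ ((1 : ℝ) / 4)) Finset.univ c := by
  classical
  obtain ⟨τ, hτ, hstep⟩ := exists_extendable hs0 hs1
  choose! f hf0 hf1 B hB using hstep
  set lam : ℕ → ℝ := fun j => f^[j] 1 with hlam
  have hsucc : ∀ j, lam (j + 1) = f (lam j) := fun j => Function.iterate_succ_apply' f j 1
  have hpos : ∀ j, 0 < lam j := by
    intro j
    induction j with
    | zero => exact one_pos
    | succ j ih =>
      rw [hsucc]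
      exact hf0 _ ih
  have hanti : Antitone lam := antitone_nat_of_succ_le fun j => by
    rw [hsucc]
    exact (hf1 _ (hpos j)).le
  obtain ⟨I, hI⟩ := exists_nat_gt (128 / τ)
  rw [div_lt_iff₀ hτ] at hI
  obtain ⟨N, hN⟩ := exists_nat_ge (128 / lam I)
  rw [div_le_iff₀' (hpos I)] at hN
  refine ⟨max N ((Finset.range I).sup fun j => B (lam j)),
    fun V _ G hG Δ hΔ hdg L hL => ?_⟩
  have hNΔ : (N : ℝ) ≤ Δ := by exact_mod_cast (le_max_left _ _).trans hΔ
  have main : ∀ n : ℕ, ∀ U : Finset V, U.card = n →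
      ∃ c, IsListColouring G L ((Δ : ℝ) ^ ((1 : ℝ) / 4)) U c := by
    intro n
    induction n using Nat.strong_induction_on with
    | _ n ih =>
      intro U hUn
      rcases U.eq_empty_or_nonempty with rfl | hU
      · exact ⟨fun _ => 0, by simp, by simp, by simp⟩
      obtain ⟨j, hj, hsum⟩ := hG.noCliqueSix.exists_sparse_scale hU
        (μ := fun j => lam j * Δ) (fun i j hij => by
          have := hanti hij
          simp only
          gcongr) hI
        (hN.trans (mul_le_mul_of_nonneg_left hNΔ (hpos I).le))
      have hBΔ : B (lam j) ≤ Δ := (Finset.le_sup (f := fun j => B (lam j))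
        (Finset.mem_range.2 hj)).trans ((le_max_right _ _).trans hΔ)
      rw [hsucc] at hsum
      obtain ⟨R, hRU, hRne, hext⟩ := hB (lam j) (hpos j) V G hG Δ hBΔ hdg L hL U hU hsum
      obtain ⟨c, hc⟩ := ih (U \ R).card (hUn ▸ Finset.card_lt_card
        (Finset.sdiff_ssubset hRU hRne)) (U \ R) rfl
      exact hext c hc
  exact main _ Finset.univ rfl

end Scales

/-- Havet et al.: for each `ε > 0` there is `Δ_ε` such that every planar graph with
`Δ(G) ≥ Δ_ε` can be properly list-coloured on its square from lists of size at least
`(3/2 + ε)Δ(G)`, and moreover so that colours on adjacent vertices of `G` differ by at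
least `Δ(G)^{1/4}`. -/
theorem list_coloring_square_planar (ε : ℝ) (hε : 0 < ε) :
    ∃ Δε : ℕ, ∀ (V : Type) [Fintype V] (G : SimpleGraph V) [DecidableRel G.Adj],
      G.IsPlanar → Δε ≤ G.maxDegree →
      ∀ L : V → Finset ℤ, (∀ v, (3 / 2 + ε) * (G.maxDegree : ℝ) ≤ ((L v).card : ℝ)) →
      ∃ c : V → ℤ, (∀ v, c v ∈ L v) ∧
        (∀ u v, G.square.Adj u v → c u ≠ c v) ∧
        (∀ u v, G.Adj u v →
          (G.maxDegree : ℝ) ^ ((1 : ℝ) / 4) ≤ |(c u : ℝ) - (c v : ℝ)|) := by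
  obtain ⟨Δ₀, h⟩ := exists_isListColouring (lt_min hε one_half_pos) (min_le_right ε (1 / 2))
  refine ⟨max Δ₀ 1, fun V _ G _ hG hΔ L hL => ?_⟩
  have hdg : ∀ U x, dg G U x ≤ G.maxDegree := by
    intro U x
    refine le_trans ?_ (G.degree_le_maxDegree x)
    refine Finset.card_le_card fun y hy => ?_
    exact (G.mem_neighborFinset x y).2 (mem_nb.1 hy).2
  obtain ⟨c, hc⟩ := h V G hG G.maxDegree ((le_max_left _ _).trans hΔ) hdg L fun v =>
    le_trans (by gcongr; exact min_le_left _ _) (hL v)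
  have hgap : ∀ u v, G.Adj u v →
      (G.maxDegree : ℝ) ^ ((1 : ℝ) / 4) ≤ |(c u : ℝ) - (c v : ℝ)| := fun u v huv =>
    hc.gap u (Finset.mem_univ _) v (Finset.mem_univ _) huv
  have hne : ∀ u v, u ≠ v → (G.Adj u v ∨ ∃ w, G.Adj u w ∧ G.Adj w v) → c u ≠ c v := by
    rintro u v huv (h1 | h1) heq
    · have h2 := hgap u v h1
      rw [heq, sub_self, abs_zero] at h2
      have h3 : (0 : ℝ) < G.maxDegree := by exact_mod_cast (le_max_right _ _).trans hΔ
      exact absurd h2 (not_le.2 (Real.rpow_pos_of_pos h3 _))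
    · exact hc.ne u (Finset.mem_univ _) v (Finset.mem_univ _) huv h1 heq
  refine ⟨c, fun v => hc.mem v (Finset.mem_univ _), fun u v huv => ?_, hgap⟩
  obtain ⟨h1, h2 | h2⟩ := (SimpleGraph.fromRel_adj _ u v).1 huv
  · exact hne u v h1 h2
  · exact (hne v u h1.symm h2).symm
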